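/- arXiv:1206.3718 — 5 statements merged into one kernel-verified Lean document; each statement's English description precedes it below -/
import Mathlib

section
/- There exists a universal constant c ≥ 1 such that every routing instance with congestion C and dilation D admits a feasible schedule (load at most 1) with makespan at most c·(C+D). -/
/-!
The proof describes a schedule by the time `τ j` at which each crossing `j` (a packet together with
a position on its path) takes place, and controls the number of crossings of every edge in every
window of `16 ^ n` consecutive time steps (`WindowLE`), for decreasing `n`.

If all packets move without waiting, every edge is crossed at most `C` times, so windows of length
`16 ^ n ≥ C + D` contain at most `16 ^ n` crossings. In a refinement (`refine_step`), time is cut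
into blocks of length `256 ^ (n + 1)`, and every packet waits at the start of every block for a
random time below `W = 16 ^ (n + 1)`. As windows of length `W` have about `W` crossings, each
time step now has about one crossing of an edge in expectation. Chernoff's bound (`tail_bound`) and
the Lovász local lemma (`local_lemma`), combined in `exists_delays`, provide delays for which all
windows of length `16 ^ n` contain at most `(1 + 4 / 2 ^ n) * 16 ^ n` crossings.

The delays add a factor `1 + 16 ^ (-n-1)` and an additive `16 ^ (n + 1)` to the total time, so
that refining all the way down to `n = 4` (`refine_down`) keeps it `O(C + D)`. At that point the
load is bounded by a constant, and stretching each time step by that constant makes it `1`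
(`serialize`). Finally the crossing times are turned into a schedule (`schedule_of_times`).
-/

/-- A routing instance: a finite directed multigraph together with packets
`0,…,k-1`, where packet `i` is given a list of edges `path i`. -/
structure RInst where
  V : Type
  E : Type
  [fintE : Fintype E]
  src : E → V
  dst : E → V
  k : ℕ
  path : Fin k → List E

attribute [instance] RInst.fintE

namespace RInst

/-- The paths are directed paths (consecutive edges fit head-to-tail) and
use no edge more than once. -/
def Valid (I : RInst) : Prop :=
  (∀ i, List.Chain' (fun e f => I.dst e = I.src f) (I.path i)) ∧
  (∀ i, (I.path i).Nodup)

/-- `σ i t` is the number of edges of `path i` traversed by time `t`. -/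
def IsSchedule (I : RInst) (σ : Fin I.k → ℕ → ℕ) : Prop :=
  (∀ i, σ i 0 = 0) ∧
  (∀ i t, σ i (t + 1) = σ i t ∨ σ i (t + 1) = σ i t + 1) ∧
  (∀ i t, σ i t ≤ (I.path i).length)

/-- Packet `i` crosses edge `e` in time step `t+1`. -/
def Crosses (I : RInst) (σ : Fin I.k → ℕ → ℕ) (i : Fin I.k) (e : I.E) (t : ℕ) : Prop :=
  σ i (t + 1) = σ i t + 1 ∧ (I.path i)[σ i t]? = some e

/-- The load of the schedule is at most `c`: in every time step every edge
is crossed by at most `c` packets. -/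
def LoadLE (I : RInst) (σ : Fin I.k → ℕ → ℕ) (c : ℕ) : Prop :=
  ∀ (e : I.E) (t : ℕ), Nat.card {i : Fin I.k | I.Crosses σ i e t} ≤ c

/-- All packets have arrived by time `T` (i.e. the makespan is at most `T`). -/
def CompletedBy (I : RInst) (σ : Fin I.k → ℕ → ℕ) (T : ℕ) : Prop :=
  ∀ i, σ i T = (I.path i).length

/-- The congestion: the maximum number of paths using a common edge. -/
noncomputable def congestion (I : RInst) : ℕ :=
  Finset.univ.sup fun e : I.E => Nat.card {i : Fin I.k | e ∈ I.path i}

/-- The dilation: the maximum length of a path. -/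
noncomputable def dilation (I : RInst) : ℕ :=
  Finset.univ.sup fun i : Fin I.k => (I.path i).length

end RInst

/-! ### Independence, the local lemma and a tail bound -/

open Classical in
/-- Independence in the uniform product space `ι → α`: `A` depends only on the coordinates in `V`
and `B` only on the others. Exchanging the coordinates outside `V` between two outcomes is an
involution of `(ι → α) × (ι → α)` that matches the two counts. -/
theorem card_indep {ι α : Type*} [Fintype ι] [Fintype α] (A B : (ι → α) → Prop) (V : ι → Prop)
    (hA : ∀ ω η, (∀ c, V c → ω c = η c) → A ω → A η)
    (hB : ∀ ω η, (∀ c, ¬ V c → ω c = η c) → B ω → B η) :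
    (Finset.univ.filter fun ω => A ω ∧ B ω).card * Fintype.card (ι → α) =
      (Finset.univ.filter A).card * (Finset.univ.filter B).card := by
  rw [← Finset.card_univ, ← Finset.card_product, ← Finset.card_product]
  let f : (ι → α) × (ι → α) → (ι → α) × (ι → α) := fun x =>
    (fun c => if V c then x.1 c else x.2 c, fun c => if V c then x.2 c else x.1 c)
  have hf : ∀ x, f (f x) = x := by
    rintro ⟨ω, η⟩
    simp only [f, Prod.mk.injEq]
    constructor <;> funext c <;> by_cases h : V c <;> simp [h]
  refine Finset.card_nbij' f f ?_ ?_ (fun x _ => hf x) (fun x _ => hf x)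
  · rintro ⟨ω, η⟩ h
    simp only [Finset.coe_product, Finset.coe_filter, Finset.mem_univ, true_and, Set.mem_prod,
      Set.mem_ofPred_eq, Finset.coe_univ, Set.mem_univ, and_true] at h ⊢
    refine ⟨hA ω _ ?_ h.1, hB ω _ ?_ h.2⟩
    · intro c hc; simp [f, hc]
    · intro c hc; simp [f, hc]
  · rintro ⟨ω, η⟩ h
    simp only [Finset.coe_product, Finset.coe_filter, Finset.mem_univ, true_and, Set.mem_prod,
      Set.mem_ofPred_eq, Finset.coe_univ, Set.mem_univ, and_true] at h ⊢
    refine ⟨hA ω _ ?_ h.1, hB η _ ?_ h.2⟩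
    · intro c hc; simp [f, hc]
    · intro c hc; simp [f, hc]

/-- The outcome `ω` avoids every bad event `A s` with `s ∈ S`. -/
def Avoids {Ω Ev : Type*} (A : Ev → Ω → Prop) (S : Finset Ev) (ω : Ω) : Prop :=
  ∀ s ∈ S, ¬ A s ω

open Classical in
/-- More than `m` coordinates of `ω` fall into their target sets `g c`. -/
def Exceeds {ι : Type*} [Fintype ι] {W : ℕ} (g : ι → Finset (Fin W)) (m : ℕ)
    (ω : ι → Fin W) : Prop :=
  m < (Finset.univ.filter fun c => ω c ∈ g c).card

open Classical in
/-- Symmetric Lovász local lemma on a finite uniform space: each `A a` has conditional probability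
at most `p` given that any set of events outside `nb a` is avoided, and `4 * d * p ≤ 1`. The proof
shows by induction on `S.card` that `A a` has conditional probability at most `2 * p` given that
all of `S` is avoided. -/
theorem local_lemma {Ω Ev : Type*} [Fintype Ω] [Nonempty Ω] (A : Ev → Ω → Prop)
    (nb : Ev → Finset Ev) (p : ℝ) (d : ℕ) (hp : 0 ≤ p) (hd1 : 1 ≤ d)
    (hd : ∀ a, (nb a).card ≤ d) (hpd : 4 * d * p ≤ 1)
    (hind : ∀ a, ∀ S : Finset Ev, Disjoint S (nb a) →
      ((Finset.univ.filter fun ω => A a ω ∧ Avoids A S ω).card : ℝ) ≤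
        p * (Finset.univ.filter (Avoids A S)).card) (S : Finset Ev) :
    ∃ ω, Avoids A S ω := by
  set N : Finset Ev → ℝ := fun S =>
    ((Finset.univ.filter (Avoids A S)).card : ℝ) with hN
  set P : Ev → Finset Ev → ℝ := fun a S =>
    ((Finset.univ.filter fun ω => A a ω ∧ Avoids A S ω).card : ℝ) with hP
  have hN0 : ∀ S, 0 ≤ N S := fun S => Nat.cast_nonneg _
  -- union bound for discarding the events of `R` in addition to those of `S₂`
  have hunion : ∀ S R S₂ : Finset Ev, S ⊆ R ∪ S₂ → N S₂ ≤ N S + ∑ b ∈ R, P b S₂ := by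
    intro S R S₂ h
    simp only [hN, hP]
    rw [← Nat.cast_sum, ← Nat.cast_add, Nat.cast_le]
    refine le_trans ?_ (add_le_add_right Finset.card_biUnion_le _)
    refine le_trans ?_ (Finset.card_union_le _ _)
    refine Finset.card_le_card ?_
    intro ω hω
    simp only [Finset.mem_filter, Finset.mem_univ, true_and, Finset.mem_union,
      Finset.mem_biUnion] at hω ⊢
    by_cases hb : ∃ b ∈ R, A b ω
    · obtain ⟨b, hb, hA⟩ := hb
      exact Or.inr ⟨b, hb, hA, hω⟩
    · push Not at hb
      refine Or.inl fun s hs => ?_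
      rcases Finset.mem_union.1 (h hs) with h' | h'
      · exact hb s h'
      · exact hω s h'
  have hd1' : (1 : ℝ) ≤ d := by exact_mod_cast hd1
  -- conditional probability of an event when all of `S` is avoided
  have key : ∀ n : ℕ, ∀ S : Finset Ev, S.card = n → ∀ a, P a S ≤ 2 * p * N S := by
    intro n
    induction n using Nat.strong_induction_on with
    | _ n ih =>
      intro S hS a
      set S₁ := S.filter (· ∈ nb a)
      set S₂ := S.filter (· ∉ nb a)
      have h2 : P a S₂ ≤ p * N S₂ := hind a S₂ (by
        rw [Finset.disjoint_left]; intro x hx; exact (Finset.mem_filter.1 hx).2)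
      have hmono : P a S ≤ P a S₂ := by
        simp only [hP, Nat.cast_le]
        refine Finset.card_le_card ?_
        intro ω hω
        simp only [Finset.mem_filter, Finset.mem_univ, true_and] at hω ⊢
        exact ⟨hω.1, fun s hs => hω.2 s (Finset.mem_filter.1 hs).1⟩
      have hu := hunion S S₁ S₂ (by rw [Finset.filter_union_filter_not_eq])
      have hsum : ∑ b ∈ S₁, P b S₂ ≤ d * (2 * p * N S₂) := by
        have h1 : ∀ b ∈ S₁, P b S₂ ≤ 2 * p * N S₂ := by
          intro b hb
          refine ih S₂.card ?_ S₂ rfl b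
          rw [← hS]
          refine Finset.card_lt_card ?_
          refine Finset.filter_ssubset.2 ⟨b, (Finset.mem_filter.1 hb).1, ?_⟩
          simpa using (Finset.mem_filter.1 hb).2
        refine (Finset.sum_le_card_nsmul _ _ _ h1).trans ?_
        rw [nsmul_eq_mul]
        refine mul_le_mul_of_nonneg_right ?_ (by have := hN0 S₂; positivity)
        have : S₁.card ≤ (nb a).card :=
          Finset.card_le_card fun x hx => (Finset.mem_filter.1 hx).2
        exact_mod_cast this.trans (hd a)
      have h3 : N S₂ ≤ 2 * N S := by
        nlinarith [hN0 S₂, mul_le_mul_of_nonneg_right hpd (hN0 S₂)]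
      nlinarith [hN0 S₂, hN0 S]
  have hpos : 0 < N S := by
    induction S using Finset.induction_on with
    | empty =>
      simp only [hN, Nat.cast_pos, Finset.card_pos]
      exact ⟨Classical.arbitrary Ω, by simp [Avoids]⟩
    | insert a S _ ih =>
      have h1 := hunion (insert a S) {a} S (by intro x; simp)
      have h2 := key _ S rfl a
      rw [Finset.sum_singleton] at h1
      nlinarith [mul_le_mul_of_nonneg_right hd1' hp]
  have : 0 < (Finset.univ.filter (Avoids A S)).card :=
    Nat.cast_pos.1 hpos
  obtain ⟨ω, hω⟩ := Finset.card_pos.1 this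
  exact ⟨ω, (Finset.mem_filter.1 hω).2⟩

open Classical in
/-- Chernoff bound: Markov's inequality for `(1 + x) ^ X`, where `X` is the number of coordinates
falling into their target sets; the expectation of `X` is at most `Y / W`. -/
theorem tail_bound {ι : Type*} [Fintype ι] (W : ℕ) (hW : 0 < W) (g : ι → Finset (Fin W))
    (x : ℝ) (hx : 0 ≤ x) (m Y : ℕ) (hY : ∑ c, (g c).card ≤ Y) :
    ((Finset.univ.filter (Exceeds g m)).card : ℝ) * (1 + x) ^ (m + 1) ≤
      Fintype.card (ι → Fin W) * Real.exp (x * Y / W) := by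
  have hW' : (0 : ℝ) < W := by exact_mod_cast hW
  have h1 : ((Finset.univ.filter (Exceeds g m)).card : ℝ) * (1 + x) ^ (m + 1) ≤
      ∑ ω : ι → Fin W, ∏ c, (if ω c ∈ g c then 1 + x else 1) := by
    rw [← nsmul_eq_mul]
    refine (Finset.card_nsmul_le_sum _
      (fun ω : ι → Fin W => ∏ c, (if ω c ∈ g c then 1 + x else 1)) _ ?_).trans
      (Finset.sum_le_sum_of_subset_of_nonneg (Finset.subset_univ _) ?_)
    · intro ω hω
      rw [Finset.prod_ite, Finset.prod_const, Finset.prod_const_one, mul_one]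
      exact pow_le_pow_right₀ (by linarith) (Finset.mem_filter.1 hω).2
    · intro ω _ _
      exact Finset.prod_nonneg fun c _ => by split_ifs <;> linarith
  have h2 : ∑ ω : ι → Fin W, ∏ c, (if ω c ∈ g c then 1 + x else 1) =
      ∏ c, ∑ y : Fin W, (if y ∈ g c then 1 + x else 1) := by
    rw [Finset.prod_univ_sum, Fintype.piFinset_univ]
  have h3 : ∀ c, ∑ y : Fin W, (if y ∈ g c then 1 + x else 1) ≤
      W * Real.exp (x * (g c).card / W) := by
    intro c
    have : ∑ y : Fin W, (if y ∈ g c then 1 + x else 1) = W + x * (g c).card := by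
      have : ∀ y : Fin W, (if y ∈ g c then 1 + x else 1) = 1 + (if y ∈ g c then x else 0) := by
        intro y; split_ifs <;> simp
      simp only [this, Finset.sum_add_distrib, Finset.sum_ite_mem, Finset.univ_inter]
      simp [mul_comm]
    rw [this]
    have h := Real.add_one_le_exp (x * (g c).card / W)
    calc (W : ℝ) + x * (g c).card = W * (x * (g c).card / W + 1) := by field_simp; ring
      _ ≤ _ := mul_le_mul_of_nonneg_left h hW'.le
  refine h1.trans (h2.le.trans ?_)
  refine (Finset.prod_le_prod (fun c _ => Finset.sum_nonneg fun y _ => ?_)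
    (fun c _ => h3 c)).trans ?_
  · split_ifs <;> linarith
  · rw [Finset.prod_mul_distrib, ← Real.exp_sum, Finset.prod_const, Fintype.card_fun,
      Fintype.card_fin, Finset.card_univ, Nat.cast_pow]
    refine mul_le_mul_of_nonneg_left (Real.exp_le_exp.2 ?_) (by positivity)
    rw [← Finset.sum_div, ← Finset.mul_sum]
    have : (∑ c, ((g c).card : ℝ)) ≤ Y := by exact_mod_cast hY
    gcongr

open Classical in
/-- Local lemma for events of the form `Exceeds (g a) m`; two events are adjacent when some
coordinate has a nonempty target set for both. -/
theorem exists_avoiding {ι Ev : Type*} [Fintype ι] [Fintype Ev] (W : ℕ) (hW : 0 < W)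
    (g : Ev → ι → Finset (Fin W)) (x : ℝ) (hx : 0 ≤ x) (m Y d : ℕ) (hd1 : 1 ≤ d)
    (hY : ∀ a, ∑ c, (g a c).card ≤ Y)
    (hd : ∀ a, (Finset.univ.filter fun b =>
      ∃ c, (g a c).Nonempty ∧ (g b c).Nonempty).card ≤ d)
    (hp : 4 * d * Real.exp (x * Y / W) ≤ (1 + x) ^ (m + 1)) :
    ∃ ω : ι → Fin W, ∀ a, (Finset.univ.filter fun c => ω c ∈ g a c).card ≤ m := by
  have : Nonempty (Fin W) := ⟨⟨0, hW⟩⟩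
  have hq : (0 : ℝ) < (1 + x) ^ (m + 1) := by positivity
  set A : Ev → (ι → Fin W) → Prop := fun a => Exceeds (g a) m with hA
  -- an event only depends on the coordinates with nonempty target set
  have hdep : ∀ a (ω η : ι → Fin W), (∀ c, (g a c).Nonempty → ω c = η c) → (A a ω ↔ A a η) := by
    intro a ω η h
    have : (Finset.univ.filter fun c => ω c ∈ g a c) =
        Finset.univ.filter fun c => η c ∈ g a c := by
      ext c
      simp only [Finset.mem_filter, Finset.mem_univ, true_and]
      constructor
      · intro h'; rw [← h c ⟨_, h'⟩]; exact h'
      · intro h'; rw [h c ⟨_, h'⟩]; exact h'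
    simp only [hA, Exceeds, this]
  obtain ⟨ω, hω⟩ := local_lemma A
    (fun a => Finset.univ.filter fun b => ∃ c, (g a c).Nonempty ∧ (g b c).Nonempty)
    (Real.exp (x * Y / W) / (1 + x) ^ (m + 1)) d (by positivity) hd1 hd
    (by rw [← mul_div_assoc, div_le_one hq]; exact hp) (by
      intro a S hS
      have hi := card_indep (A a) (Avoids A S) (fun c => (g a c).Nonempty)
        (fun ω η h => (hdep a ω η h).1) (by
          intro ω η h h' s hs
          rw [← hdep s ω η]
          · exact h' s hs
          · intro c hc
            refine h c fun hc' => Finset.disjoint_left.1 hS hs ?_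
            simp only [Finset.mem_filter, Finset.mem_univ, true_and]
            exact ⟨c, hc', hc⟩)
      have ht := tail_bound W hW (g a) x hx m Y (hY a)
      have hc : (0 : ℝ) < Fintype.card (ι → Fin W) := by exact_mod_cast Fintype.card_pos
      have hi' : ((Finset.univ.filter fun ω => A a ω ∧ Avoids A S ω).card : ℝ) *
          Fintype.card (ι → Fin W) = (Finset.univ.filter (A a)).card *
            (Finset.univ.filter (Avoids A S)).card := by exact_mod_cast hi
      rw [div_mul_eq_mul_div, le_div_iff₀ hq]
      refine le_of_mul_le_mul_right ?_ hc
      calc _ = ((Finset.univ.filter fun ω => A a ω ∧ Avoids A S ω).card : ℝ) *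
          Fintype.card (ι → Fin W) * (1 + x) ^ (m + 1) := by ring
        _ = ((Finset.univ.filter (A a)).card * (1 + x) ^ (m + 1)) *
            (Finset.univ.filter (Avoids A S)).card := by rw [hi']; ring
        _ ≤ _ := mul_le_mul_of_nonneg_right ht (Nat.cast_nonneg _)
        _ = _ := by ring) Finset.univ
  exact ⟨ω, fun a => not_lt.1 (hω a (Finset.mem_univ a))⟩

/-! ### Random delays -/

open Classical in
/-- Every edge is crossed at most `c` times in every window of `s` consecutive time steps, where
the crossing `j` takes place on the edge `ed j` at time `τ j`. -/
def WindowLE {J E : Type*} [Fintype J] (ed : J → E) (τ : J → ℕ) (s c : ℕ) : Prop :=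
  ∀ e t, (Finset.univ.filter fun j => ed j = e ∧ t ≤ τ j ∧ τ j < t + s).card ≤ c

open Classical in
/-- Random delays. The crossings `j`, with base times `v j`, are grouped into classes `cl j` that
meet each edge at most once, and every class is delayed by its own value in `Fin W`. A crossing
hits a given time step `z` for at most one delay, and only if its base time is among the last `W`
steps up to `z`; so the expected number of crossings of an edge in a window of length `T` is at
most `T * H / W`. Each window event shares a class with at most `4 * H * B * W` others: `2 * H`
crossings near the window, `B` crossings in the class of each, `2 * W` windows near each of
these. -/
theorem exists_delays {J E ι : Type*} [Fintype J] [Fintype E] [Fintype ι]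
    (ed : J → E) (cl : J → ι) (v : J → ℕ) (W T H B m : ℕ) (hW : 0 < W) (hTW : T ≤ W)
    (hH1 : 1 ≤ H) (hB1 : 1 ≤ B)
    (hinj : ∀ j j', cl j = cl j' → ed j = ed j' → j = j')
    (hB : ∀ c, (Finset.univ.filter fun j => cl j = c).card ≤ B)
    (hH : WindowLE ed v W H) (x : ℝ) (hx : 0 ≤ x)
    (hp : 4 * (4 * H * B * W) * Real.exp (x * (T * H) / W) ≤ (1 + x) ^ (m + 1)) :
    ∃ δ : ι → Fin W, WindowLE ed (fun j => v j + δ (cl j)) T m := by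
  set X := Finset.univ.sup v + W with hX
  have hvX : ∀ j, v j + W ≤ X := fun j =>
    Nat.add_le_add_right (Finset.le_sup (f := v) (Finset.mem_univ j)) W
  let g : E × Fin X → ι → Finset (Fin W) := fun a c =>
    Finset.univ.filter fun y : Fin W =>
      ∃ j, ed j = a.1 ∧ cl j = c ∧ (a.2 : ℕ) ≤ v j + y ∧ v j + y < a.2 + T
  have hY : ∀ a, ∑ c, (g a c).card ≤ T * H := by
    intro a
    -- pairs (crossing, delay) landing in the window
    let R : Finset (J × Fin W) := Finset.univ.filter fun q =>
      ed q.1 = a.1 ∧ (a.2 : ℕ) ≤ v q.1 + q.2 ∧ v q.1 + q.2 < a.2 + T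
    have h1 : ∑ c, (g a c).card ≤ R.card := by
      rw [← Finset.card_sigma]
      refine Finset.card_le_card_of_surjOn (fun q => ⟨cl q.1, q.2⟩) ?_
      rintro ⟨c, y⟩ h
      simp only [Finset.coe_sigma, Set.mem_sigma_iff, Finset.mem_coe, g, Finset.mem_filter,
        Finset.mem_univ, true_and] at h
      obtain ⟨j, h1, h2, h3⟩ := h
      refine ⟨(j, y), ?_, ?_⟩
      · simp only [R, Finset.mem_coe, Finset.mem_filter, Finset.mem_univ, true_and]
        exact ⟨h1, h3⟩
      · simp [h2]
    have h2 : R.card ≤ H * (Finset.Ico (a.2 : ℕ) (a.2 + T)).card := by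
      refine Finset.card_le_mul_card_image_of_maps_to (f := fun q => v q.1 + (q.2 : ℕ)) ?_ H ?_
      · intro q hq
        simp only [R, Finset.mem_filter, Finset.mem_univ, true_and] at hq
        exact Finset.mem_Ico.2 hq.2
      · intro z hz
        refine le_trans ?_ (hH a.1 (z + 1 - W))
        refine Finset.card_le_card_of_injOn (fun q => q.1) ?_ ?_
        · intro q hq
          simp only [R, Finset.coe_filter, Finset.mem_filter, Finset.mem_univ, true_and,
            Set.mem_ofPred_eq] at hq ⊢
          have := q.2.2
          refine ⟨hq.1.1, ?_, ?_⟩ <;> omega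
        · rintro ⟨j, y⟩ hq ⟨j', y'⟩ hq' h
          simp only [R, Finset.coe_filter, Finset.mem_filter, Finset.mem_univ, true_and,
            Set.mem_ofPred_eq] at hq hq' h
          subst h
          simp only [Prod.mk.injEq, true_and]
          ext
          omega
    rw [Nat.card_Ico, Nat.add_sub_cancel_left, mul_comm] at h2
    exact h1.trans h2
  have hd : ∀ a, (Finset.univ.filter fun b =>
      ∃ c, (g a c).Nonempty ∧ (g b c).Nonempty).card ≤ 4 * H * B * W := by
    intro a
    let N : Finset J := Finset.univ.filter fun j =>
      ed j = a.1 ∧ (a.2 : ℕ) < v j + W ∧ v j < a.2 + T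
    have hN : N.card ≤ 2 * H := by
      have h1 := hH a.1 (a.2 - W)
      have h2 := hH a.1 a.2
      refine le_trans (le_trans (Finset.card_le_card ?_) (Finset.card_union_le _ _))
        ((add_le_add h1 h2).trans (two_mul H).ge)
      intro j hj
      simp only [N, Finset.mem_filter, Finset.mem_univ, true_and, Finset.mem_union] at hj ⊢
      by_cases h : v j < a.2
      · left; refine ⟨hj.1, ?_, ?_⟩ <;> omega
      · right; refine ⟨hj.1, ?_, ?_⟩ <;> omega
    let L : Finset (E × ℕ) := N.biUnion fun j =>
      (Finset.univ.filter fun j' => cl j' = cl j).biUnion fun j' =>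
        (Finset.Ico (v j' + 1 - T) (v j' + W)).image fun t => (ed j', t)
    have hL : L.card ≤ (2 * H) * (B * (2 * W)) := by
      refine (Finset.card_biUnion_le_card_mul _ _ (B * (2 * W)) fun j _ => ?_).trans
        (Nat.mul_le_mul_right _ hN)
      refine (Finset.card_biUnion_le_card_mul _ _ (2 * W) fun j' _ => ?_).trans
        (Nat.mul_le_mul_right _ (hB _))
      refine Finset.card_image_le.trans ?_
      rw [Nat.card_Ico]
      omega
    refine le_trans ?_ (hL.trans (le_of_eq (by ring)))
    refine Finset.card_le_card_of_injOn (fun b => (b.1, (b.2 : ℕ))) ?_ ?_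
    · rintro b hb
      simp only [Finset.coe_filter, Finset.mem_univ, true_and, Set.mem_ofPred_eq] at hb
      obtain ⟨c, ⟨y, hy⟩, ⟨y', hy'⟩⟩ := hb
      simp only [g, Finset.mem_filter, Finset.mem_univ, true_and] at hy hy'
      obtain ⟨j, h1, h2, h3, h4⟩ := hy
      obtain ⟨j', h1', h2', h3', h4'⟩ := hy'
      simp only [L, N, Finset.coe_biUnion, Set.mem_iUnion, Finset.mem_coe, Finset.mem_filter,
        Finset.mem_univ, true_and, Finset.mem_image, Finset.mem_Ico, exists_prop]
      refine ⟨j, ⟨h1, ?_, ?_⟩, j', h2'.trans h2.symm, b.2, ⟨?_, ?_⟩, by rw [h1']⟩ <;> omega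
    · rintro ⟨e, t⟩ _ ⟨e', t'⟩ _ h
      simp only [Prod.mk.injEq] at h ⊢
      exact ⟨h.1, Fin.ext h.2⟩
  obtain ⟨δ, hδ⟩ := exists_avoiding W hW g x hx m (T * H) (4 * H * B * W)
    (Nat.mul_pos (Nat.mul_pos (Nat.mul_pos (by norm_num) hH1) hB1) hW) hY hd
    (by push_cast; exact hp)
  refine ⟨δ, fun e t => ?_⟩
  by_cases ht : t < X
  · refine le_trans ?_ (hδ (e, ⟨t, ht⟩))
    refine Finset.card_le_card_of_injOn cl ?_ ?_
    · intro j hj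
      simp only [g, Finset.coe_filter, Finset.mem_filter, Finset.mem_univ, true_and,
        Set.mem_ofPred_eq] at hj ⊢
      exact ⟨j, hj.1, rfl, hj.2⟩
    · intro j hj j' hj' h
      simp only [Finset.coe_filter, Finset.mem_univ, true_and, Set.mem_ofPred_eq] at hj hj'
      exact hinj j j' h (hj.1.trans hj'.1.symm)
  · rw [Finset.card_eq_zero.2]
    · exact Nat.zero_le _
    · refine Finset.filter_eq_empty_iff.2 fun j _ h => ?_
      have := hvX j
      have := (δ (cl j)).2
      dsimp only at h
      omega

theorem linear_le_four_pow (n : ℕ) (hn : 4 ≤ n) : 16 * n + 21 ≤ 4 ^ n := by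
  induction n, hn using Nat.le_induction with
  | base => norm_num
  | succ k hk ih => rw [pow_succ]; omega

/-- The hypothesis of `exists_delays` for `W = 16 ^ (n + 1)`, `T = 16 ^ n`, `B = W ^ 2` and
deviation parameter `x = 2 ^ (-n)`: the failure probability is at most `exp (- 4 ^ n)`, which beats
the polynomial number of adjacent events. -/
theorem numeric_bound (n : ℕ) (hn : 4 ≤ n) :
    4 * (4 * (16 ^ (n + 1) + 4 * 8 ^ (n + 1)) * (16 ^ (n + 1)) ^ 2 * 16 ^ (n + 1)) *
      Real.exp ((1 / 2 ^ n) * (16 ^ n * (16 ^ (n + 1) + 4 * 8 ^ (n + 1))) / 16 ^ (n + 1)) ≤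
        (1 + (1 / 2 ^ n : ℝ)) ^ (16 ^ n + 4 * 8 ^ n + 1) := by
  set x : ℝ := 1 / 2 ^ n with hx
  have hx0 : 0 < x := by positivity
  have hx1 : x ≤ 1 / 16 := by
    rw [hx]
    refine one_div_le_one_div_of_le (by norm_num) ?_
    calc (16 : ℝ) = 2 ^ 4 := by norm_num
      _ ≤ 2 ^ n := pow_le_pow_right₀ (by norm_num) hn
  have h2 : x * 2 ^ n = 1 := by rw [hx]; field_simp
  have h4 : (4 : ℝ) ^ n = 2 ^ n * 2 ^ n := by rw [← mul_pow]; norm_num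
  have h8 : (8 : ℝ) ^ n = 2 ^ n * 2 ^ n * 2 ^ n := by rw [← mul_pow, ← mul_pow]; norm_num
  have h16 : (16 : ℝ) ^ n = 2 ^ n * 2 ^ n * 2 ^ n * 2 ^ n := by
    rw [← mul_pow, ← mul_pow, ← mul_pow]; norm_num
  set y : ℝ := 2 ^ n with hy
  have hy0 : 0 < y := by positivity
  -- the polynomial factor is at most `exp (4 ^ n)`
  have hpoly : 4 * (4 * ((16 : ℝ) ^ (n + 1) + 4 * 8 ^ (n + 1)) * (16 ^ (n + 1)) ^ 2 *
      16 ^ (n + 1)) ≤ Real.exp (y * y) := by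
    have : (2 : ℝ) ^ (4 ^ n) ≤ Real.exp (y * y) := by
      have h := Real.add_one_le_exp (1 : ℝ)
      calc (2 : ℝ) ^ (4 ^ n) ≤ Real.exp 1 ^ (4 ^ n) :=
            pow_le_pow_left₀ (by norm_num) (by linarith) _
        _ = Real.exp (y * y) := by rw [← Real.exp_nat_mul, ← h4]; push_cast; simp
    refine le_trans ?_ this
    refine le_trans ?_ (pow_le_pow_right₀ (by norm_num) (linear_le_four_pow n hn))
    have e1 : (2 : ℝ) ^ (16 * n + 21) = 2 ^ 21 * y ^ 16 := by
      rw [pow_add, mul_comm 16 n, pow_mul]; ring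
    rw [e1, pow_succ, pow_succ, h16, h8]
    have hy2 : 2 ≤ y := by nlinarith
    have := mul_le_mul_of_nonneg_left hy2 (pow_pos hy0 15).le
    nlinarith
  have hexp : Real.exp (x - x ^ 2 / 2) ≤ 1 + x := by
    rw [← Real.le_log_iff_exp_le (by linarith)]
    refine le_trans ?_ (Real.le_log_one_add_of_nonneg hx0.le)
    rw [le_div_iff₀ (by linarith)]
    nlinarith [pow_pos hx0 3]
  have hpow : Real.exp ((x - x ^ 2 / 2) * (16 ^ n + 4 * 8 ^ n)) ≤
      (1 + x) ^ (16 ^ n + 4 * 8 ^ n + 1) := by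
    calc Real.exp ((x - x ^ 2 / 2) * (16 ^ n + 4 * 8 ^ n))
        = Real.exp (x - x ^ 2 / 2) ^ (16 ^ n + 4 * 8 ^ n) := by
          rw [← Real.exp_nat_mul]; push_cast; ring_nf
      _ ≤ (1 + x) ^ (16 ^ n + 4 * 8 ^ n) := pow_le_pow_left₀ (Real.exp_pos _).le hexp _
      _ ≤ _ := pow_le_pow_right₀ (by linarith) (Nat.le_succ _)
  refine le_trans (mul_le_mul_of_nonneg_right hpoly (Real.exp_pos _).le) (le_trans ?_ hpow)
  rw [← Real.exp_add, Real.exp_le_exp]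
  have e2 : x * (16 ^ n * (16 ^ (n + 1) + 4 * 8 ^ (n + 1))) / 16 ^ (n + 1) =
      y ^ 3 + 2 * y ^ 2 := by
    rw [pow_succ, pow_succ, h16, h8, hx]
    field_simp
    ring
  rw [e2, h16, h8]
  have e3 : (x - x ^ 2 / 2) * (y * y * y * y + 4 * (y * y * y)) =
      y ^ 3 + 4 * y ^ 2 - y ^ 2 / 2 - 2 * y := by
    rw [hx]; field_simp; ring
  rw [e3]
  have : 16 ≤ y := by nlinarith
  nlinarith

/-! ### Refinement of crossing times -/

/-- The crossing times `τ` respect the order `pos` in which each packet traverses its path. -/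
def Ordered {J K : Type*} (pk : J → K) (pos τ : J → ℕ) : Prop :=
  ∀ j j', pk j = pk j' → pos j < pos j' → τ j < τ j'

open Classical in
/-- One refinement: time is cut into blocks of length `B = W ^ 2`, where `W = 16 ^ (n + 1)`, a gap
of length `W` is inserted after each block, and each packet is delayed within each block by an
amount below `W`. This shortens the controlled windows from `16 ^ (n + 1)` to `16 ^ n`, and raises
the crossings per time step only from `1 + 4 / 2 ^ (n + 1)` to `1 + 4 / 2 ^ n`. -/
theorem refine_step {J K E : Type*} [Fintype J] [Fintype K] [Fintype E]
    (pk : J → K) (pos : J → ℕ) (ed : J → E)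
    (hed : ∀ j j', pk j = pk j' → ed j = ed j' → j = j')
    (hpos : ∀ j j', pk j = pk j' → pos j = pos j' → j = j')
    (n : ℕ) (hn : 4 ≤ n) (τ : J → ℕ) (M : ℕ) (hord : Ordered pk pos τ) (hM : ∀ j, τ j < M)
    (hwin : WindowLE ed τ (16 ^ (n + 1)) (16 ^ (n + 1) + 4 * 8 ^ (n + 1))) :
    ∃ τ' : J → ℕ, Ordered pk pos τ' ∧
      (∀ j, τ' j < M + M / (16 ^ (n + 1)) ^ 2 * 16 ^ (n + 1) + 16 ^ (n + 1)) ∧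
      WindowLE ed τ' (16 ^ n) (16 ^ n + 4 * 8 ^ n) := by
  have hnum := numeric_bound n hn
  have hTW : 16 ^ n ≤ 16 ^ (n + 1) := Nat.pow_le_pow_right (by norm_num) (Nat.le_succ n)
  set W := 16 ^ (n + 1) with hWdef
  have hW : 0 < W := by positivity
  set B := W ^ 2 with hB
  have hB0 : 0 < B := by positivity
  let v : ℕ → ℕ := fun u => u + u / B * W
  -- `v` expands distances, so a window of base times comes from a window of old times
  have hv : ∀ a b, a ≤ b → v a + (b - a) ≤ v b := by
    intro a b h
    have := Nat.mul_le_mul_right W (Nat.div_le_div_right (c := B) h)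
    simp only [v]; omega
  let cl : J → K × Fin M := fun j =>
    (pk j, ⟨τ j / B, (Nat.div_le_self _ _).trans_lt (hM j)⟩)
  obtain ⟨δ, hδ⟩ := exists_delays ed cl (fun j => v (τ j)) W (16 ^ n) (W + 4 * 8 ^ (n + 1)) B
    (16 ^ n + 4 * 8 ^ n) hW hTW (by omega) hB0
    (by
      intro j j' h h'
      simp only [cl, Prod.mk.injEq] at h
      exact hed j j' h.1 h')
    (by
      rintro ⟨i, b⟩
      have : (Finset.Ico (b * B) (b * B + B)).card = B := by simp
      refine le_of_le_of_eq ?_ this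
      refine Finset.card_le_card_of_injOn τ ?_ ?_
      · intro j hj
        simp only [cl, Finset.coe_filter, Finset.mem_univ, true_and, Set.mem_ofPred_eq,
          Prod.mk.injEq] at hj
        simp only [Finset.coe_Ico, Set.mem_Ico]
        have h1 : τ j / B = b := by rw [← hj.2]
        rw [← h1]
        have h2 := Nat.div_add_mod (τ j) B
        have h3 := Nat.mod_lt (τ j) hB0
        rw [mul_comm] at h2
        omega
      · intro j hj j' hj' h
        simp only [cl, Finset.coe_filter, Finset.mem_univ, true_and, Set.mem_ofPred_eq,
          Prod.mk.injEq] at hj hj'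
        have hp : pk j = pk j' := hj.1.trans hj'.1.symm
        rcases lt_trichotomy (pos j) (pos j') with h' | h' | h'
        · have := hord j j' hp h'; omega
        · exact hpos j j' hp h'
        · have := hord j' j hp.symm h'; omega)
    (by
      intro e t
      rcases Finset.eq_empty_or_nonempty
        (Finset.univ.filter fun j => ed j = e ∧ t ≤ v (τ j) ∧ v (τ j) < t + W) with h | h
      · rw [h]; simp
      · obtain ⟨a, ha, hmin⟩ := Finset.exists_min_image _ τ h
        refine le_trans (Finset.card_le_card ?_) (hwin e (τ a))
        intro j hj
        have h1 := hmin j hj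
        have h2 := hv _ _ h1
        simp only [Finset.mem_filter, Finset.mem_univ, true_and] at ha hj ⊢
        refine ⟨hj.1, h1, ?_⟩
        omega)
    (1 / 2 ^ n) (by positivity)
    (by rw [hB, hWdef]; push_cast; exact hnum)
  refine ⟨_, ?_, ?_, hδ⟩
  · intro j j' hp h
    have hlt := hord j j' hp h
    have h1 := (δ (cl j)).2
    by_cases hb : τ j / B = τ j' / B
    · have : cl j = cl j' := by simp only [cl, hp, hb]
      simp only [v, this, hb]
      omega
    · have h2 : τ j / B < τ j' / B :=
        lt_of_le_of_ne (Nat.div_le_div_right hlt.le) hb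
      have h3 := Nat.mul_le_mul_right W (Nat.succ_le_of_lt h2)
      rw [Nat.succ_mul] at h3
      simp only [v]
      omega
  · intro j
    have h1 := (δ (cl j)).2
    have h2 := hM j
    have h3 := Nat.mul_le_mul_right W (Nat.div_le_div_right (c := B) h2.le)
    simp only [v]
    omega

/-- Iterated refinement down to windows of length `16 ^ 4`. The inequality between `M` and powers
of `16` is a potential preserved by each step, which costs at most `4 * 16 ^ r + 16 ^ (4 + k)` extra
time; it keeps the total time below four times the initial window length. -/
theorem refine_down {J K E : Type*} [Fintype J] [Fintype K] [Fintype E]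
    (pk : J → K) (pos : J → ℕ) (ed : J → E)
    (hed : ∀ j j', pk j = pk j' → ed j = ed j' → j = j')
    (hpos : ∀ j j', pk j = pk j' → pos j = pos j' → j = j') (k : ℕ) :
    ∀ (r M : ℕ) (τ : J → ℕ), Ordered pk pos τ → (∀ j, τ j < M) →
      M + 2 * 16 ^ (4 + k) ≤ 3 * 16 ^ (4 + k + r) + 16 ^ r →
      WindowLE ed τ (16 ^ (4 + k)) (16 ^ (4 + k) + 4 * 8 ^ (4 + k)) →
      ∃ τ' : J → ℕ, Ordered pk pos τ' ∧ (∀ j, τ' j < 4 * 16 ^ (4 + k + r)) ∧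
        WindowLE ed τ' (16 ^ 4) (16 ^ 4 + 4 * 8 ^ 4) := by
  induction k with
  | zero =>
    intro r M τ hord hM hMb hwin
    refine ⟨τ, hord, fun j => ?_, hwin⟩
    have := hM j
    have h1 : 16 ^ r ≤ 16 ^ (4 + 0 + r) := Nat.pow_le_pow_right (by norm_num) (by omega)
    omega
  | succ k ih =>
    intro r M τ hord hM hMb hwin
    obtain ⟨τ', hord', hM', hwin'⟩ := refine_step pk pos ed hed hpos (4 + k) (by omega) τ M
      hord hM hwin
    have hW : 4 + (k + 1) = 4 + k + 1 := by omega
    have e : 4 + k + (r + 1) = 4 + (k + 1) + r := by omega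
    obtain ⟨τ'', h1, h2, h3⟩ := ih (r + 1) _ τ' hord' hM' (by
      rw [e]
      rw [hW] at hMb ⊢
      have hle : 16 ^ r ≤ 16 ^ (4 + k + 1 + r) := Nat.pow_le_pow_right (by norm_num) (by omega)
      have hdiv : M / (16 ^ (4 + k + 1)) ^ 2 * 16 ^ (4 + k + 1) ≤ 4 * 16 ^ r := by
        have hM4 : M ≤ 16 ^ (4 + k + 1) * (4 * 16 ^ r) := by
          rw [mul_left_comm, ← pow_add]
          omega
        rw [pow_two, ← Nat.div_div_eq_div_mul]
        exact (Nat.div_mul_le_self _ _).trans (Nat.div_le_of_le_mul hM4)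
      have e1 : 16 ^ (r + 1) = 16 * 16 ^ r := by rw [pow_succ, mul_comm]
      have e2 : 16 ^ (4 + k + 1) = 16 * 16 ^ (4 + k) := by rw [pow_succ, mul_comm]
      rw [e1]
      omega) hwin'
    rw [e] at h2
    exact ⟨τ'', h1, h2, h3⟩

open Classical in
/-- Replacing each time step by `L` steps turns load `L` into load `1`: the crossings of an edge in
a common step are ranked by a fixed enumeration of `J`. -/
theorem serialize {J K E : Type*} [Fintype J] (pk : J → K) (pos : J → ℕ) (ed : J → E)
    (τ : J → ℕ) (s L M : ℕ) (hs : 0 < s) (hord : Ordered pk pos τ) (hM : ∀ j, τ j < M)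
    (hwin : WindowLE ed τ s L) :
    ∃ τ' : J → ℕ, Ordered pk pos τ' ∧ (∀ j, τ' j < L * M) ∧
      ∀ j j', ed j = ed j' → τ' j = τ' j' → j = j' := by
  let f := Fintype.equivFin J
  let S : J → Finset J := fun j =>
    Finset.univ.filter fun j' => ed j' = ed j ∧ τ j' = τ j ∧ f j' < f j
  have hlt : ∀ j, (S j).card < L := by
    intro j
    refine lt_of_lt_of_le (Finset.card_lt_card ?_) (hwin (ed j) (τ j))
    refine Finset.ssubset_iff_subset_ne.2 ⟨?_, ?_⟩
    · intro j' h
      simp only [S, Finset.mem_filter, Finset.mem_univ, true_and] at h ⊢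
      refine ⟨h.1, ?_, ?_⟩ <;> omega
    · intro h
      have : j ∈ S j := by
        rw [h]; simp [hs]
      simp [S] at this
  have key : ∀ j j', τ j < τ j' → L * τ j + (S j).card < L * τ j' + (S j').card := by
    intro j j' h
    have := Nat.mul_le_mul_left L (Nat.succ_le_of_lt h)
    rw [Nat.mul_succ] at this
    have := hlt j
    omega
  have key2 : ∀ j j', ed j = ed j' → τ j = τ j' → f j < f j' → (S j).card < (S j').card := by
    intro j j' h1 h2 h3
    refine Finset.card_lt_card (Finset.ssubset_iff_subset_ne.2 ⟨?_, ?_⟩)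
    · intro a ha
      simp only [S, Finset.mem_filter, Finset.mem_univ, true_and] at ha ⊢
      exact ⟨ha.1.trans h1, ha.2.1.trans h2, ha.2.2.trans h3⟩
    · intro h
      have : j ∈ S j' := by simp [S, h1, h2, h3]
      rw [← h] at this
      simp [S] at this
  refine ⟨fun j => L * τ j + (S j).card, ?_, ?_, ?_⟩
  · intro j j' hp h
    exact key j j' (hord j j' hp h)
  · intro j
    have := Nat.mul_le_mul_left L (Nat.succ_le_of_lt (hM j))
    rw [Nat.mul_succ] at this
    have := hlt j
    dsimp only
    omega
  · intro j j' h1 h2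
    dsimp only at h2
    rcases lt_trichotomy (τ j) (τ j') with h | h | h
    · have := key j j' h; omega
    · rw [h] at h2
      rcases lt_trichotomy (f j) (f j') with h' | h' | h'
      · have := key2 j j' h1 h h'; omega
      · exact f.injective h'
      · have := key2 j' j h1.symm h.symm h'; omega
    · have := key j' j h; omega

/-! ### From crossing times to schedules -/

open Classical in
/-- Crossing times that increase along each path and are distinct on each edge give a feasible
schedule: `σ i t` counts the positions of path `i` crossed before time `t`. -/
theorem schedule_of_times (I : RInst) (τ : (Σ i : Fin I.k, Fin (I.path i).length) → ℕ) (T : ℕ)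
    (hord : Ordered (fun j => j.1) (fun j => (j.2 : ℕ)) τ) (hT : ∀ j, τ j < T)
    (hload : ∀ j j' : Σ i : Fin I.k, Fin (I.path i).length,
      (I.path j.1).get j.2 = (I.path j'.1).get j'.2 → τ j = τ j' → j = j') :
    ∃ σ : Fin I.k → ℕ → ℕ, I.IsSchedule σ ∧ I.LoadLE σ 1 ∧ I.CompletedBy σ T := by
  let S : (i : Fin I.k) → ℕ → Finset (Fin (I.path i).length) := fun i t =>
    Finset.univ.filter fun p => τ ⟨i, p⟩ < t
  let σ : Fin I.k → ℕ → ℕ := fun i t => (S i t).card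
  have hmono : ∀ i (p q : Fin (I.path i).length), p < q → τ ⟨i, p⟩ < τ ⟨i, q⟩ :=
    fun i p q h => hord ⟨i, p⟩ ⟨i, q⟩ rfl h
  have hle : ∀ i t, σ i t ≤ (I.path i).length := fun i t =>
    (Finset.card_le_univ _).trans (by simp)
  -- the crossed positions form an initial segment of the path
  have hσ : ∀ i t (p : Fin (I.path i).length), (p : ℕ) < σ i t ↔ τ ⟨i, p⟩ < t := by
    intro i t p
    constructor
    · intro h
      by_contra hcon
      have : S i t ⊆ Finset.Iio p := by
        intro q hq
        simp only [S, Finset.mem_filter, Finset.mem_univ, true_and] at hq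
        rw [Finset.mem_Iio]
        by_contra hqp
        rcases (not_lt.1 hqp).lt_or_eq with h' | h'
        · have := hmono i p q h'; omega
        · subst h'; omega
      have := Finset.card_le_card this
      rw [Fin.card_Iio] at this
      exact absurd h (not_lt.2 this)
    · intro h
      have : Finset.Iic p ⊆ S i t := by
        intro q hq
        simp only [S, Finset.mem_filter, Finset.mem_univ, true_and]
        rcases (Finset.mem_Iic.1 hq).lt_or_eq with h' | h'
        · have := hmono i q p h'; omega
        · subst h'; omega
      have := Finset.card_le_card this
      rw [Fin.card_Iic] at this
      exact this
  have htime : ∀ i t (h : σ i t < (I.path i).length), σ i (t + 1) = σ i t + 1 →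
      τ ⟨i, ⟨σ i t, h⟩⟩ = t := by
    intro i t h h'
    have h1 := hσ i (t + 1) ⟨σ i t, h⟩
    have h2 := hσ i t ⟨σ i t, h⟩
    dsimp only at h1 h2
    omega
  refine ⟨σ, ⟨?_, ?_, hle⟩, ?_, ?_⟩
  · intro i; simp [σ, S]
  · intro i t
    have h1 : σ i t ≤ σ i (t + 1) := Finset.card_le_card (by
      intro p hp
      simp only [S, Finset.mem_filter, Finset.mem_univ, true_and] at hp ⊢
      omega)
    have h2 : σ i (t + 1) ≤ σ i t + 1 := by
      by_contra hcon
      have h3 := hle i (t + 1)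
      have a1 := hσ i t ⟨σ i t, by omega⟩
      have a2 := hσ i (t + 1) ⟨σ i t + 1, by omega⟩
      have a3 := hmono i ⟨σ i t, by omega⟩ ⟨σ i t + 1, by omega⟩ (by simp [Fin.lt_def])
      dsimp only at a1 a2
      omega
    omega
  · intro e t
    rw [Finite.card_le_one_iff_subsingleton]
    refine ⟨?_⟩
    rintro ⟨i, hi⟩ ⟨i', hi'⟩
    obtain ⟨h1, h2⟩ := hi
    obtain ⟨h1', h2'⟩ := hi'
    obtain ⟨h3, h4⟩ := List.getElem?_eq_some_iff.1 h2
    obtain ⟨h3', h4'⟩ := List.getElem?_eq_some_iff.1 h2'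
    have := hload ⟨i, ⟨σ i t, h3⟩⟩ ⟨i', ⟨σ i' t, h3'⟩⟩ (by simp [h4, h4'])
      (by rw [htime i t h3 h1, htime i' t h3' h1'])
    exact Subtype.ext (congrArg Sigma.fst this)
  · intro i
    have : S i T = Finset.univ := Finset.filter_true_of_mem fun p _ => hT _
    simp [σ, this]

/-- There is a universal constant `c ≥ 1` such that every routing
instance with congestion `C` and dilation `D` admits a feasible schedule
(load at most `1`) with makespan at most `c·(C+D)`. -/
theorem exists_feasible_schedule_congestion_plus_dilation :
    ∃ c : ℕ, 1 ≤ c ∧ ∀ I : RInst, I.Valid →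
      ∃ σ : Fin I.k → ℕ → ℕ, I.IsSchedule σ ∧ I.LoadLE σ 1 ∧
        I.CompletedBy σ (c * (I.congestion + I.dilation)) := by
  refine ⟨(16 ^ 4 + 4 * 8 ^ 4) * (4 * (16 ^ 4 * 16)), by norm_num, fun I hI => ?_⟩
  set C := I.congestion with hC
  set D := I.dilation with hD
  let J := Σ i : Fin I.k, Fin (I.path i).length
  let ed : J → I.E := fun j => (I.path j.1).get j.2
  have hlen : ∀ i, (I.path i).length ≤ D := fun i =>
    Finset.le_sup (f := fun i : Fin I.k => (I.path i).length) (Finset.mem_univ i)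
  have hed : ∀ j j' : J, j.1 = j'.1 → ed j = ed j' → j = j' := by
    rintro ⟨i, p⟩ ⟨i', p'⟩ h h'
    dsimp only at h
    subst h
    have : p = p' := (List.nodup_iff_injective_get.1 (hI.2 i)) h'
    rw [this]
  have hpos : ∀ j j' : J, j.1 = j'.1 → (j.2 : ℕ) = j'.2 → j = j' := by
    rintro ⟨i, p⟩ ⟨i', p'⟩ h h'
    dsimp only at h
    subst h
    have : p = p' := Fin.ext h'
    rw [this]
  -- the coarsest window length `16 ^ (4 + k)` is at least `C + D` and at most `16 ^ 5 * (C + D)`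
  set k := Nat.clog 16 (C + D) with hk
  have hCD : C + D ≤ 16 ^ (4 + k) :=
    (Nat.le_pow_clog (by norm_num) _).trans (Nat.pow_le_pow_right (by norm_num) (by omega))
  obtain ⟨τ, h1, h2, h3⟩ := refine_down (fun j : J => j.1) (fun j => (j.2 : ℕ)) ed hed hpos k 0 D
    (fun j => (j.2 : ℕ)) (fun _ _ _ h => h) (fun j => lt_of_lt_of_le j.2.2 (hlen j.1))
    (by rw [add_zero]; omega) (by
      intro e t
      have hc : Nat.card {i : Fin I.k | e ∈ I.path i} ≤ C :=
        Finset.le_sup (f := fun e : I.E => Nat.card {i : Fin I.k | e ∈ I.path i})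
          (Finset.mem_univ e)
      refine le_trans ?_ (hc.trans (by omega))
      classical
      rw [Nat.card_coe_set_eq, Set.ncard_eq_toFinset_card']
      refine Finset.card_le_card_of_injOn (fun j => j.1) ?_ ?_
      · intro j hj
        simp only [Finset.coe_filter, Finset.mem_univ, true_and, Set.mem_ofPred_eq] at hj
        simp only [Set.coe_toFinset, Set.mem_ofPred_eq]
        rw [← hj.1]
        exact List.get_mem _ _
      · intro j hj j' hj' h
        simp only [Finset.coe_filter, Finset.mem_univ, true_and, Set.mem_ofPred_eq] at hj hj'
        exact hed j j' h (hj.1.trans hj'.1.symm))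
  obtain ⟨τ', h4, h5, h6⟩ := serialize (fun j : J => j.1) (fun j => (j.2 : ℕ)) ed τ _ _ _
    (by norm_num) h1 h2 h3
  refine schedule_of_times I τ' _ h4 (fun j => (h5 j).trans_le ?_) h6
  rw [mul_assoc]
  refine Nat.mul_le_mul_left _ ?_
  rw [mul_assoc]
  refine Nat.mul_le_mul_left _ ?_
  rw [add_zero, pow_add, mul_assoc]
  refine Nat.mul_le_mul_left _ ?_
  -- a crossing `j` exists here, so `C + D` is positive
  have hD1 : 1 ≤ D := by
    have := j.2.2
    have := hlen j.1
    omega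
  rcases Nat.eq_zero_or_pos k with h0 | h0
  · rw [h0]; omega
  · have h := Nat.pow_pred_clog_lt_self (b := 16) (x := C + D) (by norm_num) (by
      by_contra hcon
      have : C + D = 1 := by omega
      rw [hk, this] at h0
      simp at h0)
    rw [← hk] at h
    have e : 16 ^ k = 16 * 16 ^ k.pred := by
      obtain ⟨q, hq⟩ : ∃ q, k = q + 1 := ⟨k - 1, by omega⟩
      rw [hq, Nat.pred_succ, pow_succ, mul_comm]
    omega
end

section
/- There exists a universal constant c such that every routing instance in which every path has exactly D edges and whose congestion is at most D admits a schedule with makespan at most c·D and load at most c. -/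
namespace Routing

open Finset

/-! ### The local lemma -/

section LocalLemma

open Classical in
/-- Independence of events that depend on disjoint sets of coordinates, in counting form. Exchanging
the coordinates outside `U` between the two members of a pair `(ω₁, ω₂)` turns `P ω₁ ∧ Q ω₁` into
`P ω₁ ∧ Q ω₂`. -/
theorem card_and_mul_card {V β : Type*} [Fintype V] [Fintype β] (P Q : (V → β) → Prop)
    [DecidablePred P] [DecidablePred Q] (U : Set V)
    (hP : ∀ ω ω', (∀ v ∈ U, ω v = ω' v) → (P ω ↔ P ω'))
    (hQ : ∀ ω ω', (∀ v ∉ U, ω v = ω' v) → (Q ω ↔ Q ω')) :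
    #{ω | P ω ∧ Q ω} * Fintype.card (V → β) = #{ω | P ω} * #{ω | Q ω} := by
  rw [← Finset.card_univ, ← Finset.card_product, ← Finset.card_product]
  let mix : (V → β) → (V → β) → (V → β) := fun ω ω' v => if v ∈ U then ω v else ω' v
  have mixU : ∀ ω ω', ∀ v ∈ U, mix ω ω' v = ω v := fun ω ω' v hv => if_pos hv
  have mixU' : ∀ ω ω', ∀ v ∉ U, mix ω ω' v = ω' v := fun ω ω' v hv => if_neg hv
  have inv : ∀ ω ω', mix (mix ω ω') (mix ω' ω) = ω := by
    intro ω ω'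
    funext v
    by_cases hv : v ∈ U <;> simp [mix, hv]
  refine Finset.card_bij' (fun z _ => (mix z.1 z.2, mix z.2 z.1))
    (fun z _ => (mix z.1 z.2, mix z.2 z.1)) ?_ ?_ ?_ ?_
  · rintro ⟨ω, ω'⟩ h
    simp only [mem_product, mem_filter, mem_univ, true_and, and_true] at h ⊢
    exact ⟨(hP _ _ (mixU ω ω')).2 h.1, (hQ _ _ (mixU' ω' ω)).2 h.2⟩
  · rintro ⟨ω, ω'⟩ h
    simp only [mem_product, mem_filter, mem_univ, true_and, and_true] at h ⊢
    exact ⟨(hP _ _ (mixU ω ω')).2 h.1, (hQ _ _ (mixU' ω ω')).2 h.2⟩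
  · rintro ⟨ω, ω'⟩ _
    simp [inv]
  · rintro ⟨ω, ω'⟩ _
    simp [inv]

open Classical in
/-- The symmetric Lovász local lemma on `V → β` with the uniform measure. Event `a` depends only on
the coordinates in `vbl a`, every event sharing a coordinate with `a` lies in `N a`, and every event
has probability at most `1 / (4 * d)`, where `d` bounds the size of all `N a`. The family of events
may be infinite. -/
theorem local_lemma {V β α : Type*} [Fintype V] [Fintype β] [Nonempty β]
    (A : α → (V → β) → Prop) (vbl : α → Set V)
    (hA : ∀ a ω ω', (∀ v ∈ vbl a, ω v = ω' v) → (A a ω ↔ A a ω'))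
    (N : α → Finset α) (hN : ∀ a b, b ∉ N a → Disjoint (vbl a) (vbl b))
    (d : ℕ) (hd : 0 < d) (hNd : ∀ a, #(N a) ≤ d)
    (hp : ∀ a, #{ω | A a ω} * (4 * d) ≤ Fintype.card (V → β)) :
    ∃ ω, ∀ a, ¬ A a ω := by
  -- Conditioned on avoiding any finite set of events, each event has probability at most
  -- `1 / (2 * d)`.
  have key : ∀ n, ∀ S : Finset α, #S = n → ∀ a,
      #{ω | A a ω ∧ ∀ b ∈ S, ¬ A b ω} * (2 * d) ≤ #{ω | ∀ b ∈ S, ¬ A b ω} := by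
    intro n
    induction n using Nat.strong_induction_on with
    | _ n ih =>
      intro S hS a
      set S1 := S.filter (· ∈ N a)
      set S2 := S.filter (· ∉ N a)
      have hind : #{ω | A a ω ∧ ∀ b ∈ S2, ¬ A b ω} * Fintype.card (V → β)
          = #{ω | A a ω} * #{ω | ∀ b ∈ S2, ¬ A b ω} := by
        refine card_and_mul_card (A a) (fun ω => ∀ b ∈ S2, ¬ A b ω) (vbl a) (hA a) ?_
        intro ω ω' h
        refine forall₂_congr fun b hb => not_congr (hA b ω ω' fun v hv => h v fun hv' => ?_)
        exact Set.disjoint_left.1 (hN a b (mem_filter.1 hb).2) hv' hv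
      have hcard : 0 < Fintype.card (V → β) := Fintype.card_pos
      have h1 : #{ω | A a ω ∧ ∀ b ∈ S2, ¬ A b ω} * (4 * d) ≤ #{ω | ∀ b ∈ S2, ¬ A b ω} := by
        refine Nat.le_of_mul_le_mul_right ?_ hcard
        calc _ = (#{ω | A a ω ∧ ∀ b ∈ S2, ¬ A b ω} * Fintype.card (V → β)) * (4 * d) := by ring
          _ = (#{ω | A a ω} * (4 * d)) * #{ω | ∀ b ∈ S2, ¬ A b ω} := by rw [hind]; ring
          _ ≤ _ := by rw [mul_comm _ (Fintype.card _)]; exact Nat.mul_le_mul_right _ (hp a)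
      have h2 : #{ω | A a ω ∧ ∀ b ∈ S, ¬ A b ω} ≤ #{ω | A a ω ∧ ∀ b ∈ S2, ¬ A b ω} := by
        refine card_le_card fun ω => ?_
        simp only [mem_filter, mem_univ, true_and]
        exact fun h => ⟨h.1, fun b hb => h.2 b (mem_filter.1 hb).1⟩
      have h3 : #{ω | ∀ b ∈ S2, ¬ A b ω} ≤ 2 * #{ω | ∀ b ∈ S, ¬ A b ω} := by
        rcases S1.eq_empty_or_nonempty with hS1 | hS1
        · have : S2 = S := by
            refine filter_true_of_mem fun b hb hb' => ?_
            exact notMem_empty b (hS1 ▸ mem_filter.2 ⟨hb, hb'⟩)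
          rw [this]; omega
        · have hlt : #S2 < n := by
            have : #S1 + #S2 = #S := card_filter_add_card_filter_not (s := S) (fun b => b ∈ N a)
            have h0 : 0 < #S1 := hS1.card_pos
            omega
          have hsub : ({ω | ∀ b ∈ S2, ¬ A b ω} : Finset (V → β)) ⊆
              ({ω | ∀ b ∈ S, ¬ A b ω} : Finset (V → β)) ∪
                S1.biUnion fun b => {ω | A b ω ∧ ∀ b ∈ S2, ¬ A b ω} := by
            intro ω hω
            simp only [mem_filter, mem_univ, true_and, mem_union, mem_biUnion] at hω ⊢
            by_contra! hc
            obtain ⟨⟨b, hb, hbω⟩, hc⟩ := hc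
            by_cases hbN : b ∈ N a
            · obtain ⟨b', hb', h'⟩ := hc b (mem_filter.2 ⟨hb, hbN⟩) hbω
              exact hω b' hb' h'
            · exact hω b (mem_filter.2 ⟨hb, hbN⟩) hbω
          have h4 := (card_le_card hsub).trans (card_union_le _ _)
          have h5 : #(S1.biUnion fun b => ({ω | A b ω ∧ ∀ b ∈ S2, ¬ A b ω} : Finset (V → β)))
              * (2 * d) ≤ d * #{ω | ∀ b ∈ S2, ¬ A b ω} := by
            calc _ ≤ (∑ b ∈ S1, #{ω | A b ω ∧ ∀ b ∈ S2, ¬ A b ω}) * (2 * d) :=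
                  Nat.mul_le_mul_right _ card_biUnion_le
              _ = ∑ b ∈ S1, #{ω | A b ω ∧ ∀ b ∈ S2, ¬ A b ω} * (2 * d) := Finset.sum_mul ..
              _ ≤ #S1 • #{ω | ∀ b ∈ S2, ¬ A b ω} :=
                  sum_le_card_nsmul _ _ _ fun b _ => ih _ hlt S2 rfl b
              _ ≤ _ := by
                  rw [smul_eq_mul]
                  refine Nat.mul_le_mul_right _ ((card_le_card fun b hb => ?_).trans (hNd a))
                  exact (mem_filter.1 hb).2
          have h6 : #(S1.biUnion fun b => ({ω | A b ω ∧ ∀ b ∈ S2, ¬ A b ω} : Finset (V → β)))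
              * 2 ≤ #{ω | ∀ b ∈ S2, ¬ A b ω} := by
            refine Nat.le_of_mul_le_mul_right ?_ hd
            linarith
          omega
      have h7 := Nat.mul_le_mul_right (4 * d) h2
      linarith
  have pos : ∀ S : Finset α, 0 < #{ω | ∀ b ∈ S, ¬ A b ω} := by
    intro S
    induction S using Finset.induction_on with
    | empty => simpa using Fintype.card_pos (α := V → β)
    | insert a S _ ih =>
      have h1 := key _ S rfl a
      have h2 : #{ω | ∀ b ∈ S, ¬ A b ω} = #{ω | A a ω ∧ ∀ b ∈ S, ¬ A b ω}
          + #{ω | ∀ b ∈ insert a S, ¬ A b ω} := by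
        rw [← card_filter_add_card_filter_not (s := {ω | ∀ b ∈ S, ¬ A b ω}) (fun ω => A a ω),
          filter_filter, filter_filter]
        congr 2
        · ext ω; simp [and_comm]
        · ext ω; simp [and_comm]
      have h3 : #{ω | A a ω ∧ ∀ b ∈ S, ¬ A b ω} * 2 ≤ #{ω | ∀ b ∈ S, ¬ A b ω} := by
        refine le_trans ?_ h1
        exact Nat.mul_le_mul_left _ (by omega)
      omega
  -- `V → β` is finite, so finitely many events already witness every failure.
  by_contra! hc
  choose f hf using hc
  obtain ⟨ω, hω⟩ := card_pos.1 (pos (univ.image f))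
  exact (mem_filter.1 hω).2 (f ω) (mem_image_of_mem f (mem_univ ω)) (hf ω)

end LocalLemma

/-! ### A Chernoff bound -/

open Classical in
/-- For independent uniform `x v`, the sum of the `Z v (x v) ∈ [0, b]`, with mean at most `B`, exceeds
`B + η` with probability at most `exp (lam ^ 2 * b * B - lam * η)`: Markov's inequality for the
exponential moment, with `exp z ≤ 1 + z + z ^ 2` for `0 ≤ z ≤ 1`. -/
theorem chernoff {V : Type*} [Fintype V] {w : ℕ} (hw : 0 < w) (Z : V → Fin w → ℝ) {b B η lam : ℝ}
    (hZ0 : ∀ v y, 0 ≤ Z v y) (hZb : ∀ v y, Z v y ≤ b) (hb : 0 ≤ b)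
    (hlam : 0 ≤ lam) (hlb : lam * b ≤ 1)
    (hB : (∑ v, (∑ y, Z v y) / w) ≤ B) :
    (#{x : V → Fin w | B + η < ∑ v, Z v (x v)} : ℝ)
      ≤ Fintype.card (V → Fin w) * Real.exp (lam ^ 2 * b * B - lam * η) := by
  have hw' : (0 : ℝ) < w := by exact_mod_cast hw
  have hmgf : ∑ x : V → Fin w, Real.exp (lam * ∑ v, Z v (x v))
      ≤ Fintype.card (V → Fin w) * Real.exp ((lam + lam ^ 2 * b) * B) := by
    calc ∑ x : V → Fin w, Real.exp (lam * ∑ v, Z v (x v))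
        = ∑ x : V → Fin w, ∏ v, Real.exp (lam * Z v (x v)) := by
          simp only [mul_sum, Real.exp_sum]
      _ = ∏ v, ∑ y, Real.exp (lam * Z v y) := by
          rw [Finset.prod_univ_sum, Fintype.piFinset_univ]
      _ ≤ ∏ v, (w * Real.exp ((lam + lam ^ 2 * b) * ((∑ y, Z v y) / w))) := by
          refine prod_le_prod (fun v _ => sum_nonneg fun y _ => (Real.exp_pos _).le) fun v _ => ?_
          have h1 : ∀ y, Real.exp (lam * Z v y) ≤ 1 + (lam + lam ^ 2 * b) * Z v y := by
            intro y
            have h0 : 0 ≤ lam * Z v y := mul_nonneg hlam (hZ0 v y)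
            have h1 : lam * Z v y ≤ 1 := (mul_le_mul_of_nonneg_left (hZb v y) hlam).trans hlb
            have h2 := Real.abs_exp_sub_one_sub_id_le (x := lam * Z v y) (by rwa [abs_of_nonneg h0])
            have h3 := (abs_le.1 h2).2
            have h4 : (lam * Z v y) ^ 2 ≤ lam ^ 2 * b * Z v y := by
              have := mul_le_mul_of_nonneg_left (hZb v y)
                (mul_nonneg (sq_nonneg lam) (hZ0 v y))
              nlinarith
            nlinarith
          calc _ ≤ ∑ y, (1 + (lam + lam ^ 2 * b) * Z v y) := sum_le_sum fun y _ => h1 y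
            _ = w * ((lam + lam ^ 2 * b) * ((∑ y, Z v y) / w) + 1) := by
                rw [sum_add_distrib, ← mul_sum]
                simp
                field_simp
                ring
            _ ≤ _ := mul_le_mul_of_nonneg_left (Real.add_one_le_exp _) hw'.le
      _ = Fintype.card (V → Fin w)
            * Real.exp ((lam + lam ^ 2 * b) * ∑ v, (∑ y, Z v y) / w) := by
          rw [prod_mul_distrib, ← Real.exp_sum, mul_sum]
          simp
      _ ≤ _ := by
          gcongr
  have hmarkov : (#{x : V → Fin w | B + η < ∑ v, Z v (x v)} : ℝ) * Real.exp (lam * (B + η))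
      ≤ ∑ x : V → Fin w, Real.exp (lam * ∑ v, Z v (x v)) := by
    rw [← nsmul_eq_mul]
    refine (card_nsmul_le_sum _ _ _ fun x hx => ?_).trans
      (sum_le_sum_of_subset_of_nonneg (filter_subset _ _) fun x _ _ => (Real.exp_pos _).le)
    exact Real.exp_le_exp.2 (mul_le_mul_of_nonneg_left (mem_filter.1 hx).2.le hlam)
  have := hmarkov.trans hmgf
  rw [← le_div_iff₀ (Real.exp_pos _), mul_div_assoc, ← Real.exp_sub] at this
  refine this.trans_eq ?_
  congr 2
  ring


/-! ### The smoothing kernels -/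

/-- The range of the random delays at level `k`. -/
def width (k : ℕ) : ℕ := 16 ^ (k + 3)

theorem width_pos (k : ℕ) : 0 < width k := by unfold width; positivity

theorem width_succ (k : ℕ) : width (k + 1) = 16 * width k := by unfold width; ring

/-- The law of a sum of independent delays, one uniform on `{0, …, width j - 1}` for each level
`j ≤ k`, as a function on `ℤ`. -/
noncomputable def kernel : ℕ → ℤ → ℝ
  | 0, s => if 0 ≤ s ∧ s < width 0 then 1 / width 0 else 0
  | k + 1, s => (∑ y : Fin (width (k + 1)), kernel k (s - (y : ℕ))) / width (k + 1)

theorem kernel_nonneg (k : ℕ) (s : ℤ) : 0 ≤ kernel k s := by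
  induction k generalizing s with
  | zero => unfold kernel; split_ifs <;> positivity
  | succ k ih => exact div_nonneg (sum_nonneg fun y _ => ih _) (by positivity)

theorem kernel_eq_zero (k : ℕ) (s : ℤ) (h : s < 0 ∨ 2 * width k ≤ s) : kernel k s = 0 := by
  induction k generalizing s with
  | zero =>
    have := width_pos 0
    exact if_neg (by omega)
  | succ k ih =>
    have h1 := width_succ k
    unfold kernel
    rw [sum_eq_zero, zero_div]
    intro y _
    have := y.2
    exact ih _ (by omega)

/-- `kernel k` has total mass `1`; the sum may run over any interval containing its support. -/
theorem kernel_sum (k : ℕ) (lo hi : ℤ) (h0 : lo ≤ 0) (h1 : 2 * width k ≤ hi) :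
    ∑ s ∈ Ico lo hi, kernel k s = 1 := by
  induction k generalizing lo hi with
  | zero =>
    have hw := width_pos 0
    simp only [kernel]
    rw [← sum_filter]
    have : (Ico lo hi).filter (fun s : ℤ => 0 ≤ s ∧ s < width 0) = Ico 0 (width 0 : ℤ) := by
      ext s; simp only [mem_filter, mem_Ico]; omega
    rw [this]
    have : (width 0 : ℝ) ≠ 0 := by positivity
    simp [this]
  | succ k ih =>
    have hw := width_succ k
    have hpos := width_pos (k + 1)
    simp only [kernel]
    rw [← sum_div, sum_comm]
    have : ∀ y : Fin (width (k + 1)), ∑ s ∈ Ico lo hi, kernel k (s - (y : ℕ)) = 1 := by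
      intro y
      have hy := y.2
      rw [← ih (lo - (y : ℕ)) (hi - (y : ℕ)) (by omega) (by omega)]
      refine sum_bij (fun s _ => s - (y : ℕ)) ?_ ?_ ?_ ?_
      · intro s hs; rw [mem_Ico] at hs ⊢; omega
      · intro s _ s' _ h; omega
      · intro s hs; rw [mem_Ico] at hs; exact ⟨s + (y : ℕ), by rw [mem_Ico]; omega, by omega⟩
      · intro s _; rfl
    simp only [this]
    have : (width (k + 1) : ℝ) ≠ 0 := by positivity
    simp [this]

/-- The delay of level `k` alone already spreads a packet evenly over `width k` time steps. -/
theorem kernel_le (k : ℕ) (s : ℤ) : kernel k s ≤ 1 / width k := by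
  cases k with
  | zero => unfold kernel; split_ifs; exacts [le_rfl, by positivity]
  | succ k =>
    unfold kernel
    gcongr
    have h := kernel_sum k (min 0 (s - width (k + 1))) (max (2 * width k) (s + 1))
      (min_le_left _ _) (le_max_left _ _)
    rw [← h]
    have hinj : Function.Injective fun y : Fin (width (k + 1)) => s - ((y : ℕ) : ℤ) := by
      intro y y' hy
      ext
      simp only at hy
      omega
    rw [← sum_image (f := fun u => kernel k u)
      (g := fun y : Fin (width (k + 1)) => s - ((y : ℕ) : ℤ)) hinj.injOn]
    refine sum_le_sum_of_subset_of_nonneg ?_ fun u _ _ => kernel_nonneg k u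
    intro u hu
    obtain ⟨y, -, rfl⟩ := mem_image.1 hu
    have := y.2
    rw [mem_Ico]
    omega

/-! ### Fixing the delays of one level -/

/-- The bound on the expected load once only the delays of levels at most `k` are random. -/
noncomputable def cap (k : ℕ) : ℝ := 1 + (1 / 2) ^ k

/-- The condition of the local lemma in `step`: the first factor is the Chernoff bound for an excess
of `2⁻⁽ᵏ⁺¹⁾` with summands at most `1 / width k`, and `16 * width (k + 1) ^ 4` bounds the dependency
degree. -/
theorem numeric (k : ℕ) :
    Real.exp (-((1 / 2 : ℝ) ^ (k + 1)) ^ 2 * width k / 8)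
      * (4 * (16 * (width (k + 1)) ^ 4 : ℕ)) ≤ 1 := by
  have e1 : -((1 / 2 : ℝ) ^ (k + 1)) ^ 2 * width k / 8 = -(128 * 4 ^ k : ℕ) := by
    unfold width
    push_cast
    rw [pow_add (16 : ℝ), show (16 : ℝ) = 4 * 4 by norm_num, mul_pow, ← pow_mul, mul_comm (k + 1) 2,
      pow_mul, pow_succ, neg_mul, neg_div, neg_inj]
    have : ((1 / 2 : ℝ) ^ 2) ^ k * 4 ^ k = 1 := by
      rw [← mul_pow]; norm_num
    calc _ = (((1 / 2 : ℝ) ^ 2) ^ k * 4 ^ k) * (128 * 4 ^ k) := by ring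
      _ = _ := by rw [this, one_mul]
  have e2 : 4 * (16 * (width (k + 1)) ^ 4) = 2 ^ (70 + 16 * k) := by
    unfold width
    rw [← pow_mul, show (16 : ℕ) = 2 ^ 4 by norm_num, ← pow_mul]
    ring
  have e3 : 70 + 16 * k ≤ 128 * 4 ^ k := by
    clear e1 e2
    induction k with
    | zero => norm_num
    | succ k ih => rw [pow_succ]; have := Nat.one_le_pow k 4 (by norm_num); omega
  have e4 : ((4 * (16 * (width (k + 1)) ^ 4) : ℕ) : ℝ) ≤ Real.exp (128 * 4 ^ k : ℕ) := by
    rw [e2]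
    calc ((2 ^ (70 + 16 * k) : ℕ) : ℝ) ≤ ((2 ^ (128 * 4 ^ k) : ℕ) : ℝ) := by
          exact_mod_cast Nat.pow_le_pow_right (by norm_num) e3
      _ = (2 : ℝ) ^ (128 * 4 ^ k) := by push_cast; rfl
      _ ≤ (Real.exp 1) ^ (128 * 4 ^ k) := by
          gcongr
          have := Real.add_one_le_exp (1 : ℝ)
          linarith
      _ = _ := by rw [← Real.exp_nat_mul, mul_one]
  rw [e1, Real.exp_neg, inv_mul_le_iff₀ (Real.exp_pos _), mul_one]
  exact_mod_cast e4

open Classical in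
/-- Fixing the delays of level `k + 1`. The elements of `P` are crossings (a packet and a position on
its path), `a p` is the time of crossing `p` without the delays of levels at most `k + 1`, and `g p`
names the block of positions containing `p`, which shares a single delay of level `k + 1`. The sums
are the expected loads of `e` at time `t` over the delays not yet fixed; the delays can be chosen so
that their bound rises only from `cap (k + 1)` to `cap k`. -/
theorem step {P V E : Type*} [Fintype P] [Fintype V] (edge : P → E) (g : P → V) (k : ℕ)
    (hg : ∀ p p', edge p = edge p' → g p = g p' → p = p')
    (hfib : ∀ v, #{p | g p = v} ≤ width (k + 1) ^ 2) (a : P → ℤ)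
    (h : ∀ e t, ∑ p with edge p = e, kernel (k + 1) (t - a p) ≤ cap (k + 1)) :
    ∃ x : V → Fin (width (k + 1)), ∀ e t,
      ∑ p with edge p = e, kernel k (t - a p - (x (g p) : ℕ)) ≤ cap k := by
  set w := width (k + 1) with hw
  have hws := width_succ k
  have hwpos : 0 < w := width_pos _
  have hkpos := width_pos k
  have : Nonempty (Fin w) := ⟨⟨0, hwpos⟩⟩
  -- The crossings of `e` that can be moved to time `t` by the remaining delays.
  let R : E × ℤ → Finset P := fun z => {p | edge p = z.1 ∧ 0 ≤ z.2 - a p ∧ z.2 - a p < 2 * w}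
  have hR : ∀ z, #(R z) ≤ 8 * w := by
    rintro ⟨e, t⟩
    -- Each crossing in `R (e, t)` contributes total mass `1` to the expected loads of `e` at the
    -- `4 * w` time steps around `t`, and each of these loads is at most `2`.
    have h1 : (#(R (e, t)) : ℝ) ≤ ∑ t' ∈ Ico (t - 2 * w) (t + 2 * w),
        ∑ p with edge p = e, kernel (k + 1) (t' - a p) := by
      rw [sum_comm, card_eq_sum_ones, Nat.cast_sum]
      calc ∑ p ∈ R (e, t), ((1 : ℕ) : ℝ)
          ≤ ∑ p ∈ R (e, t), ∑ t' ∈ Ico (t - 2 * w) (t + 2 * w), kernel (k + 1) (t' - a p) := by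
            refine sum_le_sum fun p hp => ?_
            simp only [R, mem_filter, mem_univ, true_and] at hp
            have := kernel_sum (k + 1) (t - 2 * w - a p) (t + 2 * w - a p) (by omega) (by omega)
            rw [Nat.cast_one, ← this]
            refine le_of_eq (sum_bij (fun s _ => s + a p) ?_ ?_ ?_ ?_)
            · intro s hs; rw [mem_Ico] at hs ⊢; omega
            · intro s _ s' _ h; omega
            · intro s hs; rw [mem_Ico] at hs; exact ⟨s - a p, by rw [mem_Ico]; omega, by omega⟩
            · intro s _; simp
        _ ≤ _ := by
            refine sum_le_sum_of_subset_of_nonneg ?_ fun p _ _ =>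
              sum_nonneg fun _ _ => kernel_nonneg _ _
            intro p hp
            simp only [R, mem_filter, mem_univ, true_and] at hp ⊢
            exact hp.1
    have h2 : (#(R (e, t)) : ℝ) ≤ (4 * w : ℕ) * 2 := by
      refine h1.trans ((sum_le_card_nsmul _ _ 2 fun t' _ => (h e t').trans ?_).trans_eq ?_)
      · have : (1 / 2 : ℝ) ^ (k + 1) ≤ 1 := pow_le_one₀ (by norm_num) (by norm_num)
        unfold cap
        linarith
      · rw [nsmul_eq_mul, Int.card_Ico]
        congr 2
        omega
    have h3 : #(R (e, t)) ≤ 4 * w * 2 := by exact_mod_cast h2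
    show #(R (e, t)) ≤ 8 * w
    omega
  -- The load at `z` as a function of the delay of the single variable `v`.
  let Z : E × ℤ → V → Fin w → ℝ := fun z v y =>
    ∑ p with edge p = z.1 ∧ g p = v, kernel k (z.2 - a p - (y : ℕ))
  have hZsum : ∀ z (x : V → Fin w), ∑ v, Z z v (x v)
      = ∑ p with edge p = z.1, kernel k (z.2 - a p - (x (g p) : ℕ)) := by
    intro z x
    rw [← sum_fiberwise_of_maps_to (g := g) (t := univ) (fun p _ => mem_univ _)]
    refine sum_congr rfl fun v _ => ?_
    simp only [Z, filter_filter]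
    refine sum_congr rfl fun p hp => ?_
    rw [(mem_filter.1 hp).2.2]
  -- The bad event at `z`; its excess `2⁻⁽ᵏ⁺¹⁾` is `cap k - cap (k + 1)`.
  let A : E × ℤ → (V → Fin w) → Prop := fun z x => cap (k + 1) + (1 / 2) ^ (k + 1)
    < ∑ v, Z z v (x v)
  let vbl : E × ℤ → Set V := fun z => {v | ∃ p ∈ R z, g p = v}
  let N : E × ℤ → Finset (E × ℤ) := fun z => (R z).biUnion fun p =>
    (({p' | g p' = g p} : Finset P) ×ˢ range (2 * w)).image fun q => (edge q.1, a q.1 + (q.2 : ℕ))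
  suffices hex : ∃ x, ∀ z, ¬ A z x by
    obtain ⟨x, hx⟩ := hex
    refine ⟨x, fun e t => ?_⟩
    have h1 := not_lt.1 (hx (e, t))
    rw [hZsum] at h1
    refine h1.trans_eq ?_
    unfold cap
    rw [pow_succ]
    ring
  refine local_lemma A vbl ?_ N ?_ (16 * w ^ 4) (by positivity) ?_ ?_
  · intro z ω ω' hω
    simp only [A, hZsum]
    have : ∀ p ∈ ({p | edge p = z.1} : Finset P), kernel k (z.2 - a p - (ω (g p) : ℕ))
        = kernel k (z.2 - a p - (ω' (g p) : ℕ)) := by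
      intro p hp
      by_cases hpR : p ∈ R z
      · rw [hω (g p) ⟨p, hpR, rfl⟩]
      · simp only [R, mem_filter, mem_univ, true_and] at hpR hp
        have h1 := (ω (g p)).2
        have h2 := (ω' (g p)).2
        have h3 : ¬ (0 ≤ z.2 - a p ∧ z.2 - a p < 2 * w) := fun h => hpR ⟨hp, h⟩
        rw [kernel_eq_zero, kernel_eq_zero] <;> omega
    rw [sum_congr rfl this]
  · intro z z' hz
    rw [Set.disjoint_left]
    rintro v ⟨p, hp, rfl⟩ ⟨p', hp', hpp⟩
    refine hz (mem_biUnion.2 ⟨p, hp, mem_image.2 ⟨(p', (z'.2 - a p').toNat), ?_, ?_⟩⟩)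
    · simp only [R, mem_filter, mem_univ, true_and] at hp'
      simp only [mem_product, mem_filter, mem_univ, true_and, mem_range]
      exact ⟨hpp, by omega⟩
    · simp only [R, mem_filter, mem_univ, true_and] at hp'
      ext1
      · exact hp'.1
      · simp only
        omega
  · intro z
    refine card_biUnion_le.trans ((sum_le_card_nsmul _ _ (w ^ 2 * (2 * w)) fun p _ => ?_).trans ?_)
    · refine card_image_le.trans ?_
      rw [card_product, card_range]
      exact Nat.mul_le_mul_right _ (hfib _)
    · rw [smul_eq_mul]
      calc _ ≤ 8 * w * (w ^ 2 * (2 * w)) := Nat.mul_le_mul_right _ (hR z)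
        _ = _ := by ring
  · intro z
    set η : ℝ := (1 / 2) ^ (k + 1) with hη
    have hη0 : 0 < η := by positivity
    have hη1 : η ≤ 1 := pow_le_one₀ (by norm_num) (by norm_num)
    have hkR : (0 : ℝ) < width k := by exact_mod_cast hkpos
    have hcard : ∀ v, #{p | edge p = z.1 ∧ g p = v} ≤ 1 := by
      intro v
      refine card_le_one.2 fun p hp p' hp' => ?_
      simp only [mem_filter, mem_univ, true_and] at hp hp'
      exact hg p p' (hp.1.trans hp'.1.symm) (hp.2.trans hp'.2.symm)
    have hch := chernoff hwpos (Z z) (b := 1 / width k) (B := cap (k + 1)) (η := η)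
      -- this `lam` minimises the exponent `2 * lam ^ 2 / width k - lam * η`
      (lam := η * width k / 4) (fun v y => sum_nonneg fun _ _ => kernel_nonneg _ _) ?_
      (by positivity) (by positivity) ?_ ?_
    · have h2 : (η * width k / 4) ^ 2 * (1 / width k) * cap (k + 1) - η * width k / 4 * η
          ≤ -η ^ 2 * width k / 8 := by
        have hc : cap (k + 1) ≤ 2 := by unfold cap; linarith
        have : (η * width k / 4) ^ 2 * (1 / width k) = η ^ 2 * width k / 16 := by
          field_simp
          norm_num
        rw [this]
        have := mul_le_mul_of_nonneg_left hc (show 0 ≤ η ^ 2 * width k / 16 by positivity)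
        linarith
      have h3 := numeric k
      rw [← hw, ← hη] at h3
      have h4 : ((#{x | A z x} * (4 * (16 * w ^ 4)) : ℕ) : ℝ) ≤ Fintype.card (V → Fin w) := by
        push_cast at h3 ⊢
        calc _ ≤ (Fintype.card (V → Fin w) * Real.exp (-η ^ 2 * width k / 8))
              * (4 * (16 * (w : ℝ) ^ 4)) := by
              gcongr
              exact hch.trans (by gcongr)
          _ = Fintype.card (V → Fin w) * (Real.exp (-η ^ 2 * width k / 8)
              * (4 * (16 * (w : ℝ) ^ 4))) := by ring
          _ ≤ _ := mul_le_of_le_one_right (by positivity) h3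
      exact_mod_cast h4
    · intro v y
      refine (sum_le_card_nsmul _ _ (1 / (width k : ℝ)) fun p _ => kernel_le k _).trans ?_
      rw [nsmul_eq_mul]
      refine mul_le_of_le_one_left (by positivity) ?_
      exact_mod_cast hcard v
    · have : η * width k / 4 * (1 / width k) = η / 4 := by field_simp
      rw [this]; linarith
    · refine le_trans (le_of_eq ?_) (h z.1 z.2)
      rw [← sum_fiberwise_of_maps_to (g := g) (t := univ) (fun p _ => mem_univ _)]
      refine sum_congr rfl fun v _ => ?_
      simp only [Z, filter_filter]
      rw [sum_comm, sum_div]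
      rfl

/-! ### Fixing all levels -/

/-- The deterministic time reserved for delays before position `p`: a slot of length `width j` for
each complete block of `width j ^ 2` positions, for each level `1 ≤ j ≤ k`. -/
def drift (k p : ℕ) : ℕ := ∑ j ∈ range k, width (j + 1) * (p / width (j + 1) ^ 2)

/-- The proportion of time reserved for level `j` is `1 / width j ≤ 2⁻ʲ`, hence at most `1` over all
levels. -/
theorem drift_le (k p : ℕ) : drift k p ≤ p := by
  have h : 2 ^ k * drift k p + p ≤ 2 ^ k * p := by
    induction k with
    | zero => simp [drift]
    | succ k ih =>
      have h1 : drift (k + 1) p = drift k p + width (k + 1) * (p / width (k + 1) ^ 2) :=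
        sum_range_succ _ _
      have h2 : 2 ^ (k + 1) ≤ width (k + 1) := by
        unfold width
        calc 2 ^ (k + 1) ≤ 16 ^ (k + 1) := Nat.pow_le_pow_left (by norm_num) _
          _ ≤ _ := Nat.pow_le_pow_right (by norm_num) (by omega)
      have h3 : 2 ^ (k + 1) * (width (k + 1) * (p / width (k + 1) ^ 2)) ≤ p := by
        calc _ ≤ width (k + 1) * (width (k + 1) * (p / width (k + 1) ^ 2)) :=
              Nat.mul_le_mul_right _ h2
          _ = width (k + 1) ^ 2 * (p / width (k + 1) ^ 2) := by ring
          _ ≤ p := Nat.mul_div_le _ _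
      rw [h1, mul_add]
      rw [pow_succ] at h3 ⊢
      linarith
  exact Nat.le_of_mul_le_mul_left (by omega) (show 0 < 2 ^ k by positivity)

open Classical in
/-- Choosing the delays of the levels `k, k - 1, …, 1` in turn yields a total delay `f`. Together
with the reserved time `drift k` it never decreases along a path, so that packets move forward,
and the load smoothed by the level `0` kernel alone is at most `cap 0 = 2`. -/
theorem exists_delay {n D : ℕ} {E : Type*} (edge : Fin n × Fin D → E)
    (hinj : ∀ i p p', edge (i, p) = edge (i, p') → p = p') (k : ℕ) (a : Fin n × Fin D → ℤ)
    (h : ∀ e t, ∑ p with edge p = e, kernel k (t - a p) ≤ cap k) :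
    ∃ f : Fin n → ℕ → ℕ, (∀ i p, f i p + drift k p ≤ f i (p + 1) + drift k (p + 1)) ∧
      (∀ i p, f i p ≤ 2 * width k) ∧
      ∀ e t, ∑ p with edge p = e, kernel 0 (t - a p - (f p.1 p.2 : ℕ)) ≤ cap 0 := by
  induction k generalizing a with
  | zero => exact ⟨fun _ _ => 0, by simp [drift], by simp, by simpa using h⟩
  | succ k ih =>
    set w := width (k + 1) with hw
    have hws := width_succ k
    have hwpos : 0 < w := width_pos _
    have hlt : ∀ p : Fin D, (p : ℕ) / w ^ 2 < D := fun p => (Nat.div_le_self _ _).trans_lt p.2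
    obtain ⟨x, hx⟩ := step edge (fun p => (p.1, (⟨(p.2 : ℕ) / w ^ 2, hlt p.2⟩ : Fin D))) k
      (by
        rintro ⟨i, p⟩ ⟨i', p'⟩ he hg
        obtain rfl : i = i' := (Prod.ext_iff.1 hg).1
        rw [hinj i p p' he])
      (by
        rintro ⟨i, q⟩
        refine (card_le_card_of_injOn (t := range (w ^ 2)) (fun p => (p.2 : ℕ) % w ^ 2) ?_ ?_).trans
          (card_range _).le
        · intro p _
          simpa using Nat.mod_lt _ (by positivity)
        · rintro ⟨j, p⟩ hp ⟨j', p'⟩ hp' hpp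
          simp only [coe_filter, mem_univ, true_and, Set.mem_ofPred_eq, Prod.mk.injEq,
            Fin.ext_iff] at hp hp' hpp
          ext1
          · exact Fin.ext (hp.1.trans hp'.1.symm)
          · refine Fin.ext ?_
            show (p : ℕ) = p'
            rw [← Nat.div_add_mod (p : ℕ) (w ^ 2), ← Nat.div_add_mod (p' : ℕ) (w ^ 2), hpp, hp.2,
              hp'.2])
      a h
    let xi : Fin n → ℕ → ℕ := fun i q => if hq : q < D then x (i, ⟨q, hq⟩) else 0
    have hxi : ∀ i q, xi i q < w := by
      intro i q
      simp only [xi]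
      split_ifs
      exacts [(x _).2, hwpos]
    have hxi' : ∀ p : Fin n × Fin D, xi p.1 ((p.2 : ℕ) / w ^ 2)
        = (x (p.1, (⟨(p.2 : ℕ) / w ^ 2, hlt p.2⟩ : Fin D)) : ℕ) := fun p => dif_pos (hlt p.2)
    obtain ⟨f, hf1, hf2, hf3⟩ := ih (fun p => a p + (xi p.1 ((p.2 : ℕ) / w ^ 2) : ℕ)) (by
      intro e t
      refine le_trans (le_of_eq (sum_congr rfl fun p _ => ?_)) (hx e t)
      rw [hxi']
      congr 1
      ring)
    refine ⟨fun i p => f i p + xi i (p / w ^ 2), fun i p => ?_, fun i p => ?_, fun e t => ?_⟩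
    · have h1 := hf1 i p
      have h2 : ∀ p, drift (k + 1) p = drift k p + w * (p / w ^ 2) := fun p => sum_range_succ _ _
      have h3 : xi i (p / w ^ 2) + w * (p / w ^ 2)
          ≤ xi i ((p + 1) / w ^ 2) + w * ((p + 1) / w ^ 2) := by
        rw [Nat.succ_div]
        split_ifs
        · -- At a block boundary the reserved slot of length `w` absorbs the change of delay.
          have := hxi i (p / w ^ 2)
          rw [mul_add, mul_one]
          omega
        · simp
      simp only [h2]
      omega
    · have h1 := hf2 i p
      have h2 := hxi i (p / w ^ 2)
      show f i p + xi i (p / w ^ 2) ≤ 2 * w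
      omega
    · refine le_trans (le_of_eq (sum_congr rfl fun p _ => ?_)) (hf3 e t)
      congr 1
      push_cast
      ring

end Routing

open scoped Finset in
/-- There is a universal constant `c` such that every routing
instance in which every path has exactly `D` edges and whose congestion is at
most `D` admits a schedule with makespan at most `c·D` and load at most `c`. -/
theorem exists_schedule_load_const_makespan_const_D :
    ∃ c : ℕ, ∀ (I : RInst) (D : ℕ), I.Valid →
      (∀ i, (I.path i).length = D) → I.congestion ≤ D →
      ∃ σ : Fin I.k → ℕ → ℕ, I.IsSchedule σ ∧ I.LoadLE σ c ∧
        I.CompletedBy σ (c * D) := by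
  classical
  refine ⟨200000, fun I D hvalid hlen hcong => ?_⟩
  let edge : Fin I.k × Fin D → I.E := fun p => (I.path p.1)[(p.2 : ℕ)]'(by rw [hlen]; exact p.2.2)
  have hinj : ∀ i p p', edge (i, p) = edge (i, p') → p = p' := fun i p p' h =>
    Fin.ext ((hvalid.2 i).getElem_inj_iff.1 h)
  have hcount : ∀ e, #{p | edge p = e} ≤ D := by
    intro e
    refine le_trans ?_ ((Finset.le_sup (f := fun e : I.E =>
      Nat.card {i : Fin I.k | e ∈ I.path i}) (Finset.mem_univ e)).trans hcong)
    rw [Nat.card_eq_fintype_card, Fintype.card_subtype]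
    refine Finset.card_le_card_of_injOn (fun p => p.1) ?_ ?_
    · intro p hp
      simp only [Finset.coe_filter, Finset.mem_univ, true_and, Set.mem_ofPred_eq] at hp ⊢
      rw [← hp]
      exact List.getElem_mem _
    · rintro ⟨i, p⟩ hp ⟨i', p'⟩ hp' hpp
      simp only [Finset.coe_filter, Finset.mem_univ, true_and, Set.mem_ofPred_eq] at hp hp' hpp
      subst hpp
      rw [hinj i p p' (hp.trans hp'.symm)]
  -- The top level has `D ≤ width K ≤ 65536 * D`: wide enough to spread the congestion `D` to load
  -- `1`, and still linear in `D`.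
  set K := Nat.log 16 D + 1 with hK
  have hDK : D ≤ Routing.width K := by
    refine (Nat.lt_pow_succ_log_self (by norm_num : 1 < 16) D).le.trans ?_
    exact Nat.pow_le_pow_right (by norm_num) (by omega)
  have hKD : 0 < D → Routing.width K ≤ 65536 * D := by
    intro hD
    have := Nat.pow_log_le_self 16 hD.ne'
    unfold Routing.width
    rw [hK, pow_add, pow_add]
    omega
  obtain ⟨f, hf1, hf2, hf3⟩ := Routing.exists_delay edge hinj K
    (fun p => ((p.2 : ℕ) : ℤ) + Routing.drift K p.2) (by
      intro e t
      refine (Finset.sum_le_card_nsmul _ _ _ fun p _ => Routing.kernel_le K _).trans ?_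
      have h1 : (0 : ℝ) < Routing.width K := by exact_mod_cast Routing.width_pos K
      have h2 : ((#{p | edge p = e} : ℕ) : ℝ) ≤ Routing.width K := by
        exact_mod_cast (hcount e).trans hDK
      rw [nsmul_eq_mul, mul_one_div]
      refine ((div_le_one h1).2 h2).trans ?_
      unfold Routing.cap
      have : (0 : ℝ) ≤ (1 / 2) ^ K := by positivity
      linarith)
  -- `τ i p` is the time at which packet `i` crosses the edge at position `p` of its path.
  let τ : Fin I.k → ℕ → ℕ := fun i p => p + Routing.drift K p + f i p
  have hτ : ∀ i, StrictMono (τ i) := fun i => strictMono_nat_of_lt_succ fun p => by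
    have := hf1 i p
    simp only [τ]
    omega
  have hτD : ∀ i p, p < D → τ i p < 200000 * D := by
    intro i p hp
    have h1 := hf2 i p
    have h2 := Routing.drift_le K p
    have h3 := hKD (by omega)
    simp only [τ]
    omega
  -- `σ i t` is the first position that packet `i` has not crossed before time `t`.
  have hσ : ∀ i t, ∃ m, m ≤ D ∧ (∀ p < m, τ i p < t) ∧ (m < D → t ≤ τ i m) := by
    intro i t
    have hex : ∃ m, D ≤ m ∨ t ≤ τ i m := ⟨D, Or.inl le_rfl⟩
    refine ⟨Nat.find hex, Nat.find_min' hex (Or.inl le_rfl), fun p hp => ?_, fun hm => ?_⟩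
    · have := Nat.find_min hex hp
      omega
    · have := Nat.find_spec hex
      omega
  choose σ hσD hσlt hσge using hσ
  have hcross : ∀ i t, σ i (t + 1) = σ i t + 1 → σ i t < D ∧ τ i (σ i t) = t := by
    intro i t h
    have h1 := hσD i (t + 1)
    have h2 := hσlt i (t + 1) (σ i t) (by omega)
    have h3 := hσge i t (by omega)
    omega
  refine ⟨σ, ⟨fun i => ?_, fun i t => ?_, fun i t => ?_⟩, fun e t => ?_, fun i => ?_⟩
  · by_contra h
    exact absurd (hσlt i 0 0 (Nat.pos_of_ne_zero h)) (by omega)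
  · have h1 : σ i t ≤ σ i (t + 1) := by
      by_contra! h
      have h2 := hσlt i t _ h
      have h3 := hσge i (t + 1) (h.trans_le (hσD i t))
      omega
    have h2 : σ i (t + 1) ≤ σ i t + 1 := by
      by_contra! h
      have h3 := hσlt i (t + 1) _ h
      have h4 := hσge i t (by have := hσD i (t + 1); omega)
      have h5 := hτ i (Nat.lt_succ_self (σ i t))
      simp only [Nat.succ_eq_add_one] at h5
      omega
    omega
  · rw [hlen]; exact hσD i t
  · have h1 : Nat.card {i : Fin I.k | I.Crosses σ i e t}
        ≤ #{p | edge p = e ∧ τ p.1 p.2 = t} := by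
      rw [Nat.card_eq_fintype_card, Fintype.card_subtype]
      refine le_trans (Finset.card_le_card (t := ({p | edge p = e ∧ τ p.1 p.2 = t} :
        Finset (Fin I.k × Fin D)).image fun p => p.1) ?_) Finset.card_image_le
      intro i hi
      simp only [Set.mem_ofPred_eq, Finset.mem_filter, Finset.mem_univ, true_and] at hi
      obtain ⟨hs, he⟩ := hi
      obtain ⟨h1, h2⟩ := hcross i t hs
      refine Finset.mem_image.2 ⟨(i, ⟨σ i t, h1⟩), ?_, rfl⟩
      simp only [Finset.mem_filter, Finset.mem_univ, true_and]
      exact ⟨(List.getElem?_eq_some_iff.1 he).2, h2⟩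
    -- A packet crossing `e` at time `t` contributes `kernel 0 0 = 1 / width 0` to a sum at most `2`.
    have h2 : (#{p | edge p = e ∧ τ p.1 p.2 = t} : ℝ) * (1 / Routing.width 0) ≤ 2 := by
      have h3 := hf3 e t
      rw [show Routing.cap 0 = 2 by norm_num [Routing.cap]] at h3
      refine le_trans ?_ h3
      rw [← nsmul_eq_mul, ← Finset.sum_const]
      have hsub : ({p | edge p = e ∧ τ p.1 p.2 = t} : Finset (Fin I.k × Fin D))
          ⊆ ({p | edge p = e} : Finset (Fin I.k × Fin D)) := by
        intro p hp
        simp only [Finset.mem_filter, Finset.mem_univ, true_and] at hp ⊢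
        exact hp.1
      refine le_trans (Finset.sum_le_sum fun p hp => ?_)
        (Finset.sum_le_sum_of_subset_of_nonneg hsub fun p _ _ => Routing.kernel_nonneg _ _)
      simp only [Finset.mem_filter, Finset.mem_univ, true_and] at hp
      have h0 : (t : ℤ) - (((p.2 : ℕ) : ℤ) + Routing.drift K p.2) - (f p.1 p.2 : ℕ) = 0 := by
        have := hp.2
        simp only [τ] at this
        omega
      rw [h0]
      have := Routing.width_pos 0
      simp [Routing.kernel, this]
    have h3 : (#{p | edge p = e ∧ τ p.1 p.2 = t} : ℝ) ≤ 8192 := by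
      have : (Routing.width 0 : ℝ) = 4096 := by norm_num [Routing.width]
      rw [this] at h2
      linarith
    have h4 : #{p | edge p = e ∧ τ p.1 p.2 = t} ≤ 8192 := by exact_mod_cast h3
    omega
  · rw [hlen]
    by_contra h
    have h1 : σ i (200000 * D) < D := lt_of_le_of_ne (hσD i _) h
    have h2 := hσge i _ h1
    have h3 := hτD i _ h1
    omega
end

section
/- There exists a universal constant c such that every routing instance in which every path has exactly D edges and whose congestion is at most D admits a schedule with makespan at most c·D and load at most c in which, additionally, every packet waits at most one time unit at each intermediate vertex of its path: for each packet i and each position p with 0 < p < |Pᵢ|, there is at most one time step t with σᵢ(t) = σᵢ(t+1) = p. -/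
namespace PacketRouting

open Finset

/-! ### The Local Lemma and a Chernoff bound -/

/-- Events depending on disjoint sets of coordinates are independent under the uniform measure on
`ι → α`, in counting form: exchanging the coordinates in `s` between two sample points is a
bijection from `(P ∩ Q) × Ω` to `P × Q`. -/
theorem card_indep {ι α : Type*} [Fintype ι] [DecidableEq ι] [Fintype α]
    (P Q : (ι → α) → Prop) [DecidablePred P] [DecidablePred Q] (s : Finset ι)
    (hP : ∀ ω ω', (∀ v ∈ s, ω v = ω' v) → (P ω ↔ P ω'))
    (hQ : ∀ ω ω', (∀ v, v ∉ s → ω v = ω' v) → (Q ω ↔ Q ω')) :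
    #{ω | P ω ∧ Q ω} * Fintype.card (ι → α) = #{ω | P ω} * #{ω | Q ω} := by
  classical
  rw [← Finset.card_univ, ← Finset.card_product, ← Finset.card_product]
  let f : (ι → α) × (ι → α) → (ι → α) × (ι → α) := fun x =>
    (fun v => if v ∈ s then x.1 v else x.2 v, fun v => if v ∈ s then x.2 v else x.1 v)
  have hff : ∀ x, f (f x) = x := by
    intro x
    ext v <;> simp only [f] <;> split_ifs <;> rfl
  have h1 : ∀ x, P (f x).1 ↔ P x.1 := fun x => hP _ _ (fun v hv => by simp [f, hv])
  have h2 : ∀ x, Q (f x).2 ↔ Q x.1 := fun x => hQ _ _ (fun v hv => by simp [f, hv])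
  refine Finset.card_bij' (fun x _ => f x) (fun x _ => f x) ?_ ?_
    (fun x _ => hff x) (fun x _ => hff x)
  · intro x hx
    simp only [mem_product, mem_filter, mem_univ, true_and, and_true] at hx ⊢
    exact ⟨(h1 x).2 hx.1, (h2 x).2 hx.2⟩
  · intro x hx
    simp only [mem_product, mem_filter, mem_univ, true_and, and_true] at hx ⊢
    refine ⟨(h1 x).2 hx.1, ?_⟩
    have := h2 (f x)
    rw [hff] at this
    exact this.1 hx.2

/-- The symmetric Lovász Local Lemma in the variable setting, in counting form: the events `A x`,
`x ∈ S`, are determined by the coordinates in `vbl x`, each has probability at most `1 / (4 d)`, and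
each shares coordinates with at most `d` events of `S` (itself included). -/
theorem lovasz_local {ι α X : Type*} [Fintype ι] [DecidableEq ι] [Fintype α] [Nonempty α]
    [DecidableEq X]
    (A : X → (ι → α) → Prop) (vbl : X → Finset ι)
    (hdep : ∀ x ω ω', (∀ v ∈ vbl x, ω v = ω' v) → (A x ω ↔ A x ω'))
    (S : Finset X) (d : ℕ) (hd : 0 < d)
    (hdeg : ∀ x ∈ S, #{y ∈ S | ¬ Disjoint (vbl x) (vbl y)} ≤ d)
    (hp : ∀ x ∈ S, 4 * d * Nat.card {ω // A x ω} ≤ Fintype.card (ι → α)) :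
    ∃ ω, ∀ x ∈ S, ¬ A x ω := by
  classical
  let G : Finset X → Finset (ι → α) := fun T => {ω | ∀ y ∈ T, ¬ A y ω}
  have hΩ : 0 < Fintype.card (ι → α) := Fintype.card_pos
  -- conditionally on avoiding the events of `T`, each event has probability at most `1 / (2 d)`
  have key : ∀ n : ℕ, ∀ T ⊆ S, #T = n → ∀ x ∈ S, 2 * d * #{ω ∈ G T | A x ω} ≤ #(G T) := by
    intro n
    induction n using Nat.strong_induction_on with
    | _ n ih =>
    intro T hT hTn x hx
    let T1 := {y ∈ T | ¬ Disjoint (vbl x) (vbl y)}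
    let T2 := {y ∈ T | Disjoint (vbl x) (vbl y)}
    have hT2 : T2 ⊆ T := filter_subset _ _
    have hsub : G T ⊆ G T2 := fun ω hω => by
      simp only [G, mem_filter, mem_univ, true_and] at hω ⊢
      exact fun y hy => hω y (hT2 hy)
    have hT1c : #T1 ≤ d := (card_le_card (filter_subset_filter _ hT)).trans (hdeg x hx)
    -- `A x` is independent of the events of `T2`
    have hnum : 4 * d * #{ω ∈ G T2 | A x ω} ≤ #(G T2) := by
      have hi := card_indep (A x) (fun ω => ∀ y ∈ T2, ¬ A y ω) (vbl x) (hdep x) (by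
        intro ω ω' h
        have : ∀ y ∈ T2, (A y ω ↔ A y ω') := fun y hy =>
          hdep y _ _ (fun v hv => h v (fun hv' => by
            have := (mem_filter.1 hy).2
            exact (Finset.disjoint_left.1 this) hv' hv))
        exact forall₂_congr (fun y hy => not_congr (this y hy)))
      have e1 : ({ω ∈ G T2 | A x ω} : Finset (ι → α)) =
          ({ω | A x ω ∧ ∀ y ∈ T2, ¬ A y ω} : Finset (ι → α)) := by
        ext ω; simp [G, and_comm]
      have hpx := hp x hx
      rw [Nat.card_eq_fintype_card, Fintype.card_subtype] at hpx
      rw [e1]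
      refine Nat.le_of_mul_le_mul_right ?_ hΩ
      rw [mul_assoc, hi, ← mul_assoc, mul_comm (#(G T2))]
      exact Nat.mul_le_mul_right _ hpx
    -- by induction, the at most `d` events of `T1` together remove at most half of `G T2`
    have hden : #(G T2) ≤ 2 * #(G T) := by
      by_cases h1 : T1 = ∅
      · have : T2 = T := by
          ext y
          simp only [T2, mem_filter, and_iff_left_iff_imp]
          intro hy
          by_contra hc
          have : y ∈ T1 := mem_filter.2 ⟨hy, hc⟩
          simp [h1] at this
        rw [this]; omega
      · obtain ⟨y0, hy0⟩ := nonempty_iff_ne_empty.2 h1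
        have hlt : #T2 < n := by
          rw [← hTn]
          apply card_lt_card
          refine ⟨hT2, fun h => ?_⟩
          have h3 := (mem_filter.1 (h (mem_filter.1 hy0).1)).2
          exact (mem_filter.1 hy0).2 h3
        have hcov : G T2 ⊆ G T ∪ T1.biUnion (fun y => {ω ∈ G T2 | A y ω}) := by
          intro ω hω
          simp only [mem_union, mem_biUnion, mem_filter]
          by_cases h : ω ∈ G T
          · exact Or.inl h
          · right
            simp only [G, mem_filter, mem_univ, true_and, not_forall, not_not] at h
            obtain ⟨y, hy, hA⟩ := h
            refine ⟨y, mem_filter.2 ⟨hy, fun hdis => ?_⟩, hω, hA⟩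
            simp only [G, mem_filter, mem_univ, true_and] at hω
            exact hω y (mem_filter.2 ⟨hy, hdis⟩) hA
        have hb : 2 * d * #(T1.biUnion (fun y => {ω ∈ G T2 | A y ω})) ≤ d * #(G T2) := by
          calc 2 * d * #(T1.biUnion (fun y => {ω ∈ G T2 | A y ω}))
              ≤ 2 * d * ∑ y ∈ T1, #{ω ∈ G T2 | A y ω} := Nat.mul_le_mul_left _ card_biUnion_le
            _ = ∑ y ∈ T1, 2 * d * #{ω ∈ G T2 | A y ω} := by rw [mul_sum]
            _ ≤ ∑ y ∈ T1, #(G T2) := sum_le_sum (fun y hy =>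
                ih _ hlt T2 (hT2.trans hT) rfl y (hT (mem_filter.1 hy).1))
            _ = #T1 * #(G T2) := by simp
            _ ≤ d * #(G T2) := Nat.mul_le_mul_right _ hT1c
        have hb' : 2 * #(T1.biUnion (fun y => {ω ∈ G T2 | A y ω})) ≤ #(G T2) := by
          refine Nat.le_of_mul_le_mul_left ?_ hd
          rw [← mul_assoc, mul_comm d 2]; exact hb
        have := (card_le_card hcov).trans (card_union_le _ _)
        omega
    have hmono : #{ω ∈ G T | A x ω} ≤ #{ω ∈ G T2 | A x ω} :=
      card_le_card (filter_subset_filter _ hsub)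
    have := Nat.mul_le_mul_left (4 * d) hmono
    have e : 4 * d * #{ω ∈ G T | A x ω} = 2 * (2 * d * #{ω ∈ G T | A x ω}) := by ring
    omega
  have pos : ∀ T : Finset X, T ⊆ S → 0 < #(G T) := by
    intro T
    induction T using Finset.induction_on with
    | empty => intro _; simpa [G] using hΩ
    | insert x T hx ih =>
      intro hT
      have hTS : T ⊆ S := (subset_insert _ _).trans hT
      have h0 := ih hTS
      have h1 := key _ T hTS rfl x (hT (mem_insert_self _ _))
      have h2 : G (insert x T) = {ω ∈ G T | ¬ A x ω} := by
        ext ω; simp [G, and_comm]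
      rw [h2]
      have h3 := card_filter_add_card_filter_not (s := G T) (fun ω => A x ω)
      have h4 : 2 * #{ω ∈ G T | A x ω} ≤ 2 * d * #{ω ∈ G T | A x ω} :=
        Nat.mul_le_mul_right _ (by omega)
      omega
  obtain ⟨ω, hω⟩ := card_pos.1 (pos S subset_rfl)
  exact ⟨ω, by simpa [G] using hω⟩

/-- Chernoff bound in counting form, for a sum of independent terms with values in `[0, m]` and total
mean at most `μ ≤ 3`. -/
theorem chernoff_count {K β : Type*} [Fintype K] [DecidableEq K] [Fintype β] [Nonempty β]
    (q : K → β → ℝ) {m μ ε : ℝ} (hm : 0 < m) (h0 : ∀ i x, 0 ≤ q i x) (hqm : ∀ i x, q i x ≤ m)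
    (hmean : ∑ i, (∑ x, q i x) / Fintype.card β ≤ μ) (hμ : μ ≤ 3) (hε : 0 < ε) (hε6 : ε ≤ 6) :
    (Nat.card {f : K → β // μ + ε < ∑ i, q i (f i)} : ℝ) ≤
      Real.exp (-(ε ^ 2 / (12 * m))) * Fintype.card (K → β) := by
  classical
  -- `l` minimizes the exponent `3 * l ^ 2 * m - l * ε`
  set l : ℝ := ε / (6 * m) with hl
  have hl0 : 0 < l := by positivity
  have hlm : l * m ≤ 1 := by rw [hl]; field_simp; linarith
  have hb0 : (0 : ℝ) < Fintype.card β := by exact_mod_cast Fintype.card_pos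
  rw [Nat.card_eq_fintype_card, Fintype.card_subtype]
  have hone : ∀ i, ∑ x, Real.exp (l * q i x) ≤
      Fintype.card β * Real.exp ((l + l ^ 2 * m) * ((∑ x, q i x) / Fintype.card β)) := by
    intro i
    calc ∑ x, Real.exp (l * q i x) ≤ ∑ x, (1 + (l + l ^ 2 * m) * q i x) := by
          refine sum_le_sum fun x _ => ?_
          have hx0 : 0 ≤ l * q i x := mul_nonneg hl0.le (h0 i x)
          have hx1 : l * q i x ≤ 1 := (mul_le_mul_of_nonneg_left (hqm i x) hl0.le).trans hlm
          have := (abs_le.1 (Real.abs_exp_sub_one_sub_id_le (abs_le.2 ⟨by linarith, hx1⟩))).2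
          have h2 : (l * q i x) ^ 2 ≤ l ^ 2 * m * q i x := by
            have := mul_le_mul_of_nonneg_left (hqm i x) (mul_nonneg (sq_nonneg l) (h0 i x))
            nlinarith
          nlinarith
      _ = Fintype.card β * ((l + l ^ 2 * m) * ((∑ x, q i x) / Fintype.card β) + 1) := by
          rw [sum_add_distrib, ← mul_sum]
          simp
          field_simp
          ring
      _ ≤ _ := by
          gcongr
          exact Real.add_one_le_exp _
  have hmark : (#{f : K → β | μ + ε < ∑ i, q i (f i)} : ℝ) ≤
      ∑ f : K → β, Real.exp (l * (∑ i, q i (f i)) - l * (μ + ε)) := by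
    rw [card_eq_sum_ones, Nat.cast_sum, sum_filter]
    refine sum_le_sum fun f _ => ?_
    split_ifs with h
    · simp only [Nat.cast_one]
      apply Real.one_le_exp
      nlinarith
    · positivity
  refine hmark.trans ?_
  have hfac : ∑ f : K → β, Real.exp (l * (∑ i, q i (f i)) - l * (μ + ε)) =
      Real.exp (-(l * (μ + ε))) * ∏ i, ∑ x, Real.exp (l * q i x) := by
    rw [Finset.prod_univ_sum, mul_sum, Fintype.piFinset_univ]
    refine sum_congr rfl fun f _ => ?_
    rw [← Real.exp_sum, ← Real.exp_add, mul_sum]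
    congr 1; ring
  rw [hfac]
  calc Real.exp (-(l * (μ + ε))) * ∏ i, ∑ x, Real.exp (l * q i x)
      ≤ Real.exp (-(l * (μ + ε))) * ∏ i,
        (Fintype.card β * Real.exp ((l + l ^ 2 * m) * ((∑ x, q i x) / Fintype.card β))) := by
        gcongr with i _
        exact hone i
    _ = Real.exp (-(l * (μ + ε)) + (l + l ^ 2 * m) * ∑ i, (∑ x, q i x) / Fintype.card β)
        * Fintype.card (K → β) := by
        rw [prod_mul_distrib, ← Real.exp_sum, ← mul_sum, Real.exp_add]
        simp
        ring
    _ ≤ _ := by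
        gcongr
        have hc : 0 < l + l ^ 2 * m := by positivity
        have h1 := mul_le_mul_of_nonneg_left hmean hc.le
        have h2 : l ^ 2 * m * μ ≤ l ^ 2 * m * 3 := by gcongr
        have h3 : l ^ 2 * m * 3 - l * ε = -(ε ^ 2 / (12 * m)) := by
          rw [hl]; field_simp; ring
        nlinarith

/-- Two distinct coordinates of a uniform element of `ι → α` are uniform on `α × α`: translating
these two coordinates preserves the sum, so it may be averaged over all translations. -/
theorem sum_two_coords {ι α : Type*} [Fintype ι] [DecidableEq ι] [Fintype α] [AddGroup α]
    (b b' : ι) (hb : b ≠ b') (F : α → α → ℝ) :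
    (∑ f : ι → α, F (f b) (f b')) / Fintype.card (ι → α) =
      (∑ x, ∑ y, F x y) / (Fintype.card α : ℝ) ^ 2 := by
  have hne : (Fintype.card α : ℝ) ≠ 0 := by
    have : 0 < Fintype.card α := Fintype.card_pos_iff.2 ⟨0⟩
    exact_mod_cast this.ne'
  have hne2 : (Fintype.card (ι → α) : ℝ) ≠ 0 := by
    have : 0 < Fintype.card (ι → α) := Fintype.card_pos_iff.2 ⟨0⟩
    exact_mod_cast this.ne'
  have hshift : ∀ x y : α, ∑ f : ι → α, F (f b) (f b') = ∑ f : ι → α, F (f b + x) (f b' + y) := by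
    intro x y
    have := Fintype.sum_equiv (Equiv.addRight (Pi.single b x + Pi.single b' y : ι → α))
      (fun f => F (f b + x) (f b' + y)) (fun f => F (f b) (f b')) (fun f => by simp [hb, hb.symm])
    exact this.symm
  have h : (Fintype.card α : ℝ) ^ 2 * ∑ f : ι → α, F (f b) (f b') =
      Fintype.card (ι → α) * ∑ x, ∑ y, F x y := by
    calc (Fintype.card α : ℝ) ^ 2 * ∑ f : ι → α, F (f b) (f b')
        = ∑ x : α, ∑ y : α, ∑ f : ι → α, F (f b + x) (f b' + y) := by
          simp_rw [← hshift]; simp [sq, mul_assoc]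
      _ = ∑ f : ι → α, ∑ x : α, ∑ y : α, F (f b + x) (f b' + y) := by
          exact (sum_congr rfl fun x _ => sum_comm).trans sum_comm
      _ = ∑ f : ι → α, ∑ x, ∑ y, F x y := by
          refine sum_congr rfl fun f _ => ?_
          rw [Fintype.sum_equiv (Equiv.addLeft (f b)) _ (fun x => ∑ y, F x y) (fun x => ?_)]
          exact Fintype.sum_equiv (Equiv.addLeft (f b')) _ _ (fun y => rfl)
      _ = _ := by simp
  field_simp
  linarith

/-! ### Fixing one level of random delays -/

/-- The random part of the delay of one level at position `p`, given by the values
`a b` attached to the blocks `[b * W, (b + 1) * W)` of positions: it involves only the values of the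
block of `p` and of the next block. -/
def extraDelay (u v : ℕ → ℕ) (W : ℕ) (a : ℕ → ℕ) (p : ℕ) : ℕ :=
  min (u p + a (p / W + 1)) (v p + a (p / W))

/-- If `g p` is the law of a random delay at position `p`, then `mixLaw L u v g p` is the law of that
delay plus an independent `extraDelay`, whose two block values are independent and uniform on
`{0, …, L - 1}`. -/
noncomputable def mixLaw (L : ℕ) (u v : ℕ → ℕ) (g : ℕ → ℤ → ℝ) (p : ℕ) (s : ℤ) : ℝ :=
  (∑ x : Fin L, ∑ y : Fin L, g p (s - (min (u p + (y : ℕ)) (v p + (x : ℕ)) : ℕ))) / (L : ℝ) ^ 2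

/-- For every position `p`, the function `g p` is a probability mass function on `ℤ`, concentrated on
`[0, R)`, all of whose values are at most `m`. -/
structure IsLaw (g : ℕ → ℤ → ℝ) (R : ℕ) (m : ℝ) : Prop where
  nonneg : ∀ p s, 0 ≤ g p s
  le : ∀ p s, g p s ≤ m
  supp : ∀ p s, g p s ≠ 0 → 0 ≤ s ∧ s < R
  mass : ∀ p, ∑ s ∈ Ico (0 : ℤ) R, g p s = 1

theorem IsLaw.sum_le {g : ℕ → ℤ → ℝ} {R : ℕ} {m : ℝ} (hg : IsLaw g R m) (p : ℕ)
    {ι : Type*} (T : Finset ι) (f : ι → ℤ) (hf : Function.Injective f) :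
    ∑ x ∈ T, g p (f x) ≤ 1 := by
  classical
  rw [← hg.mass p, ← sum_image (f := fun s => g p s) (fun x _ y _ h => hf h)]
  rw [← sum_filter_ne_zero]
  refine sum_le_sum_of_subset_of_nonneg ?_ (fun s _ _ => hg.nonneg p s)
  intro s hs
  have := hg.supp p s (mem_filter.1 hs).2
  simpa using this

theorem IsLaw.sum_eq {g : ℕ → ℤ → ℝ} {R : ℕ} {m : ℝ} (hg : IsLaw g R m) (p : ℕ) (T : Finset ℤ)
    (hT : Ico (0 : ℤ) R ⊆ T) : ∑ x ∈ T, g p x = 1 := by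
  classical
  rw [← hg.mass p]
  refine (sum_subset hT fun s _ hs => ?_).symm
  by_contra h
  exact hs (by simpa using hg.supp p s h)

theorem min_lt_of {u v L x y : ℕ} (h : u = 0 ∨ v = 0) (hx : x < L) (hy : y < L) :
    min (u + y) (v + x) < L := by
  omega

/-- Adding an `extraDelay` makes every atom at most `2 / L`, whatever the other delay: a minimum of two
quantities equals one of them, and each of the two is uniform on `L` consecutive integers. -/
theorem IsLaw.mix {g : ℕ → ℤ → ℝ} {R : ℕ} {m : ℝ} (hg : IsLaw g R m) {L : ℕ} (hL : 0 < L)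
    {u v : ℕ → ℕ} (huv : ∀ p, u p = 0 ∨ v p = 0) :
    IsLaw (mixLaw L u v g) (R + L) (2 / L) := by
  have hL' : (0 : ℝ) < L := by exact_mod_cast hL
  refine ⟨fun p s => ?_, fun p s => ?_, fun p s hs => ?_, fun p => ?_⟩
  · exact div_nonneg (sum_nonneg fun _ _ => sum_nonneg fun _ _ => hg.nonneg _ _) (by positivity)
  · have h1 : ∑ x : Fin L, ∑ y : Fin L, g p (s - (min (u p + (y : ℕ)) (v p + (x : ℕ)) : ℕ)) ≤
        ∑ x : Fin L, ∑ y : Fin L, (g p (s - u p - (y : ℕ)) + g p (s - v p - (x : ℕ))) := by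
      refine sum_le_sum fun x _ => sum_le_sum fun y _ => ?_
      rcases min_choice (u p + (y : ℕ)) (v p + (x : ℕ)) with h | h <;> rw [h]
      · have := hg.nonneg p (s - v p - (x : ℕ))
        have e : s - ((u p + (y : ℕ) : ℕ) : ℤ) = s - u p - (y : ℕ) := by push_cast; ring
        rw [e]; linarith
      · have := hg.nonneg p (s - u p - (y : ℕ))
        have e : s - ((v p + (x : ℕ) : ℕ) : ℤ) = s - v p - (x : ℕ) := by push_cast; ring
        rw [e]; linarith
    have hinj : ∀ c : ℤ, Function.Injective (fun y : Fin L => c - (y : ℕ)) := by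
      intro c y y' h
      have : ((y : ℕ) : ℤ) = (y' : ℕ) := by simpa using h
      exact Fin.ext (by exact_mod_cast this)
    have h2 : ∑ x : Fin L, ∑ y : Fin L, (g p (s - u p - (y : ℕ)) + g p (s - v p - (x : ℕ))) ≤
        2 * L := by
      simp_rw [sum_add_distrib]
      have a1 := hg.sum_le p univ _ (hinj (s - u p))
      have a2 := hg.sum_le p univ _ (hinj (s - v p))
      simp only [sum_const, card_univ, Fintype.card_fin, nsmul_eq_mul, ← mul_sum]
      nlinarith
    unfold mixLaw
    rw [div_le_div_iff₀ (by positivity) hL']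
    nlinarith
  · have : ∑ x : Fin L, ∑ y : Fin L, g p (s - (min (u p + (y : ℕ)) (v p + (x : ℕ)) : ℕ)) ≠ 0 := by
      intro h; apply hs; unfold mixLaw; rw [h, zero_div]
    obtain ⟨x, -, hx⟩ := exists_ne_zero_of_sum_ne_zero this
    obtain ⟨y, -, hy⟩ := exists_ne_zero_of_sum_ne_zero hx
    have h1 := hg.supp _ _ hy
    have h2 := min_lt_of (huv p) x.2 y.2
    push_cast
    omega
  · unfold mixLaw
    rw [← sum_div, sum_comm]
    have : ∀ x ∈ (univ : Finset (Fin L)), ∑ s ∈ Ico (0 : ℤ) ((R + L : ℕ) : ℤ), ∑ y : Fin L,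
        g p (s - (min (u p + (y : ℕ)) (v p + (x : ℕ)) : ℕ)) = L := by
      intro x _
      rw [sum_comm]
      have : ∀ y ∈ (univ : Finset (Fin L)), ∑ s ∈ Ico (0 : ℤ) ((R + L : ℕ) : ℤ),
        g p (s - (min (u p + (y : ℕ)) (v p + (x : ℕ)) : ℕ)) = 1 := by
        intro y _
        have h2 := min_lt_of (huv p) x.2 y.2
        generalize min (u p + (y : ℕ)) (v p + (x : ℕ)) = c at h2
        rw [← sum_image (f := fun s => g p s) (g := fun s : ℤ => s - (c : ℕ))
          (fun a _ b _ h => by simpa using h)]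
        apply hg.sum_eq
        intro s hs
        rw [mem_Ico] at hs
        exact mem_image.2 ⟨s + c, by rw [mem_Ico]; push_cast; omega, by ring⟩
      rw [sum_congr rfl this]; simp
    rw [sum_congr rfl this]
    simp
    field_simp

section Step
variable {E : Type*} {k D : ℕ}

/-- If at all times the expected load of every edge is at most `μ`, then few packets have positive
probability of crossing `e` at time `t`: each of them contributes its whole unit mass to the
expected loads of `e` in the `2 R` steps around `t`. -/
theorem card_active_le (U : E → Finset (Fin k)) (pos : E → Fin k → ℕ)
    {g : ℕ → ℤ → ℝ} {R : ℕ} {m : ℝ} (hg : IsLaw g R m) (N : Fin k → ℕ → ℤ) {μ : ℝ}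
    (hμ : ∀ e t, ∑ i ∈ U e, g (pos e i) (t - N i (pos e i)) ≤ μ) (e : E) (t : ℤ) :
    (#{i ∈ U e | 0 ≤ t - N i (pos e i) ∧ t - N i (pos e i) < R} : ℝ) ≤ 2 * R * μ := by
  have h1 : ∀ i ∈ ({i ∈ U e | 0 ≤ t - N i (pos e i) ∧ t - N i (pos e i) < R} : Finset (Fin k)),
      ∑ t' ∈ Ico (t - R) (t + R), g (pos e i) (t' - N i (pos e i)) = 1 := by
    intro i hi
    have hi := (mem_filter.1 hi).2
    rw [← sum_image (f := fun s => g (pos e i) s) (g := fun s : ℤ => s - N i (pos e i))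
          (fun a _ b _ h => by simpa using h)]
    apply hg.sum_eq
    intro s hs
    rw [mem_Ico] at hs
    exact mem_image.2 ⟨s + N i (pos e i), by rw [mem_Ico]; omega, by ring⟩
  calc (#{i ∈ U e | 0 ≤ t - N i (pos e i) ∧ t - N i (pos e i) < R} : ℝ)
      = ∑ i ∈ U e with 0 ≤ t - N i (pos e i) ∧ t - N i (pos e i) < R,
        ∑ t' ∈ Ico (t - R) (t + R), g (pos e i) (t' - N i (pos e i)) := by
        rw [sum_congr rfl h1]; simp
    _ ≤ ∑ i ∈ U e, ∑ t' ∈ Ico (t - R) (t + R), g (pos e i) (t' - N i (pos e i)) :=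
        sum_le_sum_of_subset_of_nonneg (filter_subset _ _)
          (fun i _ _ => sum_nonneg fun _ _ => hg.nonneg _ _)
    _ = ∑ t' ∈ Ico (t - R) (t + R), ∑ i ∈ U e, g (pos e i) (t' - N i (pos e i)) := sum_comm
    _ ≤ ∑ t' ∈ Ico (t - R) (t + R), μ := sum_le_sum fun t' _ => hμ e t'
    _ = 2 * R * μ := by
        simp
        have : (t + R - (t - R)).toNat = 2 * R := by omega
        left; norm_cast; omega

/-- Fixing the block values of one level. Packet `i ∈ U e` has `e` as the `pos e i`-th edge of its path,
and crosses its `p`-th edge at time `N i p` plus a random delay. If with the random block values the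
expected load of every edge at every time is at most `μ`, then the block values can be fixed so
that, with respect to the remaining delay of law `g`, all expected loads are at most `μ + ε`.

The Local Lemma applies: by `chernoff_count` a single expected load is too large only with
exponentially small probability, while an event depends on at most `12 (R + L)` block values, and a
block value influences at most `2 W (R + L)` events. -/
theorem refine_level (U : E → Finset (Fin k)) (pos : E → Fin k → ℕ)
    (hpos : ∀ e, ∀ i ∈ U e, pos e i < D)
    (hinj : ∀ e e' i, i ∈ U e → i ∈ U e' → pos e i = pos e' i → e = e')
    {g : ℕ → ℤ → ℝ} {R : ℕ} {m : ℝ} (hm : 0 < m) (hg : IsLaw g R m) {L W : ℕ} (hL : 0 < L)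
    (hW : 0 < W)
    {u v : ℕ → ℕ} (huv : ∀ p, u p = 0 ∨ v p = 0) (N : Fin k → ℕ → ℤ) {μ ε : ℝ}
    (hμ : ∀ e t, ∑ i ∈ U e, mixLaw L u v g (pos e i) (t - N i (pos e i)) ≤ μ)
    (hμ3 : μ ≤ 3) (hε : 0 < ε) (hε6 : ε ≤ 6)
    (hnum : 4 * ((24 * W * (R + L) ^ 2 : ℕ) : ℝ) * Real.exp (-(ε ^ 2 / (12 * m))) ≤ 1) :
    ∃ a : Fin k → ℕ → ℕ, (∀ i b, a i b < L) ∧ ∀ e t, ∑ i ∈ U e,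
      g (pos e i) (t - (N i (pos e i) + extraDelay u v W (a i) (pos e i))) ≤ μ + ε := by
  classical
  have : NeZero L := ⟨Nat.ne_of_gt hL⟩
  -- the blocks `p / W` and `p / W + 1` with `p < D` stay below `D + 2`, so reducing modulo `D + 2` is harmless
  let bl : ℕ → Fin (D + 2) := fun b => Fin.ofNat (D + 2) b
  have hbl : ∀ b, b < D + 2 → ((bl b : Fin (D + 2)) : ℕ) = b := fun b hb => Nat.mod_eq_of_lt hb
  have hblock : ∀ p, p < D → p / W < D := fun p hp => (Nat.div_le_self _ _).trans_lt hp
  let sh : (Fin k × Fin (D + 2) → Fin L) → Fin k → ℕ → ℕ := fun ω i b => (ω (i, bl b) : ℕ)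
  -- `X e t ω` is the expected load of `e` at time `t` once the block values are `ω`
  let X : E → ℤ → (Fin k × Fin (D + 2) → Fin L) → ℝ := fun e t ω => ∑ i ∈ U e,
      g (pos e i) (t - (N i (pos e i) + extraDelay u v W (sh ω i) (pos e i)))
  -- the packets that may cross an edge at a given time, for some choice of the block values
  let act : E × ℤ → Finset (Fin k) := fun x =>
    {i ∈ U x.1 | 0 ≤ x.2 - N i (pos x.1 i) ∧ x.2 - N i (pos x.1 i) < (R + L : ℕ)}
  let vbl : E × ℤ → Finset (Fin k × Fin (D + 2)) := fun x => (act x).biUnion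
    fun i => {(i, bl (pos x.1 i / W)), (i, bl (pos x.1 i / W + 1))}
  have hzero : ∀ e t i ω, i ∈ U e → i ∉ act (e, t) →
      g (pos e i) (t - (N i (pos e i) + extraDelay u v W (sh ω i) (pos e i))) = 0 := by
    intro e t i ω hi hia
    by_contra h
    have h1 := hg.supp _ _ h
    have h2 : extraDelay u v W (sh ω i) (pos e i) < L :=
      min_lt_of (huv _) (Fin.is_lt _) (Fin.is_lt _)
    exact hia (mem_filter.2 ⟨hi, by dsimp only; push_cast; omega⟩)
  -- only finitely many pairs of an edge and a time can have positive load
  have hfin : {x : E × ℤ | (act x).Nonempty}.Finite := by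
    have hsub : {x : E × ℤ | (act x).Nonempty} ⊆ ⋃ i : Fin k, {x : E × ℤ | i ∈ act x} := by
      rintro x ⟨i, hi⟩; exact Set.mem_iUnion.2 ⟨i, hi⟩
    refine (Set.finite_iUnion fun i => ?_).subset hsub
    refine Set.Finite.of_finite_image (f := fun x => (pos x.1 i, x.2 - N i (pos x.1 i)))
      (((range D ×ˢ Ico (0 : ℤ) (R + L : ℕ)).finite_toSet).subset ?_) ?_
    · rintro _ ⟨x, hx, rfl⟩
      have hx := mem_filter.1 hx
      simp only [coe_product, Set.mem_prod, mem_coe, mem_range, mem_Ico]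
      exact ⟨hpos _ _ hx.1, hx.2⟩
    · rintro ⟨e, t⟩ hx ⟨e', t'⟩ hx' h
      simp only [Prod.mk.injEq] at h
      have := hinj e e' i (mem_filter.1 hx).1 (mem_filter.1 hx').1 h.1
      subst this
      simp at h; rw [h]
  let S := hfin.toFinset
  have hcardact : ∀ x, #(act x) ≤ 6 * (R + L) := by
    intro x
    have h1 := card_active_le U pos (hg.mix hL huv) N hμ x.1 x.2
    have h2 : (#(act x) : ℝ) ≤ ((6 * (R + L) : ℕ) : ℝ) := by
      refine h1.trans ?_
      push_cast
      have : (0 : ℝ) ≤ R + L := by positivity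
      nlinarith
    exact_mod_cast h2
  have hvbl : ∀ x, #(vbl x) ≤ 12 * (R + L) := by
    intro x
    calc #(vbl x) ≤ #(act x) * 2 := card_biUnion_le_card_mul _ _ _ fun i _ => card_le_two
      _ ≤ _ := by have := hcardact x; omega
  have hone : ∀ w : Fin k × Fin (D + 2), #{y ∈ S | w ∈ vbl y} ≤ 2 * W * (R + L) := by
    rintro ⟨i, b⟩
    have hmem : ∀ y, (i, b) ∈ vbl y → i ∈ act y ∧
        (pos y.1 i / W = b ∨ pos y.1 i / W + 1 = b) := by
      intro y hy
      obtain ⟨j, hj, hjb⟩ := mem_biUnion.1 hy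
      simp only [mem_insert, mem_singleton, Prod.mk.injEq] at hjb
      have hij : i = j := by tauto
      subst hij
      have hb := hblock _ (hpos _ _ (mem_filter.1 hj).1)
      refine ⟨hj, ?_⟩
      rcases hjb with h | h
      · left; rw [h.2, hbl _ (by omega)]
      · right; rw [h.2, hbl _ (by omega)]
    have hc : #(Ico ((b - 1) * W) ((b + 1) * W) ×ˢ Ico (0 : ℤ) (R + L : ℕ)) ≤ 2 * W * (R + L) := by
      rw [card_product, Nat.card_Ico, Int.card_Ico]
      have h1 : ((b : ℕ) + 1) * W - (b - 1) * W ≤ 2 * W := by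
        rw [← Nat.sub_mul]
        exact Nat.mul_le_mul_right _ (by omega)
      have h2 : (((R + L : ℕ) : ℤ) - 0).toNat = R + L := by omega
      rw [h2]
      exact Nat.mul_le_mul_right _ h1
    refine le_trans ?_ hc
    refine card_le_card_of_injOn (fun y => (pos y.1 i, y.2 - N i (pos y.1 i))) ?_ ?_
    · intro y hy
      obtain ⟨h1, h2⟩ := hmem y (mem_filter.1 hy).2
      have h3 := (mem_filter.1 h1).2
      simp only [coe_product, Set.mem_prod, mem_coe, mem_Ico]
      refine ⟨?_, h3⟩
      have e1 := Nat.div_add_mod (pos y.1 i) W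
      have e2 := Nat.mod_lt (pos y.1 i) hW
      constructor
      · have : (b : ℕ) - 1 ≤ pos y.1 i / W := by
          clear e1 e2 h3; generalize pos y.1 i / W = z at h2 ⊢; omega
        exact (Nat.mul_le_mul_right W this).trans (Nat.div_mul_le_self _ _)
      · have : pos y.1 i / W < b + 1 := by
          clear e1 e2 h3; generalize pos y.1 i / W = z at h2 ⊢; omega
        exact (Nat.div_lt_iff_lt_mul hW).1 this
    · rintro ⟨e, t⟩ hx ⟨e', t'⟩ hx' h
      have hx := hmem _ (mem_filter.1 hx).2
      have hx' := hmem _ (mem_filter.1 hx').2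
      simp only [Prod.mk.injEq] at h
      have := hinj e e' i (mem_filter.1 hx.1).1 (mem_filter.1 hx'.1).1 h.1
      subst this
      simp at h; rw [h]
  suffices hgood : ∃ ω, ∀ x ∈ S, ¬ (μ + ε < X x.1 x.2 ω) by
    obtain ⟨ω, hω⟩ := hgood
    refine ⟨sh ω, fun i b => Fin.is_lt _, fun e t => ?_⟩
    by_cases h : (act (e, t)).Nonempty
    · exact not_lt.1 (hω (e, t) (hfin.mem_toFinset.2 h))
    · rw [sum_eq_zero fun i hi => hzero e t i ω hi fun hia => h ⟨i, hia⟩]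
      have hμ0 : 0 ≤ μ := (sum_nonneg fun i _ => (hg.mix hL huv).nonneg _ _).trans (hμ e t)
      linarith
  refine lovasz_local (X := E × ℤ) (fun x ω => μ + ε < X x.1 x.2 ω) vbl ?_ S
    (24 * W * (R + L) ^ 2) (by positivity) ?_ ?_
  · rintro ⟨e, t⟩ ω ω' h
    have : X e t ω = X e t ω' := by
      refine sum_congr rfl fun i hi => ?_
      by_cases hia : i ∈ act (e, t)
      · have h1 := h (i, bl (pos e i / W)) (mem_biUnion.2 ⟨i, hia, by simp⟩)
        have h2 := h (i, bl (pos e i / W + 1)) (mem_biUnion.2 ⟨i, hia, by simp⟩)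
        simp only [extraDelay, sh, h1, h2]
      · rw [hzero e t i ω hi hia, hzero e t i ω' hi hia]
    simp only [this]
  · intro x _
    have hsub : ({y ∈ S | ¬ Disjoint (vbl x) (vbl y)} : Finset (E × ℤ)) ⊆
        (vbl x).biUnion fun w => {y ∈ S | w ∈ vbl y} := by
      intro y hy
      obtain ⟨hyS, hy⟩ := mem_filter.1 hy
      obtain ⟨w, hw, hw'⟩ := not_disjoint_iff.1 hy
      exact mem_biUnion.2 ⟨w, hw, mem_filter.2 ⟨hyS, hw'⟩⟩
    calc _ ≤ _ := card_le_card hsub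
      _ ≤ #(vbl x) * (2 * W * (R + L)) := card_biUnion_le_card_mul _ _ _ fun w _ => hone w
      _ ≤ 12 * (R + L) * (2 * W * (R + L)) := Nat.mul_le_mul_right _ (hvbl x)
      _ = _ := by ring
  · rintro ⟨e, t⟩ _
    let q : Fin k → (Fin (D + 2) → Fin L) → ℝ := fun i f => if i ∈ U e then
      g (pos e i) (t - (N i (pos e i) + extraDelay u v W (fun b => (f (bl b) : ℕ)) (pos e i)))
      else 0
    have hXq : ∀ ω, X e t ω = ∑ i, q i (fun b => ω (i, b)) := by
      intro ω
      simp only [X, q, sh]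
      rw [← sum_filter]; simp
    have hch := chernoff_count q (μ := μ) (ε := ε) hm ?_ ?_ ?_ hμ3 hε hε6
    · have hcard : Nat.card {ω : Fin k × Fin (D + 2) → Fin L // μ + ε < X e t ω} =
          Nat.card {f : Fin k → Fin (D + 2) → Fin L // μ + ε < ∑ i, q i (f i)} := by
        refine Nat.card_congr ((Equiv.curry _ _ _).subtypeEquiv fun ω => ?_)
        rw [hXq]; rfl
      have hcard2 : Fintype.card (Fin k × Fin (D + 2) → Fin L) =
          Fintype.card (Fin k → Fin (D + 2) → Fin L) := Fintype.card_congr (Equiv.curry _ _ _)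
      rw [← hcard, ← hcard2] at hch
      have hC : (0 : ℝ) ≤ (Fintype.card (Fin k × Fin (D + 2) → Fin L) : ℝ) := by positivity
      have h4 := mul_le_mul_of_nonneg_left hch
        (show (0 : ℝ) ≤ 4 * ((24 * W * (R + L) ^ 2 : ℕ) : ℝ) by positivity)
      have h5 := mul_le_mul_of_nonneg_right hnum hC
      have h6 : 4 * ((24 * W * (R + L) ^ 2 : ℕ) : ℝ) *
          (Nat.card {ω : Fin k × Fin (D + 2) → Fin L // μ + ε < X e t ω} : ℝ) ≤
          (Fintype.card (Fin k × Fin (D + 2) → Fin L) : ℝ) := by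
        refine h4.trans (le_trans (le_of_eq ?_) (h5.trans (le_of_eq (one_mul _))))
        ring
      exact_mod_cast h6
    · intro i f; simp only [q]; split_ifs
      · exact hg.nonneg _ _
      · rfl
    · intro i f; simp only [q]; split_ifs
      · exact hg.le _ _
      · exact hm.le
    · refine le_trans (le_of_eq ?_) (hμ e t)
      rw [← sum_filter_add_sum_filter_not univ (fun i => i ∈ U e)]
      have hz : ∑ i with i ∉ U e, (∑ f, q i f) / (Fintype.card (Fin (D + 2) → Fin L) : ℝ) = 0 :=
        sum_eq_zero fun i hi => by
          have := (mem_filter.1 hi).2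
          simp [q, this]
      rw [hz, add_zero]
      simp only [filter_mem_eq_inter, univ_inter]
      refine sum_congr rfl fun i hi => ?_
      have hb := hblock _ (hpos _ _ hi)
      have hne : bl (pos e i / W) ≠ bl (pos e i / W + 1) := by
        intro h
        have := congrArg Fin.val h
        rw [hbl _ (by omega), hbl _ (by omega)] at this
        omega
      have h2 := sum_two_coords (α := Fin L) _ _ hne (fun x y => g (pos e i)
        (t - N i (pos e i) - (min (u (pos e i) + (y : ℕ)) (v (pos e i) + (x : ℕ)) : ℕ)))
      simp only [Fintype.card_fin] at h2
      unfold mixLaw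
      rw [← h2]
      congr 1
      refine sum_congr rfl fun f _ => ?_
      simp only [q, hi, if_true, extraDelay, sub_sub]
end Step

/-! ### The hierarchy of delays -/

/-- The range of the random block values of level `n`, a power of `16` with offset `n0`. -/
def lev (n0 n : ℕ) : ℕ := 16 ^ (n0 + n)

/-- The length of the blocks of level `n`; each block contains `2 * lev n0 n` waiting positions of
level `n`. -/
def blk (n0 n : ℕ) : ℕ := 2 ^ (n + 2) * lev n0 n

/-- The number of waiting positions of level `n` in `[1, p]`. These are the positions of 2-adic valuation
exactly `n`, so that no position serves two levels. -/
def cnt (n p : ℕ) : ℕ := (p + 2 ^ n) / 2 ^ (n + 1)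

/-- The delay of level `n` at position `p`, nondecreasing in `p` and growing only at waiting positions of
level `n`. It equals `b * L + a b` at the start of block `b`, where `L = lev n0 n`, and inside that
block it grows at every waiting position until it reaches `(b + 1) * L + a (b + 1)`. The truncated
subtraction is a true one since `cnt n p ≥ 2 * b * L` in block `b`. -/
def levelDelay (n0 n : ℕ) (a : ℕ → ℕ) (p : ℕ) : ℕ :=
  min ((p / blk n0 n + 1) * lev n0 n + a (p / blk n0 n + 1))
    (cnt n p - p / blk n0 n * lev n0 n + a (p / blk n0 n))

/-- The function `u` for which the random part of `levelDelay` is an `extraDelay`. -/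
def hiGap (n0 n p : ℕ) : ℕ :=
  (p / blk n0 n + 1) * lev n0 n - (cnt n p - p / blk n0 n * lev n0 n)

/-- The function `v` for which the random part of `levelDelay` is an `extraDelay`. -/
def loGap (n0 n p : ℕ) : ℕ :=
  (cnt n p - p / blk n0 n * lev n0 n) - (p / blk n0 n + 1) * lev n0 n

/-- The deterministic part of `levelDelay`: its value when all block values are `0`. -/
def baseDelay (n0 n p : ℕ) : ℕ :=
  min ((p / blk n0 n + 1) * lev n0 n) (cnt n p - p / blk n0 n * lev n0 n)

theorem levelDelay_eq (n0 n : ℕ) (a : ℕ → ℕ) (p : ℕ) :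
    levelDelay n0 n a p = baseDelay n0 n p +
      extraDelay (hiGap n0 n) (loGap n0 n) (blk n0 n) a p := by
  unfold levelDelay baseDelay extraDelay hiGap loGap
  omega

theorem gap_zero (n0 n p : ℕ) : hiGap n0 n p = 0 ∨ loGap n0 n p = 0 := by
  unfold hiGap loGap; omega

theorem lev_pos (n0 n : ℕ) : 0 < lev n0 n := by unfold lev; positivity

theorem blk_pos (n0 n : ℕ) : 0 < blk n0 n := by
  have := lev_pos n0 n
  unfold blk; positivity

theorem cnt_succ (n p : ℕ) :
    cnt n (p + 1) = cnt n p + if 2 ^ (n + 1) ∣ p + 2 ^ n + 1 then 1 else 0 := by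
  unfold cnt
  rw [show p + 1 + 2 ^ n = (p + 2 ^ n) + 1 by ring, Nat.succ_div]

theorem cnt_mono (n : ℕ) : Monotone (cnt n) := fun p q h => by
  unfold cnt; exact Nat.div_le_div_right (by omega)

theorem cnt_mul_blk (n0 n b : ℕ) : cnt n (b * blk n0 n) = 2 * (b * lev n0 n) := by
  unfold cnt blk
  have h : b * (2 ^ (n + 2) * lev n0 n) + 2 ^ n = 2 ^ n + 2 ^ (n + 1) * (2 * (b * lev n0 n)) := by
    ring
  rw [h, Nat.add_mul_div_left _ _ (by positivity), Nat.div_eq_of_lt, zero_add]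
  exact Nat.pow_lt_pow_right (by norm_num) (by omega)

theorem levelDelay_zero (n0 n : ℕ) (a : ℕ → ℕ) (ha : ∀ b, a b < lev n0 n) :
    levelDelay n0 n a 0 ≤ lev n0 n := by
  have : cnt n 0 = 0 := by
    unfold cnt
    rw [zero_add, Nat.div_eq_of_lt]
    exact Nat.pow_lt_pow_right (by norm_num) (by omega)
  unfold levelDelay
  have := ha 0
  simp only [Nat.zero_div, zero_mul]
  omega

/-- The level-`n` delay is nondecreasing and grows by at most one, and only at waiting positions of
level `n`. -/
theorem levelDelay_succ (n0 n : ℕ) (a : ℕ → ℕ) (ha : ∀ b, a b < lev n0 n) (p : ℕ) :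
    levelDelay n0 n a p ≤ levelDelay n0 n a (p + 1) ∧
    levelDelay n0 n a (p + 1) ≤ levelDelay n0 n a p +
      if 2 ^ (n + 1) ∣ p + 2 ^ n + 1 then 1 else 0 := by
  have hW := blk_pos n0 n
  have hb : p / blk n0 n * blk n0 n ≤ p := Nat.div_mul_le_self _ _
  have hb' : p < (p / blk n0 n + 1) * blk n0 n := (Nat.div_lt_iff_lt_mul hW).1 (Nat.lt_succ_self _)
  have hc := cnt_mono n hb
  rw [cnt_mul_blk] at hc
  have hs := cnt_succ n p
  unfold levelDelay
  by_cases h : p + 1 = (p / blk n0 n + 1) * blk n0 n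
  · have hdiv : (p + 1) / blk n0 n = p / blk n0 n + 1 := by
      conv_lhs => rw [h]
      exact Nat.mul_div_cancel _ hW
    have hc1 : cnt n (p + 1) = 2 * ((p / blk n0 n + 1) * lev n0 n) := by
      conv_lhs => rw [h]
      exact cnt_mul_blk _ _ _
    have hc0 : 2 * ((p / blk n0 n + 1) * lev n0 n) ≤ cnt n p := by
      unfold cnt
      rw [Nat.le_div_iff_mul_le (by positivity)]
      have e : ∀ b, 2 * (b * lev n0 n) * 2 ^ (n + 1) = b * blk n0 n := by
        intro b; rw [blk]; ring
      rw [e, ← h]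
      have : 0 < 2 ^ n := by positivity
      omega
    rw [hdiv]
    have h1 := ha (p / blk n0 n + 1)
    have h0 := ha (p / blk n0 n)
    have h2 := ha (p / blk n0 n + 1 + 1)
    have hm := cnt_mono n (Nat.le_succ p)
    generalize p / blk n0 n = b at *
    have e1 : (b + 1) * lev n0 n = b * lev n0 n + lev n0 n := by ring
    have e2 : (b + 1 + 1) * lev n0 n = b * lev n0 n + 2 * lev n0 n := by ring
    rw [e1] at hc0 hc1 ⊢
    rw [e2]
    simp only [Nat.succ_eq_add_one] at hm
    generalize b * lev n0 n = x at *
    split_ifs at hs ⊢ <;> constructor <;> omega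
  · have hdiv : (p + 1) / blk n0 n = p / blk n0 n := by
      apply Nat.div_eq_of_lt_le
      · omega
      · omega
    rw [hdiv]
    generalize p / blk n0 n * lev n0 n = x at *
    split_ifs at hs ⊢ <;> constructor <;> omega

/-- Every position is a waiting position of at most one level. -/
theorem sum_wait_le_one (p : ℕ) (s : Finset ℕ) :
    ∑ n ∈ s, (if 2 ^ (n + 1) ∣ p + 2 ^ n + 1 then 1 else 0) ≤ 1 := by
  have key : ∀ n n', n < n' → 2 ^ (n + 1) ∣ p + 2 ^ n + 1 → 2 ^ (n' + 1) ∣ p + 2 ^ n' + 1 →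
      False := by
    intro n n' h h1 h2
    have h3 : 2 ^ (n + 1) ∣ p + 2 ^ n' + 1 := (pow_dvd_pow 2 (by omega)).trans h2
    have h4 : 2 ^ (n + 1) ∣ 2 ^ n' := pow_dvd_pow 2 (by omega)
    have h5 : 2 ^ (n + 1) ∣ p + 1 := (Nat.dvd_add_right h4).1 (by
      rwa [show 2 ^ n' + (p + 1) = p + 2 ^ n' + 1 by ring])
    have h6 : 2 ^ (n + 1) ∣ 2 ^ n := (Nat.dvd_add_right h5).1 (by
      rwa [show p + 1 + 2 ^ n = p + 2 ^ n + 1 by ring])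
    have := Nat.le_of_dvd (by positivity) h6
    exact absurd this (not_le.2 (Nat.pow_lt_pow_right (by norm_num) (by omega)))
  rw [← card_filter]
  refine card_le_one.2 fun n hn n' hn' => ?_
  have h1 := (mem_filter.1 hn).2
  have h2 := (mem_filter.1 hn').2
  rcases lt_trichotomy n n' with h | h | h
  · exact (key n n' h h1 h2).elim
  · exact h
  · exact (key n' n h h2 h1).elim

/-- The law at position `p` of the sum of the random delays of the levels `0, …, n`. Level `0` is simply
uniform; its value is never fixed and it only serves to count packets. -/
noncomputable def law (n0 : ℕ) : ℕ → ℕ → ℤ → ℝ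
  | 0 => fun _ s => if 0 ≤ s ∧ s < lev n0 0 then 1 / (lev n0 0 : ℝ) else 0
  | n + 1 => mixLaw (lev n0 (n + 1)) (hiGap n0 (n + 1)) (loGap n0 (n + 1)) (law n0 n)

/-- The random delays of the levels `0, …, n` add up to less than `spread n0 n`. -/
def spread (n0 n : ℕ) : ℕ := ∑ j ∈ range (n + 1), lev n0 j

theorem spread_le (n0 n : ℕ) : spread n0 n ≤ 2 * lev n0 n := by
  induction n with
  | zero => simp [spread]; omega
  | succ n ih =>
    have h : lev n0 (n + 1) = 16 * lev n0 n := by unfold lev; ring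
    have : spread n0 (n + 1) = spread n0 n + lev n0 (n + 1) := by
      unfold spread; rw [sum_range_succ]
    omega

theorem isLaw_law (n0 n : ℕ) : IsLaw (law n0 n) (spread n0 n) (2 / lev n0 n) := by
  induction n with
  | zero =>
    have hL : (0 : ℝ) < lev n0 0 := by exact_mod_cast lev_pos n0 0
    have hs : spread n0 0 = lev n0 0 := by simp [spread]
    rw [hs]
    refine ⟨fun p s => ?_, fun p s => ?_, fun p s h => ?_, fun p => ?_⟩
    · simp only [law]; split_ifs <;> positivity
    · simp only [law]; split_ifs
      · gcongr; norm_num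
      · positivity
    · simp only [law] at h
      by_contra hc
      exact h (if_neg hc)
    · rw [sum_congr rfl (g := fun _ => 1 / (lev n0 0 : ℝ)) (fun s hs => by
        simp only [law]; rw [if_pos (by simpa using hs)])]
      simp
      field_simp
  | succ n ih =>
    have : spread n0 (n + 1) = spread n0 n + lev n0 (n + 1) := by
      unfold spread; rw [sum_range_succ]
    rw [this]
    exact ih.mix (lev_pos _ _) (gap_zero n0 (n + 1))

/-- For a large enough offset `n0` the numerical condition of the Local Lemma holds at every level: with
`z = 4 ^ (n0 + n)` the number of dependent events is polynomial in `z`, while the probability is at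
most `exp (-z / 96)`. -/
theorem exists_base_level : ∃ n0 : ℕ, ∀ n, 4 * ((24 * blk n0 (n + 1) *
    (spread n0 n + lev n0 (n + 1)) ^ 2 : ℕ) : ℝ) *
      Real.exp (-(((1 / 2 : ℝ) ^ (n + 1)) ^ 2 / (12 * (2 / lev n0 n)))) ≤ 1 := by
  obtain ⟨n0, hn0⟩ := pow_unbounded_of_one_lt (12582912 * 40320 * 96 ^ 8 : ℝ)
    (show (1 : ℝ) < 4 by norm_num)
  refine ⟨n0, fun n => ?_⟩
  set z : ℝ := 4 ^ (n0 + n) with hz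
  have hz1 : (4 : ℝ) ^ n0 ≤ z := pow_le_pow_right₀ (by norm_num) (by omega)
  have hz0 : 0 < z := by positivity
  have hL : (lev n0 n : ℝ) = z ^ 2 := by
    unfold lev; push_cast; rw [hz, ← pow_mul, mul_comm, pow_mul]; norm_num
  have hL1 : (lev n0 (n + 1) : ℝ) = 16 * z ^ 2 := by
    rw [← hL]; unfold lev; push_cast; ring
  have hS : (spread n0 n : ℝ) ≤ 2 * z ^ 2 := by
    rw [← hL]; exact_mod_cast spread_le n0 n
  have h2 : (2 : ℝ) ^ (n + 1 + 2) ≤ 8 * z := by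
    have : (2 : ℝ) ^ n ≤ z := by
      calc (2 : ℝ) ^ n ≤ 4 ^ n := by gcongr; norm_num
        _ ≤ z := pow_le_pow_right₀ (by norm_num) (by omega)
    calc (2 : ℝ) ^ (n + 1 + 2) = 8 * 2 ^ n := by ring
      _ ≤ _ := by linarith
  have hpoly : 4 * ((24 * blk n0 (n + 1) * (spread n0 n + lev n0 (n + 1)) ^ 2 : ℕ) : ℝ) ≤
      12582912 * z ^ 7 := by
    unfold blk
    push_cast
    rw [hL1]
    calc 4 * (24 * (2 ^ (n + 1 + 2) * (16 * z ^ 2)) * (spread n0 n + 16 * z ^ 2) ^ 2)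
        ≤ 4 * (24 * ((8 * z) * (16 * z ^ 2)) * (16 * z ^ 2 + 16 * z ^ 2) ^ 2) := by
          gcongr
          nlinarith [sq_nonneg z]
      _ = 12582912 * z ^ 7 := by ring
  have hexp : z / 96 ≤ ((1 / 2 : ℝ) ^ (n + 1)) ^ 2 / (12 * (2 / lev n0 n)) := by
    rw [hL]
    have h4 : ((1 / 2 : ℝ) ^ (n + 1)) ^ 2 * z ≥ 1 / 4 := by
      have : ((1 / 2 : ℝ) ^ (n + 1)) ^ 2 = 1 / (4 * 4 ^ n) := by
        have h22 : (2 : ℝ) ^ 2 = 4 := by norm_num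
        rw [div_pow, one_pow, div_pow, one_pow, ← pow_mul, mul_comm (n + 1) 2, pow_mul, h22]
        ring
      rw [this, hz, pow_add]
      have : (1 : ℝ) ≤ 4 ^ n0 := one_le_pow₀ (by norm_num)
      field_simp
      linarith
    have e : ((1 / 2 : ℝ) ^ (n + 1)) ^ 2 / (12 * (2 / z ^ 2)) =
        ((1 / 2 : ℝ) ^ (n + 1)) ^ 2 * z * z / 24 := by
      field_simp; ring
    rw [e]
    nlinarith
  have hfac := Real.pow_div_factorial_le_exp (z / 96) (by positivity) 8
  have hf8 : ((8).factorial : ℝ) = 40320 := by norm_num [Nat.factorial]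
  rw [hf8] at hfac
  calc _ ≤ 12582912 * z ^ 7 * Real.exp (-(z / 96)) := by
        gcongr
    _ ≤ 1 := by
        rw [Real.exp_neg, ← div_eq_mul_inv, div_le_one (Real.exp_pos _)]
        refine le_trans ?_ hfac
        rw [div_pow, div_div, le_div_iff₀ (by positivity)]
        have : 12582912 * 40320 * 96 ^ 8 ≤ z := hn0.le.trans hz1
        have h7 : 0 ≤ z ^ 7 := by positivity
        nlinarith

/-- Fixing the levels `J, J - 1, …, 1` one after the other; the expected loads stay below
`2 + (1 / 2) ^ n` when the levels above `n` are fixed. -/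
theorem exists_all_levels {E : Type*} {k D n0 : ℕ}
    (hn0 : ∀ n, 4 * ((24 * blk n0 (n + 1) *
    (spread n0 n + lev n0 (n + 1)) ^ 2 : ℕ) : ℝ) *
      Real.exp (-(((1 / 2 : ℝ) ^ (n + 1)) ^ 2 / (12 * (2 / lev n0 n)))) ≤ 1)
    (U : E → Finset (Fin k)) (pos : E → Fin k → ℕ)
    (hpos : ∀ e, ∀ i ∈ U e, pos e i < D)
    (hinj : ∀ e e' i, i ∈ U e → i ∈ U e' → pos e i = pos e' i → e = e') (J : ℕ) :
    ∀ N : Fin k → ℕ → ℤ,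
    (∀ e t, ∑ i ∈ U e, law n0 J (pos e i) (t - N i (pos e i)) ≤ 2 + (1 / 2) ^ J) →
    ∃ a : ℕ → Fin k → ℕ → ℕ, (∀ j i b, a j i b < lev n0 j) ∧
      ∀ e t, ∑ i ∈ U e, law n0 0 (pos e i) (t - (N i (pos e i) + ((∑ j ∈ range J,
        extraDelay (hiGap n0 (j + 1)) (loGap n0 (j + 1)) (blk n0 (j + 1)) (a (j + 1) i)
          (pos e i) : ℕ) : ℤ))) ≤ 3 := by
  induction J with
  | zero =>
    intro N h
    refine ⟨fun _ _ _ => 0, fun j _ _ => lev_pos _ _, fun e t => ?_⟩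
    simp only [range_zero, sum_empty, Nat.cast_zero, add_zero]
    refine (h e t).trans (by norm_num)
  | succ J ih =>
    intro N h
    have hp1 : ((1 : ℝ) / 2) ^ (J + 1) ≤ 1 := pow_le_one₀ (by norm_num) (by norm_num)
    obtain ⟨a1, ha1, h1⟩ := refine_level U pos hpos hinj
      (div_pos two_pos (by exact_mod_cast lev_pos n0 J)) (isLaw_law n0 J) (lev_pos n0 (J + 1))
      (blk_pos n0 (J + 1)) (gap_zero n0 (J + 1)) N h (by linarith)
      (ε := (1 / 2) ^ (J + 1)) (by positivity) (by linarith) (hn0 J)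
    obtain ⟨a, ha, h2⟩ := ih (fun i p => N i p + extraDelay (hiGap n0 (J + 1)) (loGap n0 (J + 1))
      (blk n0 (J + 1)) (a1 i) p) (fun e t => (h1 e t).trans (le_of_eq (by ring)))
    refine ⟨fun j => if j = J + 1 then a1 else a j, fun j i b => ?_, fun e t => ?_⟩
    · dsimp only
      split_ifs with hj
      · rw [hj]; exact ha1 i b
      · exact ha j i b
    · refine le_trans (le_of_eq ?_) (h2 e t)
      refine sum_congr rfl fun i _ => ?_
      congr 2
      dsimp only
      rw [sum_range_succ, if_pos rfl]
      rw [sum_congr rfl (g := fun j => extraDelay (hiGap n0 (j + 1)) (loGap n0 (j + 1))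
        (blk n0 (j + 1)) (a (j + 1) i) (pos e i)) (fun j hj => by
          rw [if_neg (by have := mem_range.1 hj; omega)])]
      push_cast
      ring

/-- The theorem in terms of crossing times: `τ i p` is the time step in which packet `i` crosses its
`p`-th edge, `U e` is the set of packets using `e`, and `pos e i` the position of `e` on path `i`. -/
theorem exists_crossing_times : ∃ c : ℕ, ∀ {E : Type} {k D : ℕ}
    (U : E → Finset (Fin k)) (pos : E → Fin k → ℕ) (_ : ∀ e, #(U e) ≤ D)
    (_ : ∀ e, ∀ i ∈ U e, pos e i < D)
    (_ : ∀ e e' i, i ∈ U e → i ∈ U e' → pos e i = pos e' i → e = e'),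
    ∃ τ : Fin k → ℕ → ℕ, (∀ i p, τ i p < τ i (p + 1) ∧ τ i (p + 1) ≤ τ i p + 2) ∧
      (∀ i p, p < D → τ i p < c * D) ∧ ∀ e t, #{i ∈ U e | τ i (pos e i) = t} ≤ c := by
  obtain ⟨n0, hn0⟩ := exists_base_level
  refine ⟨6 * lev n0 0 + 34, fun {E k D} U pos hU hpos hinj => ?_⟩
  have hex : ∃ J, D ≤ lev n0 J := ⟨D, (Nat.lt_pow_self (by norm_num : 1 < 16)).le.trans
    (Nat.pow_le_pow_right (by norm_num) (by omega))⟩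
  classical
  set J := Nat.find hex with hJ
  have hDJ : D ≤ lev n0 J := Nat.find_spec hex
  -- by minimality of `J`, the delay before the first edge is linear in `D`
  have hsum : ∑ j ∈ range J, lev n0 (j + 1) ≤ 32 * D := by
    rcases hJ0 : J with _ | J'
    · simp
    · have h1 : lev n0 J' < D := not_le.1 (Nat.find_min hex (m := J') (by omega))
      have h2 := spread_le n0 (J' + 1)
      have h3 : lev n0 (J' + 1) = 16 * lev n0 J' := by unfold lev; ring
      have h4 : spread n0 (J' + 1) = ∑ j ∈ range (J' + 1), lev n0 (j + 1) + lev n0 0 := by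
        unfold spread; rw [sum_range_succ']
      omega
  obtain ⟨a, ha, hload⟩ := exists_all_levels hn0 U pos hpos hinj J
    (fun _ p => ((p + ∑ j ∈ range J, baseDelay n0 (j + 1) p : ℕ) : ℤ)) (by
      intro e t
      have hLJ : (0 : ℝ) < lev n0 J := by exact_mod_cast lev_pos n0 J
      calc _ ≤ ∑ i ∈ U e, (2 / lev n0 J : ℝ) := sum_le_sum fun i _ => (isLaw_law n0 J).le _ _
        _ = #(U e) * (2 / lev n0 J) := by simp
        _ ≤ lev n0 J * (2 / lev n0 J) := by
            gcongr; exact_mod_cast (hU e).trans hDJ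
        _ = 2 := by field_simp
        _ ≤ _ := by
            have : (0 : ℝ) < (1 / 2) ^ J := by positivity
            linarith)
  let τ : Fin k → ℕ → ℕ := fun i p => p + ∑ j ∈ range J, levelDelay n0 (j + 1) (a (j + 1) i) p
  have hτ : ∀ i p, τ i p < τ i (p + 1) ∧ τ i (p + 1) ≤ τ i p + 2 := by
    intro i p
    have h1 : ∑ j ∈ range J, levelDelay n0 (j + 1) (a (j + 1) i) p ≤
        ∑ j ∈ range J, levelDelay n0 (j + 1) (a (j + 1) i) (p + 1) :=
      sum_le_sum fun j _ => (levelDelay_succ n0 (j + 1) _ (ha (j + 1) i) p).1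
    have h2 : ∑ j ∈ range J, levelDelay n0 (j + 1) (a (j + 1) i) (p + 1) ≤
        ∑ j ∈ range J, levelDelay n0 (j + 1) (a (j + 1) i) p + 1 := by
      refine (sum_le_sum fun j _ => (levelDelay_succ n0 (j + 1) _ (ha (j + 1) i) p).2).trans ?_
      rw [sum_add_distrib]
      have := sum_wait_le_one p ((range J).image (· + 1))
      rw [sum_image (fun x _ y _ h => by simpa using h)] at this
      omega
    simp only [τ]
    omega
  have hτ0 : ∀ i, τ i 0 ≤ 32 * D := by
    intro i
    simp only [τ, zero_add]
    exact (sum_le_sum fun j _ => levelDelay_zero n0 (j + 1) _ (ha (j + 1) i)).trans hsum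
  have hτp : ∀ i p, τ i p ≤ τ i 0 + 2 * p := by
    intro i p
    induction p with
    | zero => omega
    | succ p ih => have := (hτ i p).2; omega
  refine ⟨τ, hτ, fun i p hp => ?_, fun e t => ?_⟩
  · have h1 := hτp i p
    have h2 := hτ0 i
    have : (6 * lev n0 0 + 34) * D = 6 * (lev n0 0 * D) + 34 * D := by ring
    omega
  · have h := card_active_le U pos (isLaw_law n0 0) (fun i p => (τ i p : ℤ)) (μ := 3) (by
      intro e t
      refine le_trans (le_of_eq ?_) (hload e t)
      refine sum_congr rfl fun i _ => ?_
      congr 2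
      simp only [τ]
      rw [sum_congr rfl fun j _ => levelDelay_eq n0 (j + 1) (a (j + 1) i) (pos e i),
        sum_add_distrib]
      push_cast; ring) e t
    have hs : spread n0 0 = lev n0 0 := by simp [spread]
    rw [hs] at h
    have h2 : #{i ∈ U e | τ i (pos e i) = t} ≤ #{i ∈ U e | 0 ≤ (t : ℤ) - τ i (pos e i) ∧
        (t : ℤ) - τ i (pos e i) < lev n0 0} := by
      refine card_le_card fun i hi => ?_
      obtain ⟨h1, h2⟩ := mem_filter.1 hi
      refine mem_filter.2 ⟨h1, ?_⟩
      have := lev_pos n0 0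
      omega
    have h3 : (#{i ∈ U e | 0 ≤ (t : ℤ) - τ i (pos e i) ∧
        (t : ℤ) - τ i (pos e i) < lev n0 0} : ℝ) ≤ ((6 * lev n0 0 : ℕ) : ℝ) := by
      refine h.trans (le_of_eq ?_); push_cast; ring
    have h4 := Nat.cast_le.1 h3
    omega

end PacketRouting

/-! ### From crossing times to schedules -/

/-- There is a universal constant `c` such that every routing
instance in which every path has exactly `D` edges and whose congestion is at
most `D` admits a schedule with makespan at most `c·D` and load at most `c`,
in which moreover every packet waits at most one time unit at each
intermediate vertex of its path. -/
theorem exists_schedule_const_load_const_buffers :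
    ∃ c : ℕ, ∀ (I : RInst) (D : ℕ), I.Valid →
      (∀ i, (I.path i).length = D) → I.congestion ≤ D →
      ∃ σ : Fin I.k → ℕ → ℕ, I.IsSchedule σ ∧ I.LoadLE σ c ∧
        I.CompletedBy σ (c * D) ∧
        ∀ (i : Fin I.k) (p : ℕ), 0 < p → p < (I.path i).length →
          {t : ℕ | σ i t = p ∧ σ i (t + 1) = p}.Subsingleton := by
  obtain ⟨c, hc⟩ := PacketRouting.exists_crossing_times
  refine ⟨c, fun I D hV hlen hcong => ?_⟩
  classical
  obtain ⟨τ, hτ, hτD, hload⟩ := hc (E := I.E) (k := I.k) (D := D)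
    (fun e => {i | e ∈ I.path i}) (fun e i => (I.path i).idxOf e) (fun e => by
      refine le_trans ?_ hcong
      refine le_trans (le_of_eq ?_) (Finset.le_sup
        (f := fun e : I.E => Nat.card {i : Fin I.k | e ∈ I.path i}) (Finset.mem_univ e))
      rw [Nat.card_eq_fintype_card, Fintype.card_ofFinset]
      congr 1)
    (fun e i hi => by
      rw [← hlen i]
      exact List.idxOf_lt_length_iff.2 (by simpa using hi))
    (fun e e' i hi hi' h => by
      exact (List.idxOf_inj (by simpa using hi)).1 h)
  have hmono : ∀ i, StrictMono (τ i) := fun i => strictMono_nat_of_lt_succ fun p => (hτ i p).1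
  let σ : Fin I.k → ℕ → ℕ := fun i t => ({p ∈ Finset.range D | τ i p < t} : Finset ℕ).card
  have hle : ∀ i t, σ i t ≤ D := fun i t => by
    simpa using Finset.card_filter_le (Finset.range D) (fun p => τ i p < t)
  have hσ : ∀ i t q, q < D → (q < σ i t ↔ τ i q < t) := by
    intro i t q hq
    constructor
    · intro h
      by_contra hn
      have : ({p ∈ Finset.range D | τ i p < t} : Finset ℕ) ⊆ Finset.range q := by
        intro p hp
        have hp := (Finset.mem_filter.1 hp).2
        exact Finset.mem_range.2 ((hmono i).lt_iff_lt.1 (by omega))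
      have := Finset.card_le_card this
      rw [Finset.card_range] at this
      exact absurd h (not_lt.2 this)
    · intro h
      have : Finset.range (q + 1) ⊆ ({p ∈ Finset.range D | τ i p < t} : Finset ℕ) := by
        intro p hp
        have hp := Finset.mem_range.1 hp
        have := (hmono i).monotone (show p ≤ q by omega)
        exact Finset.mem_filter.2 ⟨Finset.mem_range.2 (by omega), by omega⟩
      have := Finset.card_le_card this
      rw [Finset.card_range] at this
      exact this
  refine ⟨σ, ⟨fun i => ?_, fun i t => ?_, fun i t => ?_⟩, fun e t => ?_, fun i => ?_, ?_⟩
  · simp [σ]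
  · have h1 : σ i t ≤ σ i (t + 1) := by
      refine Finset.card_le_card fun p hp => ?_
      have := Finset.mem_filter.1 hp
      exact Finset.mem_filter.2 ⟨this.1, by omega⟩
    have h2 : σ i (t + 1) ≤ σ i t + 1 := by
      by_contra hn
      have hD := hle i (t + 1)
      have a1 := (hσ i (t + 1) (σ i t + 1) (by omega)).1 (by omega)
      have a2 := (hσ i t (σ i t) (by omega)).not.1 (lt_irrefl _)
      have a3 := (hτ i (σ i t)).1
      omega
    omega
  · rw [hlen i]; exact hle i t
  · refine le_trans ?_ (hload e t)
    rw [Nat.card_eq_fintype_card, Fintype.card_ofFinset]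
    refine Finset.card_le_card fun i hi => ?_
    have hi : I.Crosses σ i e t := by simpa using hi
    obtain ⟨h1, h2⟩ := hi
    obtain ⟨hq, he⟩ := List.getElem?_eq_some_iff.1 h2
    have hqD : σ i t < D := by rw [← hlen i]; exact hq
    have a1 := (hσ i (t + 1) (σ i t) hqD).1 (by omega)
    have a2 := (hσ i t (σ i t) hqD).not.1 (lt_irrefl _)
    have hidx : (I.path i).idxOf e = σ i t := by
      rw [← he]; exact (hV.2 i).idxOf_getElem _ hq
    refine Finset.mem_filter.2 ⟨?_, ?_⟩
    · simp only [Finset.mem_filter, Finset.mem_univ, true_and]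
      rw [← he]; exact List.getElem_mem hq
    · rw [hidx]; omega
  · rw [hlen i]
    refine le_antisymm (hle _ _) ?_
    by_contra hn
    have := (hσ i (c * D) (σ i (c * D)) (by omega)).2 (hτD i _ (by omega))
    omega
  · intro i p hp hpl
    rw [hlen i] at hpl
    -- waiting at `p` means that edge `p - 1` has been crossed before step `t` and edge `p` is crossed
    -- after it, which leaves one possible step
    have key : ∀ t, σ i t = p ∧ σ i (t + 1) = p → t = τ i (p - 1) + 1 := by
      rintro t ⟨h1, h2⟩
      have a1 := (hσ i t (p - 1) (by omega)).1 (by omega)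
      have a2 := (hσ i (t + 1) p hpl).not.1 (by omega)
      have a3 := (hτ i (p - 1)).2
      rw [Nat.sub_add_cancel hp] at a3
      omega
    intro t ht t' ht'
    rw [key t ht, key t' ht']
end

section
/- Let r ≥ 1 and let W₁, …, W_r be positive integers with W_{j+1} ≤ √(W_j) for every 1 ≤ j < r. Let X₁, …, X_r be independent random variables, X_j uniformly distributed on {1, …, W_j}, and let c be an integer. If for an integer t one has Pr[c + X₁ + ⋯ + X_r = t] > 0, then Pr[c + X₁ + ⋯ + X_r = t] ≥ 1/W₁². -/
/-- If each factor squared is at most its predecessor, the whole product is at most the square of the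
first factor: by induction the tail contributes at most `W 1 ^ 2 ≤ W 0`. -/
lemma prod_le_first_sq (n : ℕ) (W : Fin (n + 1) → ℕ)
    (h : ∀ j : Fin n, W j.succ ^ 2 ≤ W j.castSucc) : ∏ j, W j ≤ W 0 ^ 2 := by
  induction n with
  | zero => simpa using Nat.le_self_pow two_ne_zero (W 0)
  | succ n ih =>
    rw [Fin.prod_univ_succ, sq]
    have htail := ih (fun j => W j.succ) (fun j => h j.succ)
    exact Nat.mul_le_mul_left _ (htail.trans (h 0))

/-- Let `r ≥ 1` and let `W 0, …, W (r-1)` be positive integers with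
`W (j+1) ≤ √(W j)`. Let `X j` be independent, `X j` uniform on `{1,…,W j}` (encoded
as `x j + 1` for a uniform element `x` of the product `Π j, Fin (W j)`), and `c` an
integer. If `Pr[c + X 0 + ⋯ + X (r-1) = t] > 0` for an integer `t`, then this
probability is at least `1 / (W 0)²`. -/
theorem crossing_time_prob_lower (r : ℕ) (hr : 0 < r) (W : Fin r → ℕ)
    (hpos : ∀ j, 0 < W j)
    (hsqrt : ∀ (j : ℕ) (h1 : j + 1 < r),
      (W ⟨j + 1, h1⟩ : ℝ) ≤ Real.sqrt (W ⟨j, by omega⟩))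
    (c t : ℤ)
    (hpossible : 0 < Nat.card {x : (j : Fin r) → Fin (W j) //
        c + ∑ j, ((x j : ℤ) + 1) = t}) :
    1 / ((W ⟨0, hr⟩ : ℝ)) ^ 2
      ≤ (Nat.card {x : (j : Fin r) → Fin (W j) //
          c + ∑ j, ((x j : ℤ) + 1) = t} : ℝ) / ∏ j, (W j : ℝ) := by
  obtain ⟨n, rfl⟩ : ∃ n, r = n + 1 := ⟨r - 1, by omega⟩
  have hprod : ∏ j, W j ≤ W ⟨0, hr⟩ ^ 2 := by
    refine prod_le_first_sq n W fun j => ?_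
    have hj := (Real.le_sqrt (Nat.cast_nonneg _) (Nat.cast_nonneg _)).mp
      (hsqrt j (Nat.succ_lt_succ j.isLt))
    exact_mod_cast hj
  have hprodR : ∏ j, (W j : ℝ) ≤ (W ⟨0, hr⟩ : ℝ) ^ 2 := by exact_mod_cast hprod
  have hprodpos : 0 < ∏ j, (W j : ℝ) :=
    Finset.prod_pos fun j _ => Nat.cast_pos.mpr (hpos j)
  -- A possible time is realized by at least one outcome, each of weight `1 / ∏ W j`.
  exact div_le_div₀ (Nat.cast_nonneg _) (by exact_mod_cast hpossible) hprodpos hprodR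
end

section
/- There exists a universal constant Δ₀ with the following property. Let m ≥ Δ₀ be a real number, let N, W, k be positive integers, let S be a finite set, and let γ be a real number with 1 ≤ γ ≤ 2. For each s ∈ S and i ∈ {1,…,k} let f_{s,i} : {1,…,W} → [0, m^{−1/8}] be a function and c(s,i) ∈ {1,…,N} a coordinate, such that: (i) for each fixed s, the coordinates c(s,1),…,c(s,k) are pairwise distinct; (ii) each f_{s,i} is either identically zero or has average value at least 1/m; (iii) for each coordinate j ∈ {1,…,N}, the number of s ∈ S for which there exists some i with c(s,i) = j and f_{s,i} not identically zero is at most m². For α ∈ {1,…,W}^N set Y_s(α) := Σ_{i=1}^{k} f_{s,i}(α_{c(s,i)}), and assume that for α chosen uniformly at random, E[Y_s(α)] ≤ γ for every s ∈ S. Then there exists a vector α ∈ {1,…,W}^N such that Y_s(α) ≤ γ + m^{−1/32} for every s ∈ S. -/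
/-!
The theorem is an application of the symmetric Lovász Local Lemma on the finite product space
`Fin N → Fin W` with the uniform measure; all probabilities are expressed by counting.

Collecting the terms of `Y s` by coordinate gives `Y s α = ∑ j, h s j (α j)`, where
`h s j` is one of the `f s i` or zero by injectivity of `c s`. The bad event of `s` is
`Y s > γ + δ` with `δ = m^(-1/32)`.

* Its probability is at most `p = exp (-m^(1/16) / 8)`: apply Markov's inequality to
  `exp (t Y / a)` with `a = m^(-1/8)` and `t = δ / 4`, using `exp u ≤ 1 + u + u²` on `[0, 1]`
  and the factorisation of the exponential moment (`chernoff_count`).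
* It depends only on the coordinates where `h s j ≠ 0`. There are at most `2 m` of these since each
  contributes at least `1 / m` to an expectation that is at most `2`, and each is relevant for at
  most `m²` indices, so a bad event meets at most `d = 2 m³` others. Events depending on disjoint
  sets of coordinates are independent (`card_inter_mul_card`).

Since `4 p d = 8 m³ exp (-m^(1/16) / 8) ≤ 1` for large `m`, the Local Lemma
(`exists_forall_notMem_of_local`) yields a point outside all bad events.
-/

open Finset in
/-- The points avoiding every event `B t` with `t ∈ T`. -/
def avoiding {Ω S : Type*} [Fintype Ω] [DecidableEq Ω] (B : S → Finset Ω) (T : Finset S) :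
    Finset Ω :=
  {ω | ∀ t ∈ T, ω ∉ B t}

open Finset in
/-- The inductive core of the symmetric Local Lemma: conditioned on avoiding any family of bad
events, each bad event has probability at most `2 p`. -/
theorem card_inter_avoiding_le {Ω S : Type*} [Fintype Ω] [Nonempty Ω] [DecidableEq Ω]
    [DecidableEq S] (B : S → Finset Ω) (nbr : S → Finset S) (p d : ℝ) (hp0 : 0 ≤ p)
    (hp : ∀ s, (#(B s) : ℝ) ≤ p * Fintype.card Ω) (hd : ∀ s, (#(nbr s) : ℝ) ≤ d)
    (hpd : 4 * p * d ≤ 1)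
    (hind : ∀ s T, Disjoint (nbr s) T →
      #(B s ∩ avoiding B T) * Fintype.card Ω = #(B s) * #(avoiding B T)) (T : Finset S) :
    ∀ s, (#(B s ∩ avoiding B T) : ℝ) ≤ 2 * p * #(avoiding B T) := by
  induction T using Finset.strongInduction with
  | H T ih =>
  intro s
  have hΩ : (0 : ℝ) < Fintype.card Ω := by exact_mod_cast Fintype.card_pos
  have hsub : avoiding B T ⊆ avoiding B (T \ nbr s) := by
    intro ω hω
    simp only [avoiding, mem_filter, mem_univ, true_and] at hω ⊢
    exact fun t ht => hω t (mem_sdiff.1 ht).1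
  have h1 : (#(B s ∩ avoiding B T) : ℝ) ≤ p * #(avoiding B (T \ nbr s)) := by
    have h2 : (#(B s ∩ avoiding B T) : ℝ) ≤ #(B s ∩ avoiding B (T \ nbr s)) := by
      exact_mod_cast card_le_card (inter_subset_inter_left hsub)
    have h3 : (#(B s ∩ avoiding B (T \ nbr s)) : ℝ) * Fintype.card Ω
        = #(B s) * #(avoiding B (T \ nbr s)) := by
      exact_mod_cast hind s _ disjoint_sdiff
    have h4 := mul_le_mul_of_nonneg_right (hp s)
      (Nat.cast_nonneg (α := ℝ) #(avoiding B (T \ nbr s)))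
    refine h2.trans (le_of_mul_le_mul_right ?_ hΩ)
    rw [h3]
    linarith
  -- Restoring the at most `d` neighbours of `s` loses at most half of the points.
  have h5 : (#(avoiding B (T \ nbr s)) : ℝ) ≤ 2 * #(avoiding B T) := by
    by_cases hdis : Disjoint T (nbr s)
    · rw [sdiff_eq_self_of_disjoint hdis]
      linarith [Nat.cast_nonneg (α := ℝ) #(avoiding B T)]
    have hss : T \ nbr s ⊂ T := by
      refine Finset.ssubset_iff_subset_ne.2 ⟨sdiff_subset, fun h => hdis ?_⟩
      exact sdiff_eq_self_iff_disjoint.1 h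
    have hcov : avoiding B (T \ nbr s) ⊆
        avoiding B T ∪ (nbr s).biUnion fun t => B t ∩ avoiding B (T \ nbr s) := by
      intro ω hω
      by_cases h : ω ∈ avoiding B T
      · exact mem_union_left _ h
      refine mem_union_right _ ?_
      have h' := h
      have hω' := hω
      simp only [avoiding, mem_filter, mem_univ, true_and, not_forall, not_not] at h' hω'
      obtain ⟨t, htT, htB⟩ := h'
      refine mem_biUnion.2 ⟨t, ?_, mem_inter.2 ⟨htB, hω⟩⟩
      by_contra hn
      exact hω' t (mem_sdiff.2 ⟨htT, hn⟩) htB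
    have h6 : (#(avoiding B (T \ nbr s)) : ℝ) ≤
        #(avoiding B T) + ∑ t ∈ nbr s, (#(B t ∩ avoiding B (T \ nbr s)) : ℝ) := by
      exact_mod_cast (card_le_card hcov).trans
        ((card_union_le _ _).trans (Nat.add_le_add_left card_biUnion_le _))
    have h7 : ∑ t ∈ nbr s, (#(B t ∩ avoiding B (T \ nbr s)) : ℝ) ≤
        #(nbr s) * (2 * p * #(avoiding B (T \ nbr s))) := by
      rw [← nsmul_eq_mul]
      exact sum_le_card_nsmul _ _ _ fun t _ => ih _ hss t
    have h8 : (#(nbr s) : ℝ) * (2 * p * #(avoiding B (T \ nbr s))) ≤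
        1 / 2 * #(avoiding B (T \ nbr s)) := by
      rw [← mul_assoc]
      refine mul_le_mul_of_nonneg_right ?_ (Nat.cast_nonneg _)
      nlinarith [mul_le_mul_of_nonneg_left (hd s) hp0]
    linarith
  nlinarith [mul_le_mul_of_nonneg_left h5 hp0]

open Finset in
/-- The symmetric Lovász Local Lemma for the uniform measure on a finite type. -/
theorem exists_forall_notMem_of_local {Ω S : Type*} [Fintype Ω] [Nonempty Ω] [DecidableEq Ω]
    [Fintype S] [DecidableEq S] (B : S → Finset Ω) (nbr : S → Finset S) (p d : ℝ) (hp0 : 0 ≤ p)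
    (hp1 : 2 * p < 1)
    (hp : ∀ s, (#(B s) : ℝ) ≤ p * Fintype.card Ω) (hd : ∀ s, (#(nbr s) : ℝ) ≤ d)
    (hpd : 4 * p * d ≤ 1)
    (hind : ∀ s T, Disjoint (nbr s) T →
      #(B s ∩ avoiding B T) * Fintype.card Ω = #(B s) * #(avoiding B T)) :
    ∃ ω, ∀ s, ω ∉ B s := by
  have key : ∀ T : Finset S, (0 : ℝ) < #(avoiding B T) := by
    intro T
    induction T using Finset.induction_on with
    | empty =>
      have : avoiding B ∅ = univ := by simp [avoiding]
      rw [this]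
      exact_mod_cast Fintype.card_pos
    | insert s T _ ih =>
      have h1 := card_inter_avoiding_le B nbr p d hp0 hp hd hpd hind T s
      have h2 : avoiding B T ⊆ avoiding B (insert s T) ∪ (B s ∩ avoiding B T) := by
        intro ω hω
        by_cases h : ω ∈ B s
        · exact mem_union_right _ (mem_inter.2 ⟨h, hω⟩)
        · refine mem_union_left _ ?_
          simp only [avoiding, mem_filter, mem_univ, true_and, mem_insert] at hω ⊢
          rintro t (rfl | ht)
          · exact h
          · exact hω t ht
      have h3 : (#(avoiding B T) : ℝ) ≤ #(avoiding B (insert s T)) + #(B s ∩ avoiding B T) := by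
        exact_mod_cast (card_le_card h2).trans (card_union_le _ _)
      nlinarith
  have h := key univ
  obtain ⟨ω, hω⟩ := card_pos.1 (Nat.cast_pos.1 h)
  simp only [avoiding, mem_filter, mem_univ, true_and, true_imp_iff] at hω
  exact ⟨ω, hω⟩

open Finset in
/-- Independence of two events of a product space, one determined by the coordinates in `V` and the
other by those outside `V`. The bijection exchanges the coordinates outside `V` of two points. -/
theorem card_inter_mul_card {ι κ : Type*} [Fintype ι] [DecidableEq ι] [Fintype κ] [DecidableEq κ]
    (V : Finset ι) (A G : Finset (ι → κ))
    (hA : ∀ α β, (∀ j ∈ V, α j = β j) → α ∈ A → β ∈ A)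
    (hG : ∀ α β, (∀ j, j ∉ V → α j = β j) → α ∈ G → β ∈ G) :
    #(A ∩ G) * Fintype.card (ι → κ) = #A * #G := by
  rw [← card_univ, ← card_product, ← card_product]
  let σ : (ι → κ) × (ι → κ) → (ι → κ) × (ι → κ) := fun x =>
    (fun j => if j ∈ V then x.1 j else x.2 j, fun j => if j ∈ V then x.2 j else x.1 j)
  have hσ : ∀ x, σ (σ x) = x := by
    intro x
    ext j <;> by_cases hj : j ∈ V <;> simp [σ, hj]
  refine card_nbij' σ σ ?_ ?_ (fun x _ => hσ x) (fun x _ => hσ x)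
  · intro x hx
    simp only [coe_product, Set.mem_prod, mem_coe, mem_inter, mem_univ, and_true] at hx ⊢
    exact ⟨hA _ _ (fun j hj => by simp [σ, hj]) hx.1, hG _ _ (fun j hj => by simp [σ, hj]) hx.2⟩
  · intro x hx
    simp only [coe_product, Set.mem_prod, mem_coe, mem_inter, mem_univ, and_true] at hx ⊢
    exact ⟨hA _ _ (fun j hj => by simp [σ, hj]) hx.1, hG _ _ (fun j hj => by simp [σ, hj]) hx.2⟩

theorem exp_le_one_add_add_sq {u : ℝ} (h0 : 0 ≤ u) (h1 : u ≤ 1) :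
    Real.exp u ≤ 1 + u + u ^ 2 := by
  have h := Real.abs_exp_sub_one_sub_id_le (x := u) (by rw [abs_of_nonneg h0]; exact h1)
  linarith [(abs_le.1 h).2]

open Finset in
/-- A Chernoff bound for `∑ j, h j (α j)` with independent summands in `[0, a]` and mean at most
`γ ≤ 2`, in counting form. -/
theorem chernoff_count {N W : ℕ} (hW : 0 < W) (h : Fin N → Fin W → ℝ) {a δ γ : ℝ} (ha : 0 < a)
    (hδ0 : 0 < δ) (hδ1 : δ ≤ 1) (hγ : γ ≤ 2) (hh : ∀ j w, 0 ≤ h j w ∧ h j w ≤ a)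
    (hmean : ∑ j, (∑ w, h j w) / (W : ℝ) ≤ γ) :
    (#{α : Fin N → Fin W | γ + δ < ∑ j, h j (α j)} : ℝ) ≤
      Real.exp (-(δ ^ 2 / (8 * a))) * (W : ℝ) ^ N := by
  have hW' : (0 : ℝ) < W := by exact_mod_cast hW
  set t : ℝ := δ / 4 with ht
  have ht0 : 0 < t := by positivity
  have ht1 : t ≤ 1 := by linarith
  set L : ℝ := t / a with hL
  have hL0 : 0 < L := by positivity
  have hfac : ∀ j, ∑ w, Real.exp (L * h j w) ≤
      W * Real.exp (L * (1 + t) * ((∑ w, h j w) / W)) := by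
    intro j
    have h1 : ∀ w, Real.exp (L * h j w) ≤ 1 + L * (1 + t) * h j w := by
      intro w
      obtain ⟨hw0, hw1⟩ := hh j w
      have hu0 : 0 ≤ L * h j w := by positivity
      have hut : L * h j w ≤ t := by
        calc L * h j w ≤ L * a := by gcongr
          _ = t := by rw [hL]; field_simp
      have := exp_le_one_add_add_sq hu0 (hut.trans ht1)
      nlinarith
    calc ∑ w, Real.exp (L * h j w) ≤ ∑ w, (1 + L * (1 + t) * h j w) := sum_le_sum fun w _ => h1 w
      _ = W * (L * (1 + t) * ((∑ w, h j w) / W) + 1) := by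
          rw [sum_add_distrib, ← mul_sum]
          simp
          field_simp
          ring
      _ ≤ _ := by gcongr; exact Real.add_one_le_exp _
  have hmgf : ∑ α : Fin N → Fin W, Real.exp (L * ∑ j, h j (α j)) ≤
      (W : ℝ) ^ N * Real.exp (L * (1 + t) * γ) := by
    calc ∑ α : Fin N → Fin W, Real.exp (L * ∑ j, h j (α j))
        = ∏ j, ∑ w, Real.exp (L * h j w) := by
          rw [prod_univ_sum, Fintype.piFinset_univ]
          refine sum_congr rfl fun α _ => ?_
          rw [mul_sum, Real.exp_sum]
      _ ≤ ∏ j : Fin N, (W * Real.exp (L * (1 + t) * ((∑ w, h j w) / W))) :=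
          prod_le_prod (fun j _ => sum_nonneg fun w _ => (Real.exp_pos _).le) fun j _ => hfac j
      _ = (W : ℝ) ^ N * Real.exp (L * (1 + t) * ∑ j, (∑ w, h j w) / (W : ℝ)) := by
          rw [prod_mul_distrib, ← Real.exp_sum, ← mul_sum]
          simp
      _ ≤ _ := by gcongr
  have hmarkov : (#{α : Fin N → Fin W | γ + δ < ∑ j, h j (α j)} : ℝ) * Real.exp (L * (γ + δ)) ≤
      ∑ α : Fin N → Fin W, Real.exp (L * ∑ j, h j (α j)) := by
    rw [← nsmul_eq_mul]
    refine (card_nsmul_le_sum _ (fun α => Real.exp (L * ∑ j, h j (α j))) _ ?_).trans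
      (sum_le_sum_of_subset_of_nonneg (filter_subset _ _) fun _ _ _ => (Real.exp_pos _).le)
    intro α hα
    have := (mem_filter.1 hα).2
    gcongr
  refine le_of_mul_le_mul_right ((hmarkov.trans hmgf).trans ?_) (Real.exp_pos (L * (γ + δ)))
  rw [mul_comm (Real.exp _) ((W : ℝ) ^ N), mul_assoc ((W : ℝ) ^ N), ← Real.exp_add]
  gcongr
  -- With `t = δ / 4` the exponent `(γ t² - t δ) / a` is at most `-δ² / (8 a)`.
  have e1 : L = δ / (4 * a) := by rw [hL, ht]; field_simp
  have e2 : -(δ ^ 2 / (8 * a)) + L * (γ + δ) - L * (1 + t) * γ =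
      δ ^ 2 * (2 - γ) / (16 * a) := by
    rw [e1, ht]; field_simp; ring
  have e3 : 0 ≤ δ ^ 2 * (2 - γ) / (16 * a) :=
    div_nonneg (mul_nonneg (by positivity) (by linarith)) (by positivity)
  linarith

open Finset in
/-- The theorem for contributions indexed by coordinates, with the largeness of `m` given by
`hlarge`. -/
theorem exists_good_of_coordinates {m : ℝ} (hm1 : 2 ≤ m)
    (hlarge : 8 * m ^ 3 * Real.exp (-(m ^ ((1 : ℝ) / 16) / 8)) ≤ 1)
    {N W : ℕ} (hW : 0 < W) {S : Type} [Fintype S] {γ : ℝ} (hγ : γ ≤ 2)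
    (h : S → Fin N → Fin W → ℝ)
    (hh : ∀ s j w, 0 ≤ h s j w ∧ h s j w ≤ m ^ (-(1 : ℝ) / 8))
    (havg : ∀ s j, (∀ w, h s j w = 0) ∨ 1 / m ≤ (∑ w, h s j w) / (W : ℝ))
    (hdeg : ∀ j, (Nat.card {s : S | ¬∀ w, h s j w = 0} : ℝ) ≤ m ^ 2)
    (hmean : ∀ s, ∑ j, (∑ w, h s j w) / (W : ℝ) ≤ γ) :
    ∃ α : Fin N → Fin W, ∀ s, ∑ j, h s j (α j) ≤ γ + m ^ (-(1 : ℝ) / 32) := by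
  classical
  have hm0 : 0 < m := by linarith
  have hWne : Nonempty (Fin W) := ⟨⟨0, hW⟩⟩
  set δ : ℝ := m ^ (-(1 : ℝ) / 32) with hδ
  set a : ℝ := m ^ (-(1 : ℝ) / 8) with ha
  set p : ℝ := Real.exp (-(m ^ ((1 : ℝ) / 16) / 8)) with hp
  have hδ0 : 0 < δ := by positivity
  have hδ1 : δ ≤ 1 := Real.rpow_le_one_of_one_le_of_nonpos (by linarith) (by norm_num)
  have ha0 : 0 < a := by positivity
  have hexp : δ ^ 2 / (8 * a) = m ^ ((1 : ℝ) / 16) / 8 := by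
    have e : m ^ ((1 : ℝ) / 16) * a = δ ^ 2 := by
      rw [ha, hδ, ← Real.rpow_add hm0, ← Real.rpow_natCast, ← Real.rpow_mul hm0.le]
      norm_num
    rw [← e]
    field_simp
  let V : S → Finset (Fin N) := fun s => {j | ¬∀ w, h s j w = 0}
  let B : S → Finset (Fin N → Fin W) := fun s => {α | γ + δ < ∑ j, h s j (α j)}
  let nbr : S → Finset S := fun s => {t | ¬Disjoint (V s) (V t)}
  have hV : ∀ s, (#(V s) : ℝ) ≤ 2 * m := by
    intro s
    have h1 : (#(V s) : ℝ) * (1 / m) ≤ ∑ j ∈ V s, (∑ w, h s j w) / (W : ℝ) := by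
      rw [← nsmul_eq_mul]
      refine card_nsmul_le_sum _ _ _ fun j hj => ?_
      exact (havg s j).resolve_left (mem_filter.1 hj).2
    have h2 : ∑ j ∈ V s, (∑ w, h s j w) / (W : ℝ) ≤ ∑ j, (∑ w, h s j w) / (W : ℝ) :=
      sum_le_sum_of_subset_of_nonneg (subset_univ _) fun j _ _ =>
        div_nonneg (sum_nonneg fun w _ => (hh s j w).1) (Nat.cast_nonneg _)
    have h3 := h1.trans (h2.trans ((hmean s).trans hγ))
    rw [mul_one_div, div_le_iff₀ hm0] at h3
    exact h3
  have hnbr : ∀ s, (#(nbr s) : ℝ) ≤ 2 * m ^ 3 := by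
    intro s
    have hsub : nbr s ⊆ (V s).biUnion fun j => {t | ¬∀ w, h t j w = 0} := by
      intro t ht
      obtain ⟨j, hj1, hj2⟩ := not_disjoint_iff.1 (mem_filter.1 ht).2
      exact mem_biUnion.2 ⟨j, hj1, mem_filter.2 ⟨mem_univ _, (mem_filter.1 hj2).2⟩⟩
    have h1 : (#(nbr s) : ℝ) ≤ ∑ j ∈ V s, (#{t | ¬∀ w, h t j w = 0} : ℝ) := by
      exact_mod_cast (card_le_card hsub).trans card_biUnion_le
    have h2 : ∑ j ∈ V s, (#{t | ¬∀ w, h t j w = 0} : ℝ) ≤ #(V s) * m ^ 2 := by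
      rw [← nsmul_eq_mul]
      refine sum_le_card_nsmul _ _ _ fun j _ => ?_
      refine le_trans (le_of_eq ?_) (hdeg j)
      rw [Nat.card_eq_fintype_card, ← Set.toFinset_card]
      congr 2
      ext t
      simp
    nlinarith [mul_le_mul_of_nonneg_right (hV s) (sq_nonneg m)]
  have hYdep : ∀ s (α β : Fin N → Fin W), (∀ j ∈ V s, α j = β j) →
      ∑ j, h s j (α j) = ∑ j, h s j (β j) := by
    intro s α β hαβ
    refine sum_congr rfl fun j _ => ?_
    by_cases hj : ∀ w, h s j w = 0
    · rw [hj, hj]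
    · rw [hαβ j (mem_filter.2 ⟨mem_univ _, hj⟩)]
  have hp0 : 0 < p := Real.exp_pos _
  obtain ⟨α, hα⟩ := exists_forall_notMem_of_local B nbr p (2 * m ^ 3) hp0.le
    (by
      have : (2 : ℝ) ^ 3 ≤ m ^ 3 := by gcongr
      nlinarith)
    (by
      intro s
      have := chernoff_count hW (h s) ha0 hδ0 hδ1 hγ (hh s) (hmean s)
      rw [hexp, ← hp] at this
      simpa [B] using this)
    hnbr (by linarith)
    (by
      intro s T hT
      refine card_inter_mul_card (V s) _ _ ?_ ?_
      · intro α β hαβ hα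
        simp only [B, mem_filter, mem_univ, true_and] at hα ⊢
        rwa [← hYdep s α β hαβ]
      · intro α β hαβ hα
        simp only [avoiding, B, mem_filter, mem_univ, true_and] at hα ⊢
        intro t ht
        rw [← hYdep t α β]
        · exact hα t ht
        intro j hj
        refine hαβ j fun hjs => ?_
        refine disjoint_right.1 hT ht (mem_filter.2 ⟨mem_univ _, ?_⟩)
        exact not_disjoint_iff.2 ⟨j, hjs, hj⟩)
  refine ⟨α, fun s => ?_⟩
  have := hα s
  simp only [B, mem_filter, mem_univ, true_and, not_lt] at this
  exact this

theorem eventually_large : ∀ᶠ m : ℝ in Filter.atTop,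
    8 * m ^ 3 * Real.exp (-(m ^ ((1 : ℝ) / 16) / 8)) ≤ 1 := by
  have h1 : Filter.Tendsto (fun x : ℝ => x ^ 48 * Real.exp (-x)) Filter.atTop (nhds 0) :=
    Real.tendsto_pow_mul_exp_neg_atTop_nhds_zero 48
  have h2 : Filter.Tendsto (fun m : ℝ => m ^ ((1 : ℝ) / 16) / 8) Filter.atTop Filter.atTop :=
    (tendsto_rpow_atTop (by norm_num)).atTop_div_const (by norm_num)
  have h3 := (h1.comp h2).const_mul ((8 : ℝ) * 8 ^ 48)
  rw [mul_zero] at h3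
  filter_upwards [h3.eventually (ge_mem_nhds (zero_lt_one)), Filter.eventually_gt_atTop 0]
    with m hm hm0
  have e : (m ^ ((1 : ℝ) / 16)) ^ 48 = m ^ 3 := by
    rw [← Real.rpow_natCast, ← Real.rpow_mul hm0.le, ← Real.rpow_natCast]
    norm_num
  refine le_trans (le_of_eq ?_) hm
  simp only [Function.comp_apply]
  rw [div_pow, e]
  field_simp

/-- The key derandomization lemma: if each `Y s` is a sum of
independent per-coordinate contributions `f s i` bounded by `m^(-1/8)`, each
nonzero `f s i` has average at least `1/m`, each coordinate is relevant for at
most `m²` indices `s`, and `E[Y s] ≤ γ` with `1 ≤ γ ≤ 2`, then (for `m` at least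
a universal constant `Δ₀`) there is a single vector `α` with
`Y s α ≤ γ + m^(-1/32)` for all `s`. -/
theorem exists_good_waiting_times :
    ∃ Δ₀ : ℝ, ∀ (m : ℝ), Δ₀ ≤ m →
    ∀ (N W k : ℕ), 0 < N → 0 < W → 0 < k →
    ∀ (S : Type) [Fintype S],
    ∀ (γ : ℝ), 1 ≤ γ → γ ≤ 2 →
    ∀ (f : S → Fin k → Fin W → ℝ) (c : S → Fin k → Fin N),
      (∀ s i w, 0 ≤ f s i w ∧ f s i w ≤ m ^ (-(1 : ℝ) / 8)) →
      (∀ s, Function.Injective (c s)) →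
      (∀ s i, (∀ w, f s i w = 0) ∨ 1 / m ≤ (∑ w, f s i w) / (W : ℝ)) →
      (∀ j : Fin N,
        (Nat.card {s : S | ∃ i, c s i = j ∧ ¬(∀ w, f s i w = 0)} : ℝ) ≤ m ^ 2) →
      (∀ s : S,
        (∑ α : Fin N → Fin W, ∑ i, f s i (α (c s i))) / ((W : ℝ) ^ N) ≤ γ) →
      ∃ α : Fin N → Fin W, ∀ s : S,
        ∑ i, f s i (α (c s i)) ≤ γ + m ^ (-(1 : ℝ) / 32) := by
  classical
  obtain ⟨Δ, hΔ⟩ := Filter.eventually_atTop.1 eventually_large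
  refine ⟨max Δ 2, ?_⟩
  intro m hm N W k hN hW _ S _ γ _ hγ f c hf hc havg hdeg hmean
  have hm2 : 2 ≤ m := (le_max_right _ _).trans hm
  have hm0 : 0 < m := by linarith
  have hW' : (0 : ℝ) < W := by exact_mod_cast hW
  let h : S → Fin N → Fin W → ℝ := fun s j w => ∑ i, if c s i = j then f s i w else 0
  have hY : ∀ s (α : Fin N → Fin W), ∑ j, h s j (α j) = ∑ i, f s i (α (c s i)) := by
    intro s α
    simp only [h]
    rw [Finset.sum_comm]
    exact Finset.sum_congr rfl fun i _ => by simp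
  have hcases : ∀ s j, (∀ w, h s j w = 0) ∨ ∃ i, c s i = j ∧ h s j = f s i := by
    intro s j
    by_cases hj : ∃ i, c s i = j
    · obtain ⟨i, rfl⟩ := hj
      refine Or.inr ⟨i, rfl, ?_⟩
      funext w
      simp [h, (hc s).eq_iff]
    · push Not at hj
      exact Or.inl fun w => Finset.sum_eq_zero fun i _ => if_neg (hj i)
  obtain ⟨α, hα⟩ := exists_good_of_coordinates hm2 (hΔ m ((le_max_left _ _).trans hm)) hW hγ h
    (by
      intro s j w
      rcases hcases s j with h0 | ⟨i, _, hi⟩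
      · rw [h0]
        exact ⟨le_rfl, by positivity⟩
      · rw [hi]
        exact hf s i w)
    (by
      intro s j
      rcases hcases s j with h0 | ⟨i, _, hi⟩
      · exact Or.inl h0
      · rw [hi]
        exact havg s i)
    (by
      intro j
      refine le_trans ?_ (hdeg j)
      refine Nat.cast_le.2 (Nat.card_mono (Set.toFinite _) ?_)
      intro s hs
      rcases hcases s j with h0 | ⟨i, hij, hi⟩
      · exact absurd h0 hs
      · exact ⟨i, hij, by rw [← hi]; exact hs⟩)
    (by
      intro s
      refine le_trans (le_of_eq ?_) (hmean s)
      simp only [← hY]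
      rw [Finset.sum_comm, Finset.sum_div]
      refine Finset.sum_congr rfl fun j _ => ?_
      have e := Fintype.sum_piFinset_apply (h s j) Finset.univ j
      rw [Fintype.piFinset_univ] at e
      rw [e, Finset.card_univ, Fintype.card_fin, Fintype.card_fin, nsmul_eq_mul, Nat.cast_pow]
      obtain ⟨n, rfl⟩ := Nat.exists_eq_succ_of_ne_zero hN.ne'
      rw [Nat.succ_sub_one, pow_succ]
      field_simp)
  exact ⟨α, fun s => by rw [← hY]; exact hα s⟩
end
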